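/- arXiv:1610.04165 — 6 statements merged into one kernel-verified Lean document; each statement's English description precedes it below -/
import Mathlib

section
/- Let H be an infinite-dimensional complex Hilbert space, let a < b be real numbers, and let f : (a,b) → ℝ be a continuous function that is operator convex on (a,b), i.e., f(s·A + (1−s)·B) ≤ s·f(A) + (1−s)·f(B) for all s ∈ [0,1] and all selfadjoint A, B ∈ B(H) with spectra in (a,b). If f is nonlinear (f does not coincide on (a,b) with any affine function x ↦ αx + β), then f is strictly operator convex on (a,b): for all s ∈ (0,1) and all selfadjoint A, B ∈ B(H) with spectra in (a,b) such that A − B is invertible, the operator s·f(A) + (1−s)·f(B) − f(s·A + (1−s)·B) is positive and invertible. -/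
open ContinuousLinearMap in
/-- An injection of the index set of a Hilbert basis induces an isometry. -/
theorem HilbertBasis.exists_isometry_map {H ι : Type*} [NormedAddCommGroup H]
    [InnerProductSpace ℂ H] [CompleteSpace H] (b : HilbertBasis ι ℂ H) (σ : ι → ι)
    (hσ : Function.Injective σ) :
    ∃ S : H →L[ℂ] H, adjoint S * S = 1 ∧ ∀ i, S (b i) = b (σ i) := by
  classical
  have ho : Orthonormal ℂ (b ∘ σ) := b.orthonormal.comp σ hσ
  let L : H →ₗᵢ[ℂ] H := ho.orthogonalFamily.linearIsometry.comp b.repr.toLinearIsometry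
  refine ⟨L.toContinuousLinearMap, ?_, fun i => ?_⟩
  · exact (ContinuousLinearMap.norm_map_iff_adjoint_comp_self _).1 L.norm_map
  · change ho.orthogonalFamily.linearIsometry (b.repr (b i)) = _
    rw [b.repr_self, OrthogonalFamily.linearIsometry_apply_single]
    simp

theorem HilbertBasis.ext_clm {H ι : Type*} [NormedAddCommGroup H]
    [InnerProductSpace ℂ H] (b : HilbertBasis ι ℂ H) {S T : H →L[ℂ] H}
    (h : ∀ i, S (b i) = T (b i)) : S = T := by
  refine ContinuousLinearMap.ext_on (s := Set.range b) ?_ (by rintro _ ⟨i, rfl⟩; exact h i)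
  exact Submodule.dense_iff_topologicalClosure_eq_top.2 b.dense_span

open ContinuousLinearMap in
/-- An infinite-dimensional Hilbert space is the orthogonal sum of two isometric copies of
itself. -/
theorem exists_cuntz_pair {H : Type*} [NormedAddCommGroup H]
    [InnerProductSpace ℂ H] [CompleteSpace H] (hinf : ¬ FiniteDimensional ℂ H) :
    ∃ S T : H →L[ℂ] H, adjoint S * S = 1 ∧ adjoint T * T = 1 ∧ adjoint S * T = 0 ∧
      adjoint T * S = 0 ∧ S * adjoint S + T * adjoint T = 1 := by
  classical
  obtain ⟨w, b, -⟩ := exists_hilbertBasis ℂ H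
  have hw : Infinite w := by
    by_contra hfin
    rw [not_infinite_iff_finite] at hfin
    have := Fintype.ofFinite w
    exact hinf (b.toOrthonormalBasis.toBasis.finiteDimensional_of_finite)
  obtain ⟨e⟩ : Nonempty (w ⊕ w ≃ w) := by
    rw [← Cardinal.eq, Cardinal.mk_sum, Cardinal.lift_id, Cardinal.add_eq_self]
    exact Cardinal.aleph0_le_mk w
  obtain ⟨S, hS, hSb⟩ := b.exists_isometry_map (fun i => e (Sum.inl i))
    (e.injective.comp Sum.inl_injective)
  obtain ⟨T, hT, hTb⟩ := b.exists_isometry_map (fun i => e (Sum.inr i))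
    (e.injective.comp Sum.inr_injective)
  have hST : adjoint S * T = 0 := by
    refine b.ext_clm fun i => ?_
    refine (b.repr.injective (lp.ext (funext fun j => ?_)))
    rw [b.repr_apply_apply, b.repr_apply_apply, mul_apply_eq_comp, adjoint_inner_right, hTb, hSb,
      orthonormal_iff_ite.1 b.orthonormal |> fun h => h _ _]
    simp
  have hTS : adjoint T * S = 0 := by
    have := congrArg star hST
    simpa [star_mul, ← star_eq_adjoint] using this
  refine ⟨S, T, hS, hT, hST, hTS, b.ext_clm fun j => ?_⟩
  obtain ⟨i | i, rfl⟩ := e.surjective j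
  · have h1 : adjoint S (S (b i)) = b i := by simpa using congrArg (· (b i)) hS
    have h2 : adjoint T (S (b i)) = 0 := by simpa using congrArg (· (b i)) hTS
    simp [← hSb, h1, h2]
  · have h1 : adjoint T (T (b i)) = b i := by simpa using congrArg (· (b i)) hT
    have h2 : adjoint S (T (b i)) = 0 := by simpa using congrArg (· (b i)) hST
    simp [← hTb, h1, h2]

open ContinuousLinearMap in
/-- The block-diagonal operator `S A S* + T B T*` attached to a Cuntz pair `S, T`. -/
noncomputable def cuntzSum {H : Type*} [NormedAddCommGroup H]
    [InnerProductSpace ℂ H] [CompleteSpace H] {S T : H →L[ℂ] H}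
    (hS : adjoint S * S = 1) (hT : adjoint T * T = 1) (hST : adjoint S * T = 0)
    (hTS : adjoint T * S = 0) (h1 : S * adjoint S + T * adjoint T = 1) :
    ((H →L[ℂ] H) × (H →L[ℂ] H)) →⋆ₐ[ℝ] (H →L[ℂ] H) where
  toFun p := S * p.1 * adjoint S + T * p.2 * adjoint T
  map_one' := by simpa using h1
  map_mul' p q := by
    have e1 : ∀ Y, adjoint S * (S * Y) = Y := fun Y => by rw [← mul_assoc, hS, one_mul]
    have e2 : ∀ Y, adjoint T * (T * Y) = Y := fun Y => by rw [← mul_assoc, hT, one_mul]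
    have e3 : ∀ Y, adjoint S * (T * Y) = 0 := fun Y => by rw [← mul_assoc, hST, zero_mul]
    have e4 : ∀ Y, adjoint T * (S * Y) = 0 := fun Y => by rw [← mul_assoc, hTS, zero_mul]
    simp only [Prod.fst_mul, Prod.snd_mul, mul_add, add_mul, mul_assoc, e1, e2, e3, e4, mul_zero,
      add_zero, zero_add]
  map_zero' := by simp
  map_add' p q := by simp only [Prod.fst_add, Prod.snd_add, mul_add, add_mul]; abel
  commutes' r := by
    simp only [Algebra.algebraMap_eq_smul_one, Prod.smul_fst, Prod.smul_snd, Prod.fst_one,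
      Prod.snd_one, mul_smul_comm, smul_mul_assoc, mul_one, ← smul_add, h1]
  map_star' p := by
    simp [star_mul, ← star_eq_adjoint, mul_assoc]

open ContinuousLinearMap in
theorem cuntzSum_apply {H : Type*} [NormedAddCommGroup H]
    [InnerProductSpace ℂ H] [CompleteSpace H] {S T : H →L[ℂ] H}
    (hS : adjoint S * S = 1) (hT : adjoint T * T = 1) (hST : adjoint S * T = 0)
    (hTS : adjoint T * S = 0) (h1 : S * adjoint S + T * adjoint T = 1) (A B : H →L[ℂ] H) :
    cuntzSum hS hT hST hTS h1 (A, B) = S * A * adjoint S + T * B * adjoint T := rfl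

open ContinuousLinearMap in
theorem cfc_cuntzSum {H : Type*} [NormedAddCommGroup H]
    [InnerProductSpace ℂ H] [CompleteSpace H] {S T : H →L[ℂ] H}
    (hS : adjoint S * S = 1) (hT : adjoint T * T = 1) (hST : adjoint S * T = 0)
    (hTS : adjoint T * S = 0) (h1 : S * adjoint S + T * adjoint T = 1) {A B : H →L[ℂ] H}
    (hA : IsSelfAdjoint A) (hB : IsSelfAdjoint B) {f : ℝ → ℝ}
    (hf : ContinuousOn f (spectrum ℝ A ∪ spectrum ℝ B)) :
    cfc f (cuntzSum hS hT hST hTS h1 (A, B)) = cuntzSum hS hT hST hTS h1 (cfc f A, cfc f B) := by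
  have : ContinuousFunctionalCalculus ℝ ((H →L[ℂ] H) × (H →L[ℂ] H)) IsSelfAdjoint :=
    IsSelfAdjoint.instIsometricContinuousFunctionalCalculus.toContinuousFunctionalCalculus
  have hAB : IsSelfAdjoint (A, B) := by ext1 <;> simp [hA.star_eq, hB.star_eq]
  rw [← cfc_map_prod (S := ℝ) f A B hf hAB hA hB]
  refine (StarAlgHomClass.map_cfc (S := ℝ) (cuntzSum hS hT hST hTS h1) f (A, B) ?_ ?_ hAB ?_).symm
  · rwa [Prod.spectrum_eq]
  · change Continuous fun p : (H →L[ℂ] H) × (H →L[ℂ] H) =>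
      S * p.1 * adjoint S + T * p.2 * adjoint T
    fun_prop
  · exact hAB.map _

open Polynomial in
/-- A second-order divided difference of a convex polynomial is nonnegative. -/
theorem ConvexOn.mul_sum_geom_sub_nonneg {p : ℝ[X]} {l r : ℝ}
    (hp : ConvexOn ℝ (Set.Icc l r) fun t => p.eval t) {s t ε : ℝ} (hs : s ∈ Set.Icc l r)
    (ht : t ∈ Set.Icc l r) (hε : ε ∈ Set.Icc l r) :
    0 ≤ (∑ n ∈ p.support, p.coeff n * ∑ i ∈ Finset.range n, (s ^ i - ε ^ i) * t ^ (n - 1 - i)) *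
      (s - ε) := by
  rcases eq_or_ne s ε with rfl | hne
  · simp
  have hlr : l < r := by
    rcases hs with ⟨h1, h2⟩
    rcases hε with ⟨h3, h4⟩
    by_contra h
    exact hne (by linarith)
  let G : ℝ → ℝ := fun t => (∑ n ∈ p.support, p.coeff n *
    ∑ i ∈ Finset.range n, (s ^ i - ε ^ i) * t ^ (n - 1 - i)) * (s - ε)
  have hG : Continuous G := by fun_prop
  have hslope : ∀ u t : ℝ, u ≠ t → (∑ n ∈ p.support, p.coeff n *
      ∑ i ∈ Finset.range n, u ^ i * t ^ (n - 1 - i)) = (p.eval u - p.eval t) / (u - t) := by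
    intro u t hut
    rw [eq_div_iff (sub_ne_zero.2 hut), Finset.sum_mul, eval_eq_sum, eval_eq_sum, Polynomial.sum,
      Polynomial.sum, ← Finset.sum_sub_distrib]
    refine Finset.sum_congr rfl fun n _ => ?_
    rw [mul_assoc, (Commute.all u t).geom_sum₂_mul]
    ring
  have hpos : Set.Ioo l r ∩ {s, ε}ᶜ ⊆ {t | 0 ≤ G t} := by
    rintro t ⟨htI, hts⟩
    have htI' := Set.Ioo_subset_Icc_self htI
    simp only [Set.mem_compl_iff, Set.mem_insert_iff, Set.mem_singleton_iff, not_or] at hts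
    have hst : s ≠ t := fun h => hts.1 h.symm
    have het : ε ≠ t := fun h => hts.2 h.symm
    have hGt : G t = ((p.eval s - p.eval t) / (s - t) - (p.eval ε - p.eval t) / (ε - t)) *
        (s - ε) := by
      rw [← hslope s t hst, ← hslope ε t het]
      simp only [G, sub_mul, Finset.sum_sub_distrib, mul_sub]
    rw [Set.mem_ofPred_eq, hGt]
    rcases le_total s ε with h | h
    · exact mul_nonneg_of_nonpos_of_nonpos
        (sub_nonpos.2 (hp.secant_mono htI' hs hε hst het h)) (sub_nonpos.2 h)
    · exact mul_nonneg (sub_nonneg.2 (hp.secant_mono htI' hε hs het hst h)) (sub_nonneg.2 h)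
  have hdense : Dense ({s, ε}ᶜ : Set ℝ) := (Set.toFinite _).countable.dense_compl ℝ
  have h1 : Set.Ioo l r ⊆ closure (Set.Ioo l r ∩ {s, ε}ᶜ) :=
    hdense.open_subset_closure_inter isOpen_Ioo
  have h2 : Set.Icc l r ⊆ {t | 0 ≤ G t} := by
    rw [← closure_Ioo hlr.ne]
    refine (closure_minimal h1 isClosed_closure).trans (closure_minimal hpos ?_)
    exact isClosed_le continuous_const hG
  exact h2 ht

open Polynomial in
/-- Positivity of the bordering gap of a convex polynomial, in terms of two positive functionals. -/
theorem ConvexOn.sum_functional_nonneg {p : ℝ[X]} {l r ε : ℝ}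
    (hp : ConvexOn ℝ (Set.Icc l r) fun t => p.eval t) (hε : ε ∈ Set.Icc l r)
    (φ ψ : ℝ[X] →ₗ[ℝ] ℝ)
    (hφ : ∀ q : ℝ[X], (∀ t ∈ Set.Icc l r, 0 ≤ q.eval t) → 0 ≤ φ q)
    (hψ : ∀ q : ℝ[X], (∀ t ∈ Set.Icc l r, 0 ≤ q.eval t) → 0 ≤ ψ q)
    (hφε : φ X = ε * φ 1) :
    0 ≤ ∑ n ∈ p.support, p.coeff n * ∑ i ∈ Finset.range n,
      ψ (X ^ (n - 1 - i)) * (φ (X ^ (i + 1)) - ε * φ (X ^ i)) := by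
  have key : ∀ t ∈ Set.Icc l r, 0 ≤ ∑ n ∈ p.support, p.coeff n * ∑ i ∈ Finset.range n,
      t ^ (n - 1 - i) * (φ (X ^ (i + 1)) - ε * φ (X ^ i)) := by
    intro t ht
    let q : ℝ[X] := ∑ n ∈ p.support, p.coeff n • ∑ i ∈ Finset.range n,
      t ^ (n - 1 - i) • (X ^ (i + 1) - ε • X ^ i - ε ^ i • X + (ε ^ i * ε) • 1)
    have hq : ∀ s ∈ Set.Icc l r, 0 ≤ q.eval s := by
      intro s hs
      convert hp.mul_sum_geom_sub_nonneg hs ht hε using 1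
      simp only [q, eval_finsetSum, eval_smul, smul_eq_mul, eval_add, eval_sub, eval_pow, eval_X,
        eval_one, Finset.sum_mul, Finset.mul_sum]
      refine Finset.sum_congr rfl fun n _ => Finset.sum_congr rfl fun i _ => by ring
    convert hφ q hq using 1
    simp only [q, map_sum, map_smul, map_add, map_sub, smul_eq_mul, hφε]
    refine Finset.sum_congr rfl fun n _ => ?_
    congr 1
    refine Finset.sum_congr rfl fun i _ => by ring
  let k : ℝ[X] := ∑ n ∈ p.support, p.coeff n • ∑ i ∈ Finset.range n,
      (φ (X ^ (i + 1)) - ε * φ (X ^ i)) • X ^ (n - 1 - i)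
  convert hψ k (fun t ht => ?_) using 1
  · simp only [k, map_sum, map_smul, smul_eq_mul]
    refine Finset.sum_congr rfl fun n _ => ?_
    congr 1
    refine Finset.sum_congr rfl fun i _ => by ring
  · convert key t ht using 1
    simp only [k, eval_finsetSum, eval_smul, smul_eq_mul, eval_pow, eval_X]
    refine Finset.sum_congr rfl fun n _ => ?_
    congr 1
    refine Finset.sum_congr rfl fun i _ => by ring

open Polynomial in
/-- Uniform approximation of a continuous midpoint-convex function by convex polynomials. -/
theorem exists_convex_polynomial_near_unit {g : ℝ → ℝ} (hg : ContinuousOn g (Set.Icc 0 1))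
    (hconv : ∀ c δ : ℝ, c - δ ∈ Set.Icc (0 : ℝ) 1 → c + δ ∈ Set.Icc (0 : ℝ) 1 →
      2 * g c ≤ g (c + δ) + g (c - δ)) {η : ℝ} (hη : 0 < η) :
    ∃ p : ℝ[X], ConvexOn ℝ (Set.Icc 0 1) (fun t => p.eval t) ∧
      ∀ t ∈ Set.Icc (0 : ℝ) 1, |p.eval t - g t| ≤ η := by
  let G : C(unitInterval, ℝ) := ⟨fun x => g x, by
    exact hg.comp_continuous continuous_subtype_val fun x => x.2⟩
  have hlim := bernsteinApproximation_uniform G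
  rw [Metric.tendsto_atTop] at hlim
  obtain ⟨N, hN⟩ := hlim η hη
  have hn := hN (N + 2) (by lia)
  let n := N
  let a : ℕ → ℝ := fun k => g (k / (n + 2 : ℕ))
  let P : ∀ (m : ℕ) (a : ℕ → ℝ), ℝ[X] := fun m a =>
    ∑ k ∈ Finset.range (m + 1), a k • bernsteinPolynomial ℝ m k
  have hP : ∀ m a, derivative (P (m + 1) a) = ((m : ℝ) + 1) • P m fun k => a (k + 1) - a k := by
    intro m a
    have h0 : ∑ k ∈ Finset.range (m + 1), a (k + 1) • bernsteinPolynomial ℝ m (k + 1) +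
        a 0 • bernsteinPolynomial ℝ m 0 =
        ∑ k ∈ Finset.range (m + 1), a k • bernsteinPolynomial ℝ m k := by
      rw [← Finset.sum_range_succ' (fun k => a k • bernsteinPolynomial ℝ m k),
        Finset.sum_range_succ, bernsteinPolynomial.eq_zero_of_lt ℝ (Nat.lt_succ_self m), smul_zero,
        add_zero]
    simp only [P]
    rw [Finset.sum_range_succ', derivative_add, derivative_sum]
    simp only [derivative_smul, bernsteinPolynomial.derivative_succ,
      bernsteinPolynomial.derivative_zero, Nat.add_sub_cancel, sub_smul, Finset.sum_sub_distrib]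
    rw [← h0]
    have hc : ((m + 1 : ℕ) : ℝ[X]) = C ((m : ℝ) + 1) := by simp
    simp only [hc, neg_mul, ← smul_eq_C_mul, smul_sub, smul_neg, Finset.sum_sub_distrib,
      smul_add, Finset.smul_sum, smul_comm ((m : ℝ) + 1)]
    abel
  have heval : ∀ t : unitInterval, (P (n + 2) a).eval (t : ℝ) =
      bernsteinApproximation (n + 2) G t := by
    intro t
    simp only [P, eval_finsetSum, eval_smul, smul_eq_mul, bernsteinApproximation.apply]
    rw [Finset.sum_range]
    refine Finset.sum_congr rfl fun k _ => ?_
    rw [bernstein_apply, bernsteinPolynomial]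
    simp [G, a, bernstein.z]
    ring
  have hderiv : deriv (fun t => (P (n + 2) a).eval t) =
      fun t => (derivative (P (n + 2) a)).eval t := funext fun t => Polynomial.deriv _
  refine ⟨P (n + 2) a, ?_, fun t ht => ?_⟩
  · refine convexOn_of_deriv2_nonneg (convex_Icc 0 1) (by fun_prop) (by fun_prop) ?_ ?_
    · rw [hderiv]
      fun_prop
    · intro t ht
      rw [interior_Icc] at ht
      have : deriv^[2] (fun t => (P (n + 2) a).eval t) t =
          (derivative (derivative (P (n + 2) a))).eval t := by
        rw [Function.iterate_succ_apply, Function.iterate_one, hderiv, Polynomial.deriv]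
      rw [this, hP, derivative_smul, hP, eval_smul, eval_smul]
      simp only [P, eval_finsetSum, eval_smul, smul_eq_mul]
      refine mul_nonneg (by positivity) (mul_nonneg (by positivity)
        (Finset.sum_nonneg fun k hk => ?_))
      refine mul_nonneg ?_ ?_
      · have hk' : (k : ℝ) + 1 ≤ n + 1 := by
          exact_mod_cast Finset.mem_range.1 hk
        have hn0 : (0 : ℝ) < (n : ℝ) + 2 := by positivity
        have := hconv ((k + 1) / (n + 2)) (1 / (n + 2))
          (by
            rw [← sub_div, add_sub_cancel_right]
            exact ⟨by positivity, (div_le_one hn0).2 (by linarith)⟩)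
          (by
            rw [← add_div]
            exact ⟨by positivity, (div_le_one hn0).2 (by linarith)⟩)
        rw [← sub_div, ← add_div, add_sub_cancel_right] at this
        simp only [a]
        push_cast
        linarith
      · simp only [bernsteinPolynomial]
        simp
        have := ht.1.le
        have := sub_nonneg.2 ht.2.le
        positivity
  · rw [heval ⟨t, ht⟩]
    refine le_of_lt ?_
    rw [← Real.dist_eq]
    exact (ContinuousMap.dist_apply_le_dist ⟨t, ht⟩).trans_lt hn

open Polynomial in
/-- Uniform approximation of a continuous midpoint-convex function by convex polynomials. -/
theorem exists_convex_polynomial_near {g : ℝ → ℝ} {l r : ℝ} (hlr : l < r)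
    (hg : ContinuousOn g (Set.Icc l r))
    (hconv : ∀ c δ : ℝ, c - δ ∈ Set.Icc l r → c + δ ∈ Set.Icc l r →
      2 * g c ≤ g (c + δ) + g (c - δ)) {η : ℝ} (hη : 0 < η) :
    ∃ p : ℝ[X], ConvexOn ℝ (Set.Icc l r) (fun t => p.eval t) ∧
      ∀ t ∈ Set.Icc l r, |p.eval t - g t| ≤ η := by
  have hd : 0 < r - l := sub_pos.2 hlr
  have hmap : ∀ u ∈ Set.Icc (0 : ℝ) 1, l + (r - l) * u ∈ Set.Icc l r := fun u hu =>
    ⟨by nlinarith [hu.1], by nlinarith [hu.2]⟩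
  obtain ⟨p, hp, hpg⟩ := exists_convex_polynomial_near_unit (g := fun u => g (l + (r - l) * u))
    (hg.comp (by fun_prop) hmap) (fun c δ h1 h2 => by
      have := hconv (l + (r - l) * c) ((r - l) * δ)
        (by convert hmap _ h1 using 1; ring) (by convert hmap _ h2 using 1; ring)
      convert this using 3 <;> ring) hη
  have hinv : ∀ t ∈ Set.Icc l r, (r - l)⁻¹ * (t - l) ∈ Set.Icc (0 : ℝ) 1 := fun t ht =>
    ⟨mul_nonneg (inv_nonneg.2 hd.le) (sub_nonneg.2 ht.1), by
      rw [inv_mul_le_iff₀ hd]; linarith [ht.2]⟩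
  have heval : ∀ t, (p.comp (C (r - l)⁻¹ * (X - C l))).eval t = p.eval ((r - l)⁻¹ * (t - l)) := by
    intro t; simp
  refine ⟨p.comp (C (r - l)⁻¹ * (X - C l)), ⟨convex_Icc l r, ?_⟩, fun t ht => ?_⟩
  · intro x hx y hy α β hα hβ hαβ
    have := hp.2 (hinv x hx) (hinv y hy) hα hβ hαβ
    simp only [heval]
    convert this using 2
    simp only [smul_eq_mul]
    linear_combination (r - l)⁻¹ * l * hαβ
  · rw [heval]
    convert hpg _ (hinv t ht) using 3
    congr 1
    field_simp
    ring

theorem cfc_re_inner_mono {H : Type*} [NormedAddCommGroup H] [InnerProductSpace ℂ H]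
    [CompleteSpace H] {A : H →L[ℂ] H} {g h : ℝ → ℝ}
    (hgh : ∀ t ∈ spectrum ℝ A, g t ≤ h t) (hg : ContinuousOn g (spectrum ℝ A))
    (hh : ContinuousOn h (spectrum ℝ A)) (v : H) :
    (inner ℂ v (cfc g A v)).re ≤ (inner ℂ v (cfc h A v)).re := by
  have h1 : cfc g A ≤ cfc h A := cfc_mono hgh hg hh
  have h2 := (ContinuousLinearMap.le_def _ _).1 h1 |>.re_inner_nonneg_right v
  simpa [inner_sub_right] using h2

/-- The quadratic form of `q(A)` at a vector, as a linear functional of the polynomial `q`. -/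
noncomputable def polynomialForm {H : Type*} [NormedAddCommGroup H] [InnerProductSpace ℂ H]
    (A : H →L[ℂ] H) (v : H) : Polynomial ℝ →ₗ[ℝ] ℝ where
  toFun q := (inner ℂ v (Polynomial.aeval A q v)).re
  map_add' p q := by simp
  map_smul' c q := by simp [inner_smul_right_eq_smul]

theorem polynomialForm_apply {H : Type*} [NormedAddCommGroup H] [InnerProductSpace ℂ H]
    (A : H →L[ℂ] H) (v : H) (q : Polynomial ℝ) :
    polynomialForm A v q = (inner ℂ v (Polynomial.aeval A q v)).re := rfl

theorem polynomialForm_X_pow {H : Type*} [NormedAddCommGroup H] [InnerProductSpace ℂ H]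
    (A : H →L[ℂ] H) (v : H) (n : ℕ) :
    polynomialForm A v (Polynomial.X ^ n) = (inner ℂ v ((A ^ n) v)).re := by
  simp [polynomialForm_apply]

theorem polynomialForm_eq_sum {H : Type*} [NormedAddCommGroup H] [InnerProductSpace ℂ H]
    (A : H →L[ℂ] H) (v : H) (q : Polynomial ℝ) :
    polynomialForm A v q = ∑ n ∈ q.support, q.coeff n * (inner ℂ v ((A ^ n) v)).re := by
  conv_lhs => rw [q.as_sum_support, map_sum]
  refine Finset.sum_congr rfl fun n _ => ?_
  rw [← Polynomial.smul_X_eq_monomial, map_smul, polynomialForm_X_pow, smul_eq_mul]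

theorem polynomialForm_eq_cfc {H : Type*} [NormedAddCommGroup H] [InnerProductSpace ℂ H]
    [CompleteSpace H] {A : H →L[ℂ] H} (hA : IsSelfAdjoint A) (v : H) (q : Polynomial ℝ) :
    polynomialForm A v q = (inner ℂ v (cfc (fun t => q.eval t) A v)).re := by
  rw [polynomialForm_apply, cfc_polynomial q A hA]

theorem polynomialForm_nonneg {H : Type*} [NormedAddCommGroup H] [InnerProductSpace ℂ H]
    [CompleteSpace H] {A : H →L[ℂ] H} (hA : IsSelfAdjoint A) {l r : ℝ}
    (hs : spectrum ℝ A ⊆ Set.Icc l r) (v : H) (q : Polynomial ℝ)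
    (hq : ∀ t ∈ Set.Icc l r, 0 ≤ q.eval t) : 0 ≤ polynomialForm A v q := by
  rw [polynomialForm_eq_cfc hA]
  simpa [cfc_const_zero] using cfc_re_inner_mono (A := A) (g := fun _ => 0)
    (h := fun t => q.eval t) (fun t ht => hq t (hs ht)) (by fun_prop) (by fun_prop) v

open ContinuousLinearMap in
/-- Expansion of the powers of a bordered operator. -/
theorem bordered_pow_apply {H : Type*} [NormedAddCommGroup H] [InnerProductSpace ℂ H]
    {T C V : H →L[ℂ] H} {x e : H} {τ : ℝ}
    (hTV : ∀ y, T (V y) = V (C y) + ((τ : ℂ) * inner ℂ x y) • e) (n : ℕ) :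
    (T ^ n) (V x) = V ((C ^ n) x) + ∑ i ∈ Finset.range n,
      ((τ : ℂ) * inner ℂ x ((C ^ (n - 1 - i)) x)) • (T ^ i) e := by
  induction n with
  | zero => simp
  | succ n ih =>
    rw [pow_succ', mul_apply_eq_comp, ih, map_add, hTV, map_sum, Finset.sum_range_succ',
      pow_succ' C,
      mul_apply_eq_comp]
    simp only [map_smul, Nat.add_sub_cancel, pow_zero, Nat.sub_zero, add_assoc]
    congr 1
    rw [add_comm]
    congr 1
    refine Finset.sum_congr rfl fun i _ => ?_
    rw [pow_succ', mul_apply_eq_comp, Nat.sub_sub, add_comm 1 i]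

open ContinuousLinearMap in
/-- The quadratic form of a convex polynomial at `x` does not decrease when the operator is
bordered by a multiple of the vector `x` itself. -/
theorem polynomialForm_le_bordered {H : Type*} [NormedAddCommGroup H] [InnerProductSpace ℂ H]
    [CompleteSpace H] {T C V : H →L[ℂ] H} {x e : H} {τ ε l r : ℝ}
    (hT : IsSelfAdjoint T) (hC : IsSelfAdjoint C) (hsT : spectrum ℝ T ⊆ Set.Icc l r)
    (hsC : spectrum ℝ C ⊆ Set.Icc l r) (hV : adjoint V * V = 1) (he : ‖e‖ = 1)
    (hVe : adjoint V e = 0) (hε : ε ∈ Set.Icc l r)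
    (hTV : ∀ y, T (V y) = V (C y) + ((τ : ℂ) * inner ℂ x y) • e)
    (hTe : T e = (ε : ℂ) • e + (τ : ℂ) • V x) {p : Polynomial ℝ}
    (hp : ConvexOn ℝ (Set.Icc l r) fun t => p.eval t) :
    polynomialForm C x p ≤ polynomialForm T (V x) p := by
  have hVe' : ∀ y, inner ℂ e (V y) = 0 := fun y => by
    rw [← adjoint_inner_left, hVe, inner_zero_left]
  have hVV : ∀ y z, inner ℂ (V y) (V z) = inner ℂ y z := fun y z => by
    rw [← adjoint_inner_right, ← mul_apply_eq_comp, hV]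
    rfl
  have hee : inner ℂ e e = (1 : ℂ) := by
    rw [inner_self_eq_norm_sq_to_K, he]; simp
  have hφε : polynomialForm T e Polynomial.X = ε * polynomialForm T e 1 := by
    simp [polynomialForm_apply, hTe, hVe']
  have hmain := hp.sum_functional_nonneg hε (polynomialForm T e) (polynomialForm C x)
    (polynomialForm_nonneg hT hsT e) (polynomialForm_nonneg hC hsC x) hφε
  rw [← sub_nonneg, polynomialForm_eq_sum, polynomialForm_eq_sum, ← Finset.sum_sub_distrib]
  convert hmain using 1
  refine Finset.sum_congr rfl fun n _ => ?_
  rw [← mul_sub]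
  congr 1
  rw [bordered_pow_apply hTV, inner_add_right, hVV, inner_sum, Complex.add_re, add_sub_cancel_left,
    Complex.re_sum]
  refine Finset.sum_congr rfl fun i _ => ?_
  have hreal : ∀ {A : H →L[ℂ] H} (_ : IsSelfAdjoint A) (k : ℕ) (v : H),
      inner ℂ v ((A ^ k) v) = (((inner ℂ v ((A ^ k) v)).re : ℝ) : ℂ) := by
    intro A hA k v
    have hs := (hA.pow k).isSymmetric
    exact (hs.coe_re_inner_self_apply v).symm
  have h1 : (τ : ℂ) * inner ℂ (V x) ((T ^ i) e) =
      inner ℂ e ((T ^ (i + 1)) e) - ε * inner ℂ e ((T ^ i) e) := by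
    have h2 : (τ : ℂ) • V x = T e - (ε : ℂ) • e := by rw [hTe, add_sub_cancel_left]
    have h3 : inner ℂ ((τ : ℂ) • V x) ((T ^ i) e) = (τ : ℂ) * inner ℂ (V x) ((T ^ i) e) := by
      rw [inner_smul_left, Complex.conj_ofReal]
    rw [← h3, h2, inner_sub_left, inner_smul_left, Complex.conj_ofReal, pow_succ',
      mul_apply_eq_comp]
    exact congrArg (· - _) (hT.isSymmetric e _)
  rw [polynomialForm_X_pow, polynomialForm_X_pow, polynomialForm_X_pow, inner_smul_right,
    mul_right_comm, h1, hreal hC (n - 1 - i) x, hreal hT (i + 1) e, hreal hT i e]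
  simp only [← Complex.ofReal_mul, ← Complex.ofReal_sub, Complex.ofReal_re]
  ring

open ContinuousLinearMap in
/-- The quadratic form of a continuous midpoint-convex function at `x` does not decrease when the
operator is bordered by a multiple of the vector `x` itself. -/
theorem cfc_re_inner_le_bordered {H : Type*} [NormedAddCommGroup H] [InnerProductSpace ℂ H]
    [CompleteSpace H] {T C V : H →L[ℂ] H} {x e : H} {τ ε l r : ℝ} (hlr : l < r)
    (hT : IsSelfAdjoint T) (hC : IsSelfAdjoint C) (hsT : spectrum ℝ T ⊆ Set.Icc l r)
    (hsC : spectrum ℝ C ⊆ Set.Icc l r) (hV : adjoint V * V = 1) (he : ‖e‖ = 1)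
    (hVe : adjoint V e = 0) (hε : ε ∈ Set.Icc l r)
    (hTV : ∀ y, T (V y) = V (C y) + ((τ : ℂ) * inner ℂ x y) • e)
    (hTe : T e = (ε : ℂ) • e + (τ : ℂ) • V x) {g : ℝ → ℝ} (hg : ContinuousOn g (Set.Icc l r))
    (hconv : ∀ c δ : ℝ, c - δ ∈ Set.Icc l r → c + δ ∈ Set.Icc l r →
      2 * g c ≤ g (c + δ) + g (c - δ)) :
    (inner ℂ x (cfc g C x)).re ≤ (inner ℂ (V x) (cfc g T (V x))).re := by
  have hVV : ∀ y z, inner ℂ (V y) (V z) = inner ℂ y z := fun y z => by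
    rw [← adjoint_inner_right, ← mul_apply_eq_comp, hV]
    rfl
  have hnorm : ‖V x‖ = ‖x‖ := by
    rw [@norm_eq_sqrt_re_inner ℂ, @norm_eq_sqrt_re_inner ℂ, hVV]
  have happrox : ∀ η > 0, (inner ℂ x (cfc g C x)).re ≤
      (inner ℂ (V x) (cfc g T (V x))).re + η * (2 * ‖x‖ ^ 2) := by
    intro η hη
    obtain ⟨p, hp, hpg⟩ := exists_convex_polynomial_near hlr hg hconv hη
    have h0 := polynomialForm_le_bordered hT hC hsT hsC hV he hVe hε hTV hTe hp
    have hform : ∀ (A : H →L[ℂ] H) (_ : IsSelfAdjoint A) (v : H) (κ : ℝ),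
        (inner ℂ v (cfc (fun t => p.eval t + κ) A v)).re =
          polynomialForm A v p + κ * ‖v‖ ^ 2 := by
      intro A hA v κ
      rw [polynomialForm_eq_cfc hA, cfc_add_const κ (fun t => p.eval t) A (by fun_prop) hA]
      simp [Algebra.algebraMap_eq_smul_one, inner_smul_right_eq_smul,
        ← Complex.ofReal_pow]
    have h1 : (inner ℂ x (cfc g C x)).re ≤ polynomialForm C x p + η * ‖x‖ ^ 2 := by
      rw [← hform C hC x η]
      refine cfc_re_inner_mono (fun t ht => ?_) (hg.mono hsC) (by fun_prop) x
      have := (abs_le.1 (hpg t (hsC ht))).1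
      linarith
    have h2 : polynomialForm T (V x) p + (-η) * ‖V x‖ ^ 2 ≤
        (inner ℂ (V x) (cfc g T (V x))).re := by
      rw [← hform T hT (V x) (-η)]
      refine cfc_re_inner_mono (fun t ht => ?_) (by fun_prop) (hg.mono hsT) (V x)
      have := (abs_le.1 (hpg t (hsT ht))).2
      linarith
    rw [hnorm] at h2
    linarith
  refine le_of_forall_pos_le_add fun κ hκ => ?_
  have hpos : 0 < 2 * ‖x‖ ^ 2 + 1 := by positivity
  refine (happrox (κ / (2 * ‖x‖ ^ 2 + 1)) (by positivity)).trans ?_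
  gcongr
  rw [div_mul_eq_mul_div, div_le_iff₀ hpos]
  nlinarith

theorem spectrum_subset_Icc_iff {H : Type*} [NormedAddCommGroup H] [InnerProductSpace ℂ H]
    [CompleteSpace H] {A : H →L[ℂ] H} (hA : IsSelfAdjoint A) {l r : ℝ} :
    spectrum ℝ A ⊆ Set.Icc l r ↔
      algebraMap ℝ (H →L[ℂ] H) l ≤ A ∧ A ≤ algebraMap ℝ (H →L[ℂ] H) r := by
  rw [algebraMap_le_iff_le_spectrum hA, le_algebraMap_iff_spectrum_le hA]
  exact ⟨fun h => ⟨fun x hx => (h hx).1, fun x hx => (h hx).2⟩, fun h x hx => ⟨h.1 x hx, h.2 x hx⟩⟩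

theorem mem_spectrum_of_apply_eq_smul {H : Type*} [NormedAddCommGroup H] [InnerProductSpace ℂ H]
    [CompleteSpace H] {A : H →L[ℂ] H} {μ : ℝ} {v : H} (hv : v ≠ 0)
    (hAv : A v = (μ : ℂ) • v) : μ ∈ spectrum ℝ A := by
  intro hu
  obtain ⟨u, hu⟩ := hu
  have h0 : (u : H →L[ℂ] H) v = 0 := by
    rw [hu]; simp [hAv, Algebra.algebraMap_eq_smul_one]
  refine hv ?_
  calc v = ((↑u⁻¹ * ↑u : H →L[ℂ] H)) v := by simp
    _ = 0 := by rw [mul_apply_eq_comp, h0, map_zero]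

theorem cfc_apply_of_apply_eq_smul {H : Type*} [NormedAddCommGroup H] [InnerProductSpace ℂ H]
    [CompleteSpace H] {A : H →L[ℂ] H} (hA : IsSelfAdjoint A) {l r : ℝ}
    (hs : spectrum ℝ A ⊆ Set.Icc l r) {f : ℝ → ℝ} (hf : ContinuousOn f (Set.Icc l r)) {μ : ℝ}
    {v : H} (hAv : A v = (μ : ℂ) • v) : cfc f A v = (f μ : ℂ) • v := by
  obtain rfl | hv := eq_or_ne v 0
  · simp
  have hμ := hs (mem_spectrum_of_apply_eq_smul hv hAv)
  have hpow : ∀ n : ℕ, (A ^ n) v = ((μ : ℂ) ^ n) • v := fun n => by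
    induction n with
    | zero => simp
    | succ n ih => rw [pow_succ, mul_apply_eq_comp, hAv, map_smul, ih, smul_smul,
        pow_succ, mul_comm]
  have hpoly : ∀ p : Polynomial ℝ, Polynomial.aeval A p v = ((p.eval μ : ℝ) : ℂ) • v := fun p => by
    induction p using Polynomial.induction_on' with
    | add p q hp hq => simp [hp, hq, add_smul]
    | monomial n c =>
      rw [Polynomial.aeval_monomial, mul_apply_eq_comp, hpow,
        Algebra.algebraMap_eq_smul_one, smul_apply]
      simp [← mul_smul, ← Complex.coe_smul]
  rw [← sub_eq_zero, ← norm_le_zero_iff]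
  refine le_of_forall_pos_le_add fun η hη => ?_
  have hη' : 0 < η / (2 * ‖v‖) := by positivity
  obtain ⟨p, hp⟩ := exists_polynomial_near_of_continuousOn l r f hf _ hη'
  have h1 : ‖cfc f A - Polynomial.aeval A p‖ ≤ η / (2 * ‖v‖) := by
    rw [← cfc_polynomial p A hA, ← cfc_sub f (fun t => p.eval t) A (hf.mono hs) (by fun_prop)]
    refine norm_cfc_le hη'.le fun t ht => ?_
    rw [Real.norm_eq_abs, abs_sub_comm]
    exact (hp t (hs ht)).le
  have h2 : cfc f A v - (f μ : ℂ) • v = (cfc f A - Polynomial.aeval A p) v +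
      ((p.eval μ - f μ : ℝ) : ℂ) • v := by
    rw [sub_apply, hpoly, Complex.ofReal_sub, sub_smul, sub_add_sub_cancel]
  rw [h2, zero_add]
  calc _ ≤ ‖cfc f A - Polynomial.aeval A p‖ * ‖v‖ + |p.eval μ - f μ| * ‖v‖ := by
        refine (norm_add_le _ _).trans (add_le_add (ContinuousLinearMap.le_opNorm _ _) ?_)
        rw [norm_smul, Complex.norm_real, Real.norm_eq_abs]
    _ ≤ η / (2 * ‖v‖) * ‖v‖ + η / (2 * ‖v‖) * ‖v‖ := by
        gcongr; exact (hp μ hμ).le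
    _ = η := by
        have : ‖v‖ ≠ 0 := norm_ne_zero_iff.2 hv
        field_simp; norm_num

open InnerProductSpace in
theorem rankOne_add_smul_rankOne_mem {H : Type*} [NormedAddCommGroup H] [InnerProductSpace ℂ H]
    [CompleteSpace H] {y z : H} (hy : inner ℂ y y = (1 : ℂ)) (hz : inner ℂ z z = (1 : ℂ))
    (hyz : inner ℂ y z = (0 : ℂ)) {θ : ℝ} (hθ : θ ∈ Set.Icc (0 : ℝ) 1) :
    rankOne ℂ y y + θ • rankOne ℂ z z ∈ Set.Icc (0 : H →L[ℂ] H) 1 := by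
  have hzy : inner ℂ z y = (0 : ℂ) := by rw [← inner_conj_symm, hyz, map_zero]
  have h0 : ∀ v : H, (0 : H →L[ℂ] H) ≤ rankOne ℂ v v := fun v => by
    rw [ContinuousLinearMap.nonneg_iff_isPositive]
    exact isPositive_rankOne_self v
  refine ⟨add_nonneg (h0 y) (smul_nonneg hθ.1 (h0 z)), ?_⟩
  set E : H →L[ℂ] H := 1 - rankOne ℂ y y - rankOne ℂ z z with hE
  have hsa : ∀ v : H, star (rankOne ℂ v v : H →L[ℂ] H) = rankOne ℂ v v := fun v =>
    (IsSelfAdjoint.of_nonneg (h0 v)).star_eq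
  have hE0 : 0 ≤ E := by
    have : star E * E = E := by
      rw [hE]
      simp only [star_sub, star_one, hsa]
      rw [← hE]
      ext v
      have h1 : E v = v - (inner ℂ y v : ℂ) • y - (inner ℂ z v : ℂ) • z := by simp [hE]
      have hyE : inner ℂ y (E v) = 0 := by
        rw [h1, inner_sub_right, inner_sub_right, inner_smul_right, inner_smul_right, hy, hyz]; ring
      have hzE : inner ℂ z (E v) = 0 := by
        rw [h1, inner_sub_right, inner_sub_right, inner_smul_right, inner_smul_right, hz, hzy]; ring
      rw [mul_apply_eq_comp]
      generalize E v = t at hyE hzE ⊢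
      simp [hE, hyE, hzE]
    rw [← this]
    exact star_mul_self_nonneg E
  have h1 : (1 : H →L[ℂ] H) - (rankOne ℂ y y + θ • rankOne ℂ z z) =
      E + (1 - θ) • rankOne ℂ z z := by rw [hE]; module
  rw [← sub_nonneg, h1]
  exact add_nonneg hE0 (smul_nonneg (sub_nonneg.2 hθ.2) (h0 z))

theorem spectrum_algebraMap_add_smul_subset {H : Type*} [NormedAddCommGroup H]
    [InnerProductSpace ℂ H] [CompleteSpace H] {A : H →L[ℂ] H}
    (hA : A ∈ Set.Icc (0 : H →L[ℂ] H) 1) (c L : ℝ) :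
    spectrum ℝ (algebraMap ℝ (H →L[ℂ] H) c + L • A) ⊆ Set.uIcc c (c + L) := by
  have hsa : IsSelfAdjoint A := .of_nonneg hA.1
  have h1 : spectrum ℝ A ⊆ Set.Icc 0 1 := by
    rw [spectrum_subset_Icc_iff hsa]; simpa using hA
  have h2 : algebraMap ℝ (H →L[ℂ] H) c + L • A = cfc (fun t => c + L * t) A := by
    rw [cfc_const_add c (fun t => L * t) A, cfc_const_mul_id L A]
  rw [h2, cfc_map_spectrum (fun t => c + L * t) A]
  rintro _ ⟨t, ht, rfl⟩
  obtain ⟨h3, h4⟩ := h1 ht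
  rw [Set.mem_uIcc]
  rcases le_total 0 L with h | h
  · left; constructor <;> nlinarith
  · right; constructor <;> nlinarith

theorem isSelfAdjoint_algebraMap_add_smul {H : Type*} [NormedAddCommGroup H]
    [InnerProductSpace ℂ H] [CompleteSpace H] {A : H →L[ℂ] H} (hA : 0 ≤ A) (c L : ℝ) :
    IsSelfAdjoint (algebraMap ℝ (H →L[ℂ] H) c + L • A) :=
  (IsSelfAdjoint.algebraMap _ (IsSelfAdjoint.all c)).add
    ((IsSelfAdjoint.all L).smul (.of_nonneg hA))

theorem cfc_algebraMap_add_smul_apply {H : Type*} [NormedAddCommGroup H]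
    [InnerProductSpace ℂ H] [CompleteSpace H] {A : H →L[ℂ] H}
    (hA : A ∈ Set.Icc (0 : H →L[ℂ] H) 1) {c L : ℝ} {f : ℝ → ℝ}
    (hf : ContinuousOn f (Set.uIcc c (c + L))) {v : H} {μ : ℝ} (hv : A v = (μ : ℂ) • v) :
    cfc f (algebraMap ℝ (H →L[ℂ] H) c + L • A) v = (f (c + L * μ) : ℂ) • v := by
  refine cfc_apply_of_apply_eq_smul (isSelfAdjoint_algebraMap_add_smul hA.1 c L)
    (spectrum_algebraMap_add_smul_subset hA c L) hf ?_
  simp [hv, Algebra.algebraMap_eq_smul_one, add_smul, mul_smul]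

/-- An infinite-dimensional space contains an orthonormal triple. -/
theorem exists_orthonormal_triple {H : Type*} [NormedAddCommGroup H] [InnerProductSpace ℂ H]
    [CompleteSpace H] (hinf : ¬ FiniteDimensional ℂ H) :
    ∃ e₁ e₂ e₃ : H, inner ℂ e₁ e₁ = (1 : ℂ) ∧ inner ℂ e₁ e₂ = (0 : ℂ) ∧ inner ℂ e₁ e₃ = (0 : ℂ) ∧
      inner ℂ e₂ e₁ = (0 : ℂ) ∧ inner ℂ e₂ e₂ = (1 : ℂ) ∧ inner ℂ e₂ e₃ = (0 : ℂ) ∧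
      inner ℂ e₃ e₁ = (0 : ℂ) ∧ inner ℂ e₃ e₂ = (0 : ℂ) ∧ inner ℂ e₃ e₃ = (1 : ℂ) := by
  obtain ⟨S, T, hS, hT, hST, hTS, -⟩ := exists_cuntz_pair hinf
  have : Nontrivial H := by
    by_contra h
    rw [not_nontrivial_iff_subsingleton] at h
    exact hinf inferInstance
  obtain ⟨u, hu⟩ := exists_norm_eq H zero_le_one
  have huu : inner ℂ u u = (1 : ℂ) := by rw [inner_self_eq_norm_sq_to_K, hu]; simp
  have iS : ∀ v w, inner ℂ (S v) (S w) = inner ℂ v w := fun v w => by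
    rw [← ContinuousLinearMap.adjoint_inner_right, ← mul_apply_eq_comp, hS]; rfl
  have iT : ∀ v w, inner ℂ (T v) (T w) = inner ℂ v w := fun v w => by
    rw [← ContinuousLinearMap.adjoint_inner_right, ← mul_apply_eq_comp, hT]; rfl
  have iST : ∀ v w, inner ℂ (S v) (T w) = 0 := fun v w => by
    rw [← ContinuousLinearMap.adjoint_inner_right, ← mul_apply_eq_comp, hST]; simp
  have iTS : ∀ v w, inner ℂ (T v) (S w) = 0 := fun v w => by
    rw [← ContinuousLinearMap.adjoint_inner_right, ← mul_apply_eq_comp, hTS]; simp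
  refine ⟨S u, T (S u), T (T u), ?_, iST _ _, iST _ _, iTS _ _, ?_, ?_, iTS _ _, ?_, ?_⟩
  · rw [iS, huu]
  · rw [iT, iS, huu]
  · rw [iT, iST]
  · rw [iT, iTS]
  · rw [iT, iT, huu]

/-- A positive contraction with eigenvalues `0, θ, 1` having `e₂` orthogonal to its eigenvector of
eigenvalue `1`. The parameter `s = ±1` flips the sign of `e₃`. -/
theorem exists_contraction_of_orthonormal_triple {H : Type*} [NormedAddCommGroup H]
    [InnerProductSpace ℂ H] [CompleteSpace H] {e₁ e₂ e₃ : H} (i11 : inner ℂ e₁ e₁ = (1 : ℂ))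
    (i12 : inner ℂ e₁ e₂ = (0 : ℂ)) (i13 : inner ℂ e₁ e₃ = (0 : ℂ))
    (i21 : inner ℂ e₂ e₁ = (0 : ℂ)) (i22 : inner ℂ e₂ e₂ = (1 : ℂ))
    (i23 : inner ℂ e₂ e₃ = (0 : ℂ)) (i31 : inner ℂ e₃ e₁ = (0 : ℂ))
    (i32 : inner ℂ e₃ e₂ = (0 : ℂ)) (i33 : inner ℂ e₃ e₃ = (1 : ℂ)) {y₁ y₃ s ρ θ c L : ℝ}
    (hy₁2 : (y₁ : ℂ) ^ 2 = ρ) (hy₃2 : (y₃ : ℂ) ^ 2 = 1 - ρ) (hs : s ^ 2 = 1)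
    (hθ : θ ∈ Set.Icc (0 : ℝ) 1) {f : ℝ → ℝ} (hf : ContinuousOn f (Set.uIcc c (c + L))) :
    ∃ A : H →L[ℂ] H, A ∈ Set.Icc (0 : H →L[ℂ] H) 1 ∧
      A e₁ = ((ρ + θ * (16 / 25) * (1 - ρ) : ℝ) : ℂ) • e₁ + ((θ * (12 / 25) * y₃ : ℝ) : ℂ) • e₂ +
        ((s * y₁ * y₃ * (1 - 16 / 25 * θ) : ℝ) : ℂ) • e₃ ∧
      A e₂ = ((θ * (12 / 25) * y₃ : ℝ) : ℂ) • e₁ + ((θ * (9 / 25) : ℝ) : ℂ) • e₂ -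
        ((s * (12 / 25) * y₁ * θ : ℝ) : ℂ) • e₃ ∧
      (inner ℂ e₂ (cfc f (algebraMap ℝ (H →L[ℂ] H) c + L • A) e₂)).re =
        9 / 25 * f (c + L * θ) + 16 / 25 * f c := by
  have hs' : (s : ℂ) ^ 2 = 1 := by exact_mod_cast hs
  set y : H := (y₁ : ℂ) • e₁ + (s * y₃ : ℂ) • e₃ with hy
  set z : H := (4 / 5 * y₃ : ℂ) • e₁ + (3 / 5 : ℂ) • e₂ - (s * (4 / 5) * y₁ : ℂ) • e₃ with hz
  set w : H := -(3 / 5 * y₃ : ℂ) • e₁ + (4 / 5 : ℂ) • e₂ + (s * (3 / 5) * y₁ : ℂ) • e₃ with hw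
  have c1 : ∀ v, inner ℂ y v = (y₁ : ℂ) * inner ℂ e₁ v + s * y₃ * inner ℂ e₃ v := fun v => by
    simp [hy, mul_comm]
  have c2 : ∀ v, inner ℂ z v = (4 / 5 * y₃ : ℂ) * inner ℂ e₁ v + 3 / 5 * inner ℂ e₂ v -
      s * (4 / 5) * y₁ * inner ℂ e₃ v := fun v => by
    simp [hz, mul_comm]
  have d : ∀ v a₁ a₂ a₃, inner ℂ v (a₁ • e₁ + a₂ • e₂ + a₃ • e₃) =
      a₁ * inner ℂ v e₁ + a₂ * inner ℂ v e₂ + a₃ * inner ℂ v e₃ := fun v a₁ a₂ a₃ => by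
    simp
  have hy' : y = (y₁ : ℂ) • e₁ + (0 : ℂ) • e₂ + (s * y₃ : ℂ) • e₃ := by rw [hy]; module
  have hz' : z = (4 / 5 * y₃ : ℂ) • e₁ + (3 / 5 : ℂ) • e₂ + (-(s * (4 / 5) * y₁) : ℂ) • e₃ := by
    rw [hz]; module
  have hyy : inner ℂ y y = (1 : ℂ) := by
    rw [c1, hy', d, d, i11, i12, i13, i31, i32, i33]
    linear_combination hy₁2 + s ^ 2 * hy₃2 + (1 - ρ : ℂ) * hs'
  have hzz : inner ℂ z z = (1 : ℂ) := by
    rw [c2, hz', d, d, d, i11, i12, i13, i21, i22, i23, i31, i32, i33]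
    linear_combination 16 / 25 * hy₃2 + 16 / 25 * s ^ 2 * hy₁2 + (16 / 25 * ρ : ℂ) * hs'
  have hyz : inner ℂ y z = (0 : ℂ) := by
    rw [c1, hz', d, d, i11, i12, i13, i31, i32, i33]
    linear_combination -(4 / 5 * y₁ * y₃ : ℂ) * hs'
  have hzy : inner ℂ z y = (0 : ℂ) := by rw [← inner_conj_symm, hyz, map_zero]
  have hyw : inner ℂ y w = (0 : ℂ) := by
    rw [c1, hw, d, d, i11, i12, i13, i31, i32, i33]
    linear_combination (3 / 5 * y₁ * y₃ : ℂ) * hs'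
  have hzw : inner ℂ z w = (0 : ℂ) := by
    rw [c2, hw, d, d, d, i11, i12, i13, i21, i22, i23, i31, i32, i33]
    linear_combination - 12 / 25 * hy₃2 - 12 / 25 * s ^ 2 * hy₁2 - (12 / 25 * ρ : ℂ) * hs'
  have he₂ : e₂ = (3 / 5 : ℂ) • z + (4 / 5 : ℂ) • w := by rw [hz, hw]; module
  have hmem := rankOne_add_smul_rankOne_mem hyy hzz hyz hθ
  set A : H →L[ℂ] H := InnerProductSpace.rankOne ℂ y y + θ • InnerProductSpace.rankOne ℂ z z
    with hA
  have hAv : ∀ v, A v = (inner ℂ y v : ℂ) • y + (θ * inner ℂ z v : ℂ) • z := fun v => by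
    simp [hA, mul_smul]
  refine ⟨A, hmem, ?_, ?_, ?_⟩
  · rw [hAv, c1, c2, i11, i21, i31, hy, hz]
    push_cast
    linear_combination (norm := module) (hy₁2 + 16 / 25 * θ * hy₃2) • e₁
  · rw [hAv, c1, c2, i12, i22, i32, hz]
    push_cast
    module
  · have hAz : A z = (θ : ℂ) • z := by rw [hAv, hyz, hzz]; simp
    have hAw : A w = ((0 : ℝ) : ℂ) • w := by simp [hAv, hyw, hzw]
    have hez : inner ℂ e₂ z = (3 / 5 : ℂ) := by rw [hz', d, i21, i22, i23]; ring
    have hew : inner ℂ e₂ w = (4 / 5 : ℂ) := by rw [hw, d, i21, i22, i23]; ring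
    conv_lhs => enter [1, 3]; rw [he₂]
    rw [map_add, map_smul, map_smul, cfc_algebraMap_add_smul_apply hmem hf hAz,
      cfc_algebraMap_add_smul_apply hmem hf hAw, inner_add_right,
      inner_smul_right, inner_smul_right, inner_smul_right, inner_smul_right, hez, hew, mul_zero,
      add_zero]
    have h1 : (3 / 5 * (f (c + L * θ) * (3 / 5)) + 4 / 5 * (f c * (4 / 5)) : ℂ) =
        ((9 / 25 * f (c + L * θ) + 16 / 25 * f c : ℝ) : ℂ) := by push_cast; ring
    rw [h1, Complex.ofReal_re]

/-- The quadratic form of `f (c + L M)` at `e₂` when `M` acts on `e₁, e₂` as a symmetric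
`2 × 2` block with eigenvalues `μ₁, μ₂`. -/
theorem exists_eigenvalues_of_block {H : Type*} [NormedAddCommGroup H] [InnerProductSpace ℂ H]
    [CompleteSpace H] {e₁ e₂ : H} (i11 : inner ℂ e₁ e₁ = (1 : ℂ)) (i12 : inner ℂ e₁ e₂ = (0 : ℂ))
    (i21 : inner ℂ e₂ e₁ = (0 : ℂ)) (i22 : inner ℂ e₂ e₂ = (1 : ℂ)) {M : H →L[ℂ] H}
    (hMmem : M ∈ Set.Icc (0 : H →L[ℂ] H) 1) {α β γ : ℝ} (hβ0 : 0 < β)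
    (hM1 : M e₁ = (α : ℂ) • e₁ + (β : ℂ) • e₂) (hM2 : M e₂ = (β : ℂ) • e₁ + (γ : ℂ) • e₂)
    {c L : ℝ} {f : ℝ → ℝ} (hf : ContinuousOn f (Set.uIcc c (c + L))) :
    ∃ μ₁ μ₂ : ℝ, μ₁ ∈ Set.Icc (0 : ℝ) 1 ∧ μ₂ ∈ Set.Icc (0 : ℝ) 1 ∧ μ₁ < α ∧ α < μ₂ ∧
      μ₁ + μ₂ = α + γ ∧ (μ₂ - α) * (μ₂ - γ) = β ^ 2 ∧
      (inner ℂ e₂ (cfc f (algebraMap ℝ (H →L[ℂ] H) c + L • M) e₂)).re * (μ₂ - μ₁) =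
        f (c + L * μ₂) * (μ₂ - α) + f (c + L * μ₁) * (α - μ₁) := by
  set R := √((α - γ) ^ 2 + 4 * β ^ 2) with hR
  have hR2 : R ^ 2 = (α - γ) ^ 2 + 4 * β ^ 2 := Real.sq_sqrt (by positivity)
  have hRabs : |α - γ| < R := by
    refine abs_lt_of_sq_lt_sq ?_ (Real.sqrt_nonneg _)
    rw [hR2]; nlinarith
  obtain ⟨hR1, hR3⟩ := abs_lt.1 hRabs
  have hspec : spectrum ℝ M ⊆ Set.Icc 0 1 := by
    rw [spectrum_subset_Icc_iff (.of_nonneg hMmem.1)]; simpa using hMmem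
  have hv : ∀ μ : ℝ, (μ - α) * (μ - γ) = β ^ 2 →
      M ((β : ℂ) • e₁ + ((μ - α : ℝ) : ℂ) • e₂) =
        (μ : ℂ) • ((β : ℂ) • e₁ + ((μ - α : ℝ) : ℂ) • e₂) := fun μ hμ => by
    have hμ' : ((μ : ℂ) - α) * (μ - γ) = β ^ 2 := by exact_mod_cast hμ
    rw [map_add, map_smul, map_smul, hM1, hM2]
    push_cast
    linear_combination (norm := module) (-hμ') • e₂
  have hμI : ∀ μ : ℝ, (μ - α) * (μ - γ) = β ^ 2 → μ ∈ Set.Icc (0 : ℝ) 1 := fun μ hμ => by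
    refine hspec (mem_spectrum_of_apply_eq_smul ?_ (hv μ hμ))
    intro h0
    have h1 : inner ℂ e₁ ((β : ℂ) • e₁ + ((μ - α : ℝ) : ℂ) • e₂) = (β : ℂ) := by
      rw [inner_add_right, inner_smul_right, inner_smul_right, i11, i12]; ring
    rw [h0, inner_zero_right] at h1
    exact hβ0.ne (by exact_mod_cast h1)
  set μ₁ := (α + γ - R) / 2 with hμ₁
  set μ₂ := (α + γ + R) / 2 with hμ₂
  have hq1 : (μ₁ - α) * (μ₁ - γ) = β ^ 2 := by rw [hμ₁]; linear_combination hR2 / 4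
  have hq2 : (μ₂ - α) * (μ₂ - γ) = β ^ 2 := by rw [hμ₂]; linear_combination hR2 / 4
  refine ⟨μ₁, μ₂, hμI _ hq1, hμI _ hq2, ?_, ?_, ?_, hq2, ?_⟩
  · rw [hμ₁]; linarith
  · rw [hμ₂]; linarith
  · rw [hμ₁, hμ₂]; ring
  · have he : ((μ₂ - μ₁ : ℝ) : ℂ) • e₂ = ((β : ℂ) • e₁ + ((μ₂ - α : ℝ) : ℂ) • e₂) -
        ((β : ℂ) • e₁ + ((μ₁ - α : ℝ) : ℂ) • e₂) := by push_cast; module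
    have h1 := congrArg (fun v => inner ℂ e₂ (cfc f (algebraMap ℝ (H →L[ℂ] H) c + L • M) v)) he
    simp only [map_smul, map_sub, cfc_algebraMap_add_smul_apply hMmem hf (hv _ hq1),
      cfc_algebraMap_add_smul_apply hMmem hf (hv _ hq2), inner_sub_right,
      inner_smul_right, inner_add_right, i21, i22] at h1
    have h2 := congrArg Complex.re h1
    rw [Complex.re_ofReal_mul] at h2
    rw [mul_comm, h2]
    norm_cast
    ring

/-- Averaging two unitarily equivalent operators with spectrum in `{c, c + L * θ, c + L}` forces an
operator convex function to grow at least quadratically above its support line at `c`. -/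
theorem quadratic_growth_of_midpoint_operator_convex {H : Type*} [NormedAddCommGroup H]
    [InnerProductSpace ℂ H] [CompleteSpace H] (hinf : ¬ FiniteDimensional ℂ H) {a b : ℝ}
    {f : ℝ → ℝ} (hf : ContinuousOn f (Set.Ioo a b))
    (hconv : ∀ A B : H →L[ℂ] H, IsSelfAdjoint A → IsSelfAdjoint B →
      spectrum ℝ A ⊆ Set.Ioo a b → spectrum ℝ B ⊆ Set.Ioo a b →
      cfc f ((1 / 2 : ℝ) • A + (1 / 2 : ℝ) • B) ≤ (1 / 2 : ℝ) • cfc f A + (1 / 2 : ℝ) • cfc f B)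
    {c L ρ θ σ κ : ℝ} (hc : c ∈ Set.Ioo a b) (hcL : c + L ∈ Set.Ioo a b)
    (hρ : ρ ∈ Set.Ioo (0 : ℝ) 1) (hθ : θ ∈ Set.Ioo (0 : ℝ) 1) (hκ0 : 0 ≤ κ)
    (hsup : ∀ t ∈ Set.Ioo a b, f c + σ * (t - c) ≤ f t)
    (hκ : ∀ t ∈ Set.Icc ρ 1, f c + σ * (L * t) + κ ≤ f (c + L * t)) :
    16 / 25 * (1 - ρ) * θ ^ 2 * κ ≤ f (c + L * θ) - f c - σ * (L * θ) := by
  obtain ⟨e₁, e₂, e₃, i11, i12, i13, i21, i22, i23, i31, i32, i33⟩ := exists_orthonormal_triple hinf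
  set y₁ := √ρ with hy₁
  set y₃ := √(1 - ρ) with hy₃
  have hy₁2 : (y₁ : ℂ) ^ 2 = ρ := by exact_mod_cast Real.sq_sqrt hρ.1.le
  have hy₃2 : (y₃ : ℂ) ^ 2 = 1 - ρ := by exact_mod_cast Real.sq_sqrt (sub_nonneg.2 hρ.2.le)
  have hy₃r : y₃ ^ 2 = 1 - ρ := Real.sq_sqrt (sub_nonneg.2 hρ.2.le)
  have hsub : Set.uIcc c (c + L) ⊆ Set.Ioo a b := (Set.ordConnected_Ioo).uIcc_subset hc hcL
  have hfc : ContinuousOn f (Set.uIcc c (c + L)) := hf.mono hsub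
  obtain ⟨A, hA, hA1, hA2, hA3⟩ := exists_contraction_of_orthonormal_triple i11 i12 i13 i21 i22
    i23 i31 i32 i33 hy₁2 hy₃2 (one_pow 2) (Set.Ioo_subset_Icc_self hθ) hfc
  obtain ⟨B, hB, hB1, hB2, hB3⟩ := exists_contraction_of_orthonormal_triple i11 i12 i13 i21 i22
    i23 i31 i32 i33 hy₁2 hy₃2 (neg_one_sq) (Set.Ioo_subset_Icc_self hθ) hfc
  set M : H →L[ℂ] H := (1 / 2 : ℝ) • A + (1 / 2 : ℝ) • B with hM
  have hMmem : M ∈ Set.Icc (0 : H →L[ℂ] H) 1 :=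
    (convex_Icc _ _) hA hB (by norm_num) (by norm_num) (by norm_num)
  set α : ℝ := ρ + θ * (16 / 25) * (1 - ρ) with hα
  set β : ℝ := θ * (12 / 25) * y₃ with hβ
  set γ : ℝ := θ * (9 / 25) with hγ
  have hM1 : M e₁ = (α : ℂ) • e₁ + (β : ℂ) • e₂ := by
    rw [hM, add_apply, smul_apply, smul_apply, hA1, hB1, ← Complex.coe_smul, ← Complex.coe_smul]
    push_cast
    module
  have hM2 : M e₂ = (β : ℂ) • e₁ + (γ : ℂ) • e₂ := by
    rw [hM, add_apply, smul_apply, smul_apply, hA2, hB2, ← Complex.coe_smul, ← Complex.coe_smul]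
    push_cast
    module
  have hβ0 : 0 < β := by
    have : 0 < y₃ := Real.sqrt_pos.2 (sub_pos.2 hρ.2)
    have := hθ.1
    positivity
  obtain ⟨μ₁, μ₂, h1, h2, hα1, hα2, hsum, hq2, hform⟩ :=
    exists_eigenvalues_of_block i11 i12 i21 i22 hMmem hβ0 hM1 hM2 hfc
  have hle : (inner ℂ e₂ (cfc f (algebraMap ℝ (H →L[ℂ] H) c + L • M) e₂)).re ≤
      9 / 25 * f (c + L * θ) + 16 / 25 * f c := by
    have h1 := hconv _ _ (isSelfAdjoint_algebraMap_add_smul hA.1 c L)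
      (isSelfAdjoint_algebraMap_add_smul hB.1 c L)
      ((spectrum_algebraMap_add_smul_subset hA c L).trans hsub)
      ((spectrum_algebraMap_add_smul_subset hB c L).trans hsub)
    have h2 : (1 / 2 : ℝ) • (algebraMap ℝ (H →L[ℂ] H) c + L • A) +
        (1 / 2 : ℝ) • (algebraMap ℝ (H →L[ℂ] H) c + L • B) =
        algebraMap ℝ (H →L[ℂ] H) c + L • M := by rw [hM]; module
    rw [h2] at h1
    have h3 := (ContinuousLinearMap.le_def _ _).1 h1 |>.re_inner_nonneg_right e₂
    rw [sub_apply, add_apply, smul_apply, smul_apply, inner_sub_right, inner_add_right,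
      inner_smul_right_eq_smul, inner_smul_right_eq_smul] at h3
    simp only [RCLike.re_to_complex, Complex.sub_re, Complex.add_re, Complex.smul_re, hA3, hB3,
      smul_eq_mul] at h3
    linarith
  have hsup1 : f c + σ * (L * μ₁) ≤ f (c + L * μ₁) := by
    have hmem : c + L * μ₁ ∈ Set.Ioo a b := by
      have := (convex_Ioo a b).add_smul_mem hc hcL h1
      rwa [smul_eq_mul, mul_comm] at this
    simpa using hsup _ hmem
  have hαρ : ρ ≤ α := by
    rw [hα]; nlinarith [mul_pos hθ.1 (sub_pos.2 hρ.2)]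
  have hsup2 := hκ μ₂ ⟨hαρ.trans hα2.le, h2.2⟩
  have hγ0 : 0 ≤ γ := by rw [hγ]; linarith [hθ.1]
  have hβle : β ^ 2 ≤ μ₂ - α := by
    rw [← hq2]; exact mul_le_of_le_one_right (sub_pos.2 hα2).le (by linarith [h2.2])
  have hd : 0 < μ₂ - μ₁ := by linarith
  have e1 := mul_le_mul_of_nonneg_right hsup2 (sub_pos.2 hα2).le
  have e2 := mul_le_mul_of_nonneg_right hsup1 (sub_pos.2 hα1).le
  have e3 := mul_le_mul_of_nonneg_right hle hd.le
  have e4 : κ * β ^ 2 * (μ₂ - μ₁) ≤ κ * (μ₂ - α) := by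
    have : β ^ 2 * (μ₂ - μ₁) ≤ μ₂ - α :=
      (mul_le_of_le_one_right (sq_nonneg β) (by linarith [h2.2, h1.1])).trans hβle
    rw [mul_assoc]
    exact mul_le_mul_of_nonneg_left this hκ0
  have e5 : 0 ≤ (9 / 25 * (f (c + L * θ) - f c - σ * (L * θ)) - κ * β ^ 2) * (μ₂ - μ₁) := by
    have e6 : (f c + σ * (L * μ₂)) * (μ₂ - α) + (f c + σ * (L * μ₁)) * (α - μ₁) =
        (f c + σ * L * γ) * (μ₂ - μ₁) := by
      have : α = μ₁ + μ₂ - γ := by linarith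
      rw [this]; ring
    rw [hγ] at e6
    linarith
  have e7 := nonneg_of_mul_nonneg_left e5 hd
  have e8 : β ^ 2 = θ ^ 2 * (144 / 625) * (1 - ρ) := by rw [hβ, ← hy₃r]; ring
  rw [e8] at e7
  linarith

theorem ConvexOn.exists_support_line {f : ℝ → ℝ} {a b c : ℝ} (hf : ConvexOn ℝ (Set.Ioo a b) f)
    (hc : c ∈ Set.Ioo a b) : ∃ σ : ℝ, ∀ t ∈ Set.Ioo a b, f c + σ * (t - c) ≤ f t := by
  have hci : c ∈ interior (Set.Ioo a b) := by rwa [interior_Ioo]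
  refine ⟨derivWithin f (Set.Ioi c) c, fun t ht => ?_⟩
  rcases lt_trichotomy t c with h | rfl | h
  · have h1 := (hf.slope_le_leftDeriv_of_mem_interior ht hci h).trans
      (hf.leftDeriv_le_rightDeriv_of_mem_interior hci)
    rw [slope_def_field, div_le_iff₀ (sub_pos.2 h)] at h1
    linarith
  · simp
  · have h1 := hf.rightDeriv_le_slope_of_mem_interior hci ht h
    rw [slope_def_field, le_div_iff₀ (sub_pos.2 h)] at h1
    linarith

theorem ConvexOn.three_point_le {f : ℝ → ℝ} {s : Set ℝ} (hf : ConvexOn ℝ s f) {x y z : ℝ}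
    (hx : x ∈ s) (hz : z ∈ s) (hxy : x < y) (hyz : y < z) :
    (z - x) * f y ≤ (z - y) * f x + (y - x) * f z := by
  have h := hf.slope_mono_adjacent hx hz hxy hyz
  rw [div_le_div_iff₀ (sub_pos.2 hxy) (sub_pos.2 hyz)] at h
  linarith

/-- A convex function touching one of its chords at an interior point is affine below the chord. -/
theorem ConvexOn.eq_chord_of_touch {f : ℝ → ℝ} {s : Set ℝ} (hf : ConvexOn ℝ s f) {x y z t : ℝ}
    (hx : x ∈ s) (hz : z ∈ s) (hxy : x < y) (hyz : y < z)
    (h : (z - y) * f x + (y - x) * f z ≤ (z - x) * f y) (ht : t ∈ Set.Ioo x z) :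
    (z - x) * f t = (z - t) * f x + (t - x) * f z := by
  have hts : t ∈ s := hf.1.ordConnected.out hx hz (Set.Ioo_subset_Icc_self ht)
  refine le_antisymm (hf.three_point_le hx hz ht.1 ht.2) ?_
  rcases lt_trichotomy t y with h1 | rfl | h1
  · have h2 := hf.three_point_le hts hz h1 hyz
    have h3 : 0 ≤ (z - y) * ((z - x) * f t - ((z - t) * f x + (t - x) * f z)) := by
      nlinarith [ht.2]
    have := nonneg_of_mul_nonneg_right h3 (sub_pos.2 hyz)
    linarith
  · exact h
  · have h2 := hf.three_point_le hx hts hxy h1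
    have h3 : 0 ≤ (y - x) * ((z - x) * f t - ((z - t) * f x + (t - x) * f z)) := by
      nlinarith [ht.1]
    have := nonneg_of_mul_nonneg_right h3 (sub_pos.2 hxy)
    linarith

/-- A convex function on an interval that is not affine lies strictly below some chord on any given
compact subinterval. -/
theorem ConvexOn.exists_chord_gt {f : ℝ → ℝ} {a b l r : ℝ} (hf : ConvexOn ℝ (Set.Ioo a b) f)
    (hnonlin : ¬ ∃ α β : ℝ, ∀ x ∈ Set.Ioo a b, f x = α * x + β) (hal : a < l) (hlr : l < r)
    (hrb : r < b) :
    ∃ x z : ℝ, a < x ∧ x < l ∧ r < z ∧ z < b ∧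
      ∀ y ∈ Set.Icc l r, (z - x) * f y < (z - y) * f x + (y - x) * f z := by
  by_contra! hcon
  refine hnonlin ⟨(f r - f l) / (r - l), f l - (f r - f l) / (r - l) * l, fun t ht => ?_⟩
  obtain ⟨x, hx1, hx2⟩ := exists_between (lt_min hal ht.1)
  obtain ⟨z, hz1, hz2⟩ := exists_between (max_lt hrb ht.2)
  obtain ⟨hxl, hxt⟩ := lt_min_iff.1 hx2
  obtain ⟨hrz, htz⟩ := max_lt_iff.1 hz1
  obtain ⟨y, hy, hy'⟩ := hcon x z hx1 hxl hrz hz2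
  have hxs : x ∈ Set.Ioo a b := ⟨hx1, by linarith⟩
  have hzs : z ∈ Set.Ioo a b := ⟨by linarith, hz2⟩
  have key := fun s hs => hf.eq_chord_of_touch (t := s) hxs hzs (hxl.trans_le hy.1)
    (hy.2.trans_lt hrz) hy' hs
  have e1 := key t ⟨hxt, htz⟩
  have e2 := key l ⟨hxl, by linarith⟩
  have e3 := key r ⟨by linarith, hrz⟩
  have h1 : r - l ≠ 0 := (sub_pos.2 hlr).ne'
  have h2 : z - x ≠ 0 := by linarith
  have h3 : (z - x) * ((r - l) * f t - (f r - f l) * (t - l) - (r - l) * f l) = 0 := by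
    linear_combination (r - l) * e1 - (t - l) * (e3 - e2) - (r - l) * e2
  have h4 := (mul_eq_zero.1 h3).resolve_left h2
  field_simp
  linarith

theorem convexOn_of_operator_convex {H : Type*} [NormedAddCommGroup H]
    [InnerProductSpace ℂ H] [CompleteSpace H] [Nontrivial H] {a b : ℝ} {f : ℝ → ℝ}
    (hconv : ∀ s : ℝ, s ∈ Set.Icc (0 : ℝ) 1 → ∀ A B : H →L[ℂ] H,
      IsSelfAdjoint A → IsSelfAdjoint B →
      spectrum ℝ A ⊆ Set.Ioo a b → spectrum ℝ B ⊆ Set.Ioo a b →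
      cfc f (s • A + (1 - s) • B) ≤ s • cfc f A + (1 - s) • cfc f B) :
    ConvexOn ℝ (Set.Ioo a b) f := by
  refine ⟨convex_Ioo a b, fun x hx y hy s t hs ht hst => ?_⟩
  obtain rfl : t = 1 - s := by linarith
  have hsp : ∀ u ∈ Set.Ioo a b, spectrum ℝ (algebraMap ℝ (H →L[ℂ] H) u) ⊆ Set.Ioo a b := by
    intro u hu
    rw [spectrum.scalar_eq]; simpa using hu
  have h := hconv s ⟨hs, by linarith⟩ (algebraMap ℝ _ x) (algebraMap ℝ _ y)
    (.algebraMap _ (.all x)) (.algebraMap _ (.all y)) (hsp x hx) (hsp y hy)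
  have e : s • algebraMap ℝ (H →L[ℂ] H) x + (1 - s) • algebraMap ℝ (H →L[ℂ] H) y =
      algebraMap ℝ _ (s • x + (1 - s) • y) := by
    simp [Algebra.algebraMap_eq_smul_one, mul_smul, add_smul]
  rw [e, cfc_algebraMap, cfc_algebraMap, cfc_algebraMap] at h
  have e' : s • algebraMap ℝ (H →L[ℂ] H) (f x) + (1 - s) • algebraMap ℝ (H →L[ℂ] H) (f y) =
      algebraMap ℝ _ (s • f x + (1 - s) • f y) := by
    simp [Algebra.algebraMap_eq_smul_one, mul_smul, add_smul]
  rw [e'] at h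
  obtain ⟨u, hu⟩ := exists_norm_eq H zero_le_one
  have h2 := (ContinuousLinearMap.le_def _ _).1 h |>.re_inner_nonneg_right u
  rw [← map_sub] at h2
  simpa [Algebra.algebraMap_eq_smul_one, inner_smul_right_eq_smul, hu] using h2

/-- A nonaffine operator convex function is uniformly strongly midpoint-convex on compact
subintervals. -/
theorem exists_strong_midpoint_convex {H : Type*} [NormedAddCommGroup H]
    [InnerProductSpace ℂ H] [CompleteSpace H] (hinf : ¬ FiniteDimensional ℂ H) {a b : ℝ}
    {f : ℝ → ℝ} (hf : ContinuousOn f (Set.Ioo a b)) (hcvx : ConvexOn ℝ (Set.Ioo a b) f)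
    (hconv : ∀ A B : H →L[ℂ] H, IsSelfAdjoint A → IsSelfAdjoint B →
      spectrum ℝ A ⊆ Set.Ioo a b → spectrum ℝ B ⊆ Set.Ioo a b →
      cfc f ((1 / 2 : ℝ) • A + (1 / 2 : ℝ) • B) ≤ (1 / 2 : ℝ) • cfc f A + (1 / 2 : ℝ) • cfc f B)
    (hnonlin : ¬ ∃ α β : ℝ, ∀ x ∈ Set.Ioo a b, f x = α * x + β) {l r : ℝ} (hal : a < l)
    (hlr : l < r) (hrb : r < b) :
    ∃ m > 0, ∀ c δ : ℝ, c - δ ∈ Set.Icc l r → c + δ ∈ Set.Icc l r →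
      2 * f c + m * δ ^ 2 ≤ f (c + δ) + f (c - δ) := by
  obtain ⟨x, z, hax, hxl, hrz, hzb, hchord⟩ := hcvx.exists_chord_gt hnonlin hal hlr hrb
  have hIcc : Set.Icc l r ⊆ Set.Ioo a b := fun t ht => ⟨hal.trans_le ht.1, ht.2.trans_lt hrb⟩
  have hxz : 0 < z - x := by linarith
  obtain ⟨κ, hκ0, hκ⟩ : ∃ κ > 0, ∀ y ∈ Set.Icc l r,
      (z - x) * κ ≤ (z - y) * f x + (y - x) * f z - (z - x) * f y := by
    have hc : ContinuousOn (fun y => (z - y) * f x + (y - x) * f z - (z - x) * f y)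
        (Set.Icc l r) :=
      ((by fun_prop : Continuous fun y => (z - y) * f x + (y - x) * f z).continuousOn).sub
        (continuousOn_const.mul (hf.mono hIcc))
    obtain ⟨y₀, hy₀, hmin⟩ := isCompact_Icc.exists_isMinOn (Set.nonempty_Icc.2 hlr.le) hc
    refine ⟨((z - y₀) * f x + (y₀ - x) * f z - (z - x) * f y₀) / (z - x),
      div_pos (sub_pos.2 (hchord y₀ hy₀)) hxz, fun y hy => ?_⟩
    rw [mul_div_cancel₀ _ hxz.ne']
    exact hmin hy
  set η := min ((x - a) / 2) ((b - z) / 2) with hη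
  have hη0 : 0 < η := lt_min (by linarith) (by linarith)
  have hηx : η ≤ (x - a) / 2 := min_le_left _ _
  have hηz : η ≤ (b - z) / 2 := min_le_right _ _
  have hab : 0 < b - a := by linarith
  have growth : ∀ c ∈ Set.Icc l r, ∀ σ, (∀ t ∈ Set.Ioo a b, f c + σ * (t - c) ≤ f t) →
      ∀ L ρ δ : ℝ, L ≠ 0 → |L| ≤ b - a → c + L ∈ Set.Ioo a b → ρ ∈ Set.Ioo (0 : ℝ) 1 →
        η ≤ (1 - ρ) * |L| → κ ≤ f (c + L * ρ) - f c - σ * (L * ρ) → δ / L ∈ Set.Ioo (0 : ℝ) 1 →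
        16 / 25 * (η / (b - a) ^ 3) * κ * δ ^ 2 ≤ f (c + δ) - f c - σ * δ := by
    intro c hc σ hσ L ρ δ hL hLab hcL hρ hηρ hκρ hδ
    have hLδ : L * (δ / L) = δ := mul_div_cancel₀ δ hL
    have h1 := quadratic_growth_of_midpoint_operator_convex hinf hf hconv (hIcc hc) hcL hρ hδ
      hκ0.le hσ (fun t ht => ?_)
    · rw [hLδ] at h1
      refine le_trans ?_ h1
      have h2 : η / (b - a) ^ 3 * δ ^ 2 ≤ (1 - ρ) * (δ / L) ^ 2 := by
        have hL' : 0 < |L| := abs_pos.2 hL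
        have h3 : (1 - ρ) * (δ / L) ^ 2 = ((1 - ρ) * |L|) / |L| ^ 3 * δ ^ 2 := by
          rw [div_pow, ← sq_abs L]; field_simp
        rw [h3]
        gcongr
        exact (hη0.trans_le hηρ).le
      nlinarith
    · have ht0 : 0 < t := hρ.1.trans_le ht.1
      have htm : c + L * t ∈ Set.Ioo a b := by
        have := (convex_Ioo a b).add_smul_mem (hIcc hc) hcL ⟨ht0.le, ht.2⟩
        rwa [smul_eq_mul, mul_comm] at this
      have hq : ρ / t ≤ 1 := (div_le_one ht0).2 ht.1
      have h3 := hcvx.2 (hIcc hc) htm (sub_nonneg.2 hq) (div_nonneg hρ.1.le ht0.le)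
        (sub_add_cancel _ _)
      have h4 : (1 - ρ / t) • c + (ρ / t) • (c + L * t) = c + L * ρ := by
        simp only [smul_eq_mul]; field_simp; ring
      rw [h4, smul_eq_mul, smul_eq_mul] at h3
      have h5 := hσ _ htm
      have h6 : ρ / t * (f (c + L * t) - f c - σ * (L * t)) ≤ f (c + L * t) - f c - σ * (L * t) :=
        mul_le_of_le_one_left (by linarith) hq
      have h7 : ρ / t * (σ * (L * t)) = σ * (L * ρ) := by field_simp
      linarith
  refine ⟨16 / 25 * (η / (b - a) ^ 3) * κ, by positivity, fun c δ h1 h2 => ?_⟩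
  have hc : c ∈ Set.Icc l r := ⟨by linarith [h1.1, h2.1], by linarith [h1.2, h2.2]⟩
  wlog hδ : 0 < δ generalizing δ
  · rcases (not_lt.1 hδ).lt_or_eq with h | rfl
    · have := this (-δ) (by simpa using h2) (by simpa [← sub_eq_add_neg] using h1)
        (neg_pos.2 h)
      rw [neg_sq, sub_neg_eq_add, ← sub_eq_add_neg] at this
      linarith
    · simp; linarith
  obtain ⟨σ, hσ⟩ := hcvx.exists_support_line (hIcc hc)
  have s1 := hσ _ (hIcc h1)
  have s2 := hσ _ (hIcc h2)
  have hκc := hκ c hc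
  rcases le_or_gt κ (f z - f c - σ * (z - c)) with h | h
  · have hL : 0 < z + η - c := by linarith [hc.2]
    have hcz : 0 < z - c := by linarith [hc.2]
    have e1 : (z + η - c) * ((z - c) / (z + η - c)) = z - c := mul_div_cancel₀ _ hL.ne'
    have e2 : (1 - (z - c) / (z + η - c)) * (z + η - c) = η := by field_simp; ring
    have := growth c hc σ hσ (z + η - c) ((z - c) / (z + η - c)) δ hL.ne'
      (by rw [abs_of_pos hL]; linarith [hc.1]) ⟨by linarith, by linarith⟩
      ⟨div_pos hcz hL, (div_lt_one hL).2 (by linarith)⟩ (by rw [abs_of_pos hL, e2])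
      (by rw [e1, add_sub_cancel]; exact h)
      ⟨div_pos hδ hL, (div_lt_one hL).2 (by linarith [h2.2])⟩
    linarith
  · have hx' : κ ≤ f x - f c - σ * (x - c) := by
      have hzc : 0 < z - c := by linarith [hc.2]
      have hcx : 0 < c - x := by linarith [hc.1]
      have h3 : (c - x) * (f z - f c - σ * (z - c)) ≤ (c - x) * κ :=
        mul_le_mul_of_nonneg_left h.le hcx.le
      have h4 : (z - c) * κ ≤ (z - c) * (f x - f c - σ * (x - c)) := by linarith
      exact le_of_mul_le_mul_left h4 hzc
    have hL : x - η - c < 0 := by linarith [hc.1]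
    have hcx : x - c < 0 := by linarith [hc.1]
    have e1 : (x - η - c) * ((x - c) / (x - η - c)) = x - c := mul_div_cancel₀ _ hL.ne
    have e2 : (1 - (x - c) / (x - η - c)) * -(x - η - c) = η := by
      have := hL.ne
      field_simp; ring
    have := growth c hc σ hσ (x - η - c) ((x - c) / (x - η - c)) (-δ) hL.ne
      (by rw [abs_of_neg hL]; linarith [hc.2]) ⟨by linarith, by linarith⟩
      ⟨div_pos_of_neg_of_neg hcx hL, (div_lt_one_of_neg hL).2 (by linarith)⟩
      (by rw [abs_of_neg hL, e2]) (by rw [e1, add_sub_cancel]; exact hx')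
      ⟨div_pos_of_neg_of_neg (neg_neg_of_pos hδ) hL,
        (div_lt_one_of_neg hL).2 (by linarith [h1.1])⟩
    rw [neg_sq, ← sub_eq_add_neg] at this
    linarith

theorem cfc_conj_symmetry {H : Type*} [NormedAddCommGroup H] [InnerProductSpace ℂ H]
    [CompleteSpace H] {X U : H →L[ℂ] H} (hX : IsSelfAdjoint X) (hU : IsSelfAdjoint U)
    (hUU : U * U = 1) {s : Set ℝ} (hs : spectrum ℝ X ⊆ s) {f : ℝ → ℝ} (hf : ContinuousOn f s) :
    IsSelfAdjoint (U * X * U) ∧ spectrum ℝ (U * X * U) ⊆ s ∧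
      cfc f (U * X * U) = U * cfc f X * U := by
  let u : unitary (H →L[ℂ] H) := ⟨U, by simp [Unitary.mem_iff, hU.star_eq, hUU]⟩
  have hu : ∀ Y, Unitary.conjStarAlgAut ℝ (H →L[ℂ] H) u Y = U * Y * U := fun Y => by
    rw [Unitary.conjStarAlgAut_apply]
    change U * Y * star U = _
    rw [hU.star_eq]
  have hUXU : IsSelfAdjoint (U * X * U) := hu X ▸ hX.map (Unitary.conjStarAlgAut ℝ (H →L[ℂ] H) u)
  refine ⟨hUXU, ?_, ?_⟩
  · rw [← hu]
    exact (AlgHom.spectrum_apply_subset (Unitary.conjStarAlgAut ℝ (H →L[ℂ] H) u) X).trans hs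
  · rw [← hu, ← hu]
    refine (StarAlgHomClass.map_cfc (S := ℝ) (Unitary.conjStarAlgAut ℝ (H →L[ℂ] H) u) f X
      (hf.mono hs) ?_ hX (hu X ▸ hUXU)).symm
    rw [show ⇑(Unitary.conjStarAlgAut ℝ (H →L[ℂ] H) u) = fun Y => U * Y * U from funext hu]
    fun_prop

theorem spectrum_midpoint_subset {H : Type*} [NormedAddCommGroup H] [InnerProductSpace ℂ H]
    [CompleteSpace H] {A B : H →L[ℂ] H} (hA : IsSelfAdjoint A) (hB : IsSelfAdjoint B) {l r : ℝ}
    (hsA : spectrum ℝ A ⊆ Set.Icc l r) (hsB : spectrum ℝ B ⊆ Set.Icc l r) :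
    spectrum ℝ ((1 / 2 : ℝ) • A + (1 / 2 : ℝ) • B) ⊆ Set.Icc l r := by
  rw [spectrum_subset_Icc_iff (((IsSelfAdjoint.all (_ : ℝ)).smul hA).add
    ((IsSelfAdjoint.all (_ : ℝ)).smul hB))]
  rw [spectrum_subset_Icc_iff hA] at hsA
  rw [spectrum_subset_Icc_iff hB] at hsB
  have hsplit : ∀ Y : H →L[ℂ] H, (1 / 2 : ℝ) • Y + (1 / 2 : ℝ) • Y = Y := fun Y => by module
  rw [← hsplit (algebraMap ℝ (H →L[ℂ] H) l), ← hsplit (algebraMap ℝ (H →L[ℂ] H) r)]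
  exact ⟨add_le_add (smul_le_smul_of_nonneg_left hsA.1 (by norm_num))
      (smul_le_smul_of_nonneg_left hsB.1 (by norm_num)),
    add_le_add (smul_le_smul_of_nonneg_left hsA.2 (by norm_num))
      (smul_le_smul_of_nonneg_left hsB.2 (by norm_num))⟩

theorem cfc_re_inner_pinching_le {H : Type*} [NormedAddCommGroup H] [InnerProductSpace ℂ H]
    [CompleteSpace H] {X U : H →L[ℂ] H} (hX : IsSelfAdjoint X) (hU : IsSelfAdjoint U)
    (hUU : U * U = 1) {l r : ℝ} (hs : spectrum ℝ X ⊆ Set.Icc l r) {f : ℝ → ℝ}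
    (hf : ContinuousOn f (Set.Icc l r))
    (hconv : ∀ A B : H →L[ℂ] H, IsSelfAdjoint A → IsSelfAdjoint B →
      spectrum ℝ A ⊆ Set.Icc l r → spectrum ℝ B ⊆ Set.Icc l r →
      cfc f ((1 / 2 : ℝ) • A + (1 / 2 : ℝ) • B) ≤ (1 / 2 : ℝ) • cfc f A + (1 / 2 : ℝ) • cfc f B)
    {v : H} (hv : U v = v) :
    (inner ℂ v (cfc f ((1 / 2 : ℝ) • X + (1 / 2 : ℝ) • (U * X * U)) v)).re ≤
      (inner ℂ v (cfc f X v)).re := by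
  obtain ⟨hUXU, hsU, hcfc⟩ := cfc_conj_symmetry hX hU hUU hs hf
  have h := ((ContinuousLinearMap.le_def _ _).1
    (hconv X (U * X * U) hX hUXU hs hsU)).re_inner_nonneg_right v
  have hUi : ∀ y, inner ℂ v (U y) = inner ℂ v y := fun y => by
    conv_rhs => rw [← hv]
    rw [← ContinuousLinearMap.adjoint_inner_right, ← ContinuousLinearMap.star_eq_adjoint,
      hU.star_eq]
  have hin : inner ℂ v ((U * cfc f X * U) v) = inner ℂ v (cfc f X v) := by
    rw [mul_apply_eq_comp, mul_apply_eq_comp, hv, hUi]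
  rw [hcfc, sub_apply, inner_sub_right, map_sub, add_apply, inner_add_right, smul_apply,
    smul_apply, inner_smul_right_eq_smul, inner_smul_right_eq_smul, hin] at h
  simp only [map_add, RCLike.re_to_complex, Complex.smul_re, smul_eq_mul] at h
  linarith

open ContinuousLinearMap in
theorem spectrum_compression_subset {H : Type*} [NormedAddCommGroup H] [InnerProductSpace ℂ H]
    [CompleteSpace H] {X V : H →L[ℂ] H} (hX : IsSelfAdjoint X) (hV : adjoint V * V = 1)
    {l r : ℝ} (hs : spectrum ℝ X ⊆ Set.Icc l r) :
    IsSelfAdjoint (adjoint V * X * V) ∧ spectrum ℝ (adjoint V * X * V) ⊆ Set.Icc l r := by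
  have hC : IsSelfAdjoint (adjoint V * X * V) := by
    rw [← star_eq_adjoint]; exact hX.conjugate' V
  have hs' := (spectrum_subset_Icc_iff hX).1 hs
  have hscal : ∀ c : ℝ, algebraMap ℝ (H →L[ℂ] H) c = star V * algebraMap ℝ (H →L[ℂ] H) c * V :=
    fun c => by
      rw [← Algebra.commutes c (star V), mul_assoc, star_eq_adjoint, hV, mul_one]
  refine ⟨hC, ?_⟩
  rw [spectrum_subset_Icc_iff hC, hscal l, hscal r, ← star_eq_adjoint]
  exact ⟨star_left_conjugate_le_conjugate hs'.1 V, star_left_conjugate_le_conjugate hs'.2 V⟩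

open ContinuousLinearMap in
/-- The reflection fixing exactly the span of `e` and the range of `V`. -/
theorem exists_reflection {H : Type*} [NormedAddCommGroup H] [InnerProductSpace ℂ H]
    [CompleteSpace H] {V : H →L[ℂ] H} (hV : adjoint V * V = 1) {e : H} (he : ‖e‖ = 1)
    (hVe : adjoint V e = 0) :
    ∃ U : H →L[ℂ] H, IsSelfAdjoint U ∧ U * U = 1 ∧
      ∀ y, U y = (2 : ℝ) • (V (adjoint V y) + (inner ℂ e y : ℂ) • e) - y := by
  have hVV : ∀ y, adjoint V (V y) = y := fun y => by
    rw [← mul_apply_eq_comp, hV]; rfl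
  set P : H →L[ℂ] H := V * adjoint V + InnerProductSpace.rankOne ℂ e e with hP
  have hPa : ∀ y, P y = V (adjoint V y) + (inner ℂ e y : ℂ) • e := fun y => by simp [hP]
  have hee : (inner ℂ e e : ℂ) = 1 := by
    rw [inner_self_eq_norm_sq_to_K, he]; simp
  have heV : ∀ y, (inner ℂ e (V y) : ℂ) = 0 := fun y => by
    rw [← adjoint_inner_left, hVe, inner_zero_left]
  have hPV : ∀ y, P (V y) = V y := fun y => by rw [hPa, hVV, heV, zero_smul, add_zero]
  have hPe : P e = e := by rw [hPa, hVe, hee, map_zero, one_smul, zero_add]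
  have hPP : P * P = P := by
    ext y
    rw [mul_apply_eq_comp, hPa y, map_add, map_smul, hPV, hPe]
  have hPs : IsSelfAdjoint P := by
    refine IsSelfAdjoint.add ?_ (InnerProductSpace.isPositive_rankOne_self e).isSelfAdjoint
    rw [← star_eq_adjoint]; exact .mul_star_self V
  refine ⟨(2 : ℝ) • P - 1, ((IsSelfAdjoint.all (_ : ℝ)).smul hPs).sub (.one _), ?_, fun y => ?_⟩
  · rw [sub_mul, mul_sub, smul_mul_smul_comm, hPP, one_mul, mul_one]
    module
  · rw [← hPa]; rfl

open ContinuousLinearMap in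
/-- A selfadjoint operator can be pinched to a bordering of its compression by an isometry `V`
along a unit vector `e` orthogonal to the range of `V`. -/
theorem exists_bordered_pinching {H : Type*} [NormedAddCommGroup H] [InnerProductSpace ℂ H]
    [CompleteSpace H] {X V : H →L[ℂ] H} (hX : IsSelfAdjoint X) (hV : adjoint V * V = 1)
    {x e : H} {τ l r : ℝ} (hs : spectrum ℝ X ⊆ Set.Icc l r) (he : ‖e‖ = 1)
    (hVe : adjoint V e = 0) (hXe : adjoint V (X e) = (τ : ℂ) • x) {f : ℝ → ℝ}
    (hf : ContinuousOn f (Set.Icc l r))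
    (hconv : ∀ A B : H →L[ℂ] H, IsSelfAdjoint A → IsSelfAdjoint B →
      spectrum ℝ A ⊆ Set.Icc l r → spectrum ℝ B ⊆ Set.Icc l r →
      cfc f ((1 / 2 : ℝ) • A + (1 / 2 : ℝ) • B) ≤ (1 / 2 : ℝ) • cfc f A + (1 / 2 : ℝ) • cfc f B) :
    ∃ (T : H →L[ℂ] H) (ε : ℝ), IsSelfAdjoint T ∧ spectrum ℝ T ⊆ Set.Icc l r ∧ ε ∈ Set.Icc l r ∧
      (∀ y, T (V y) = V ((adjoint V * X * V) y) + ((τ : ℂ) * inner ℂ x y) • e) ∧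
      T e = (ε : ℂ) • e + (τ : ℂ) • V x ∧
      (inner ℂ (V x) (cfc f T (V x))).re ≤ (inner ℂ (V x) (cfc f X (V x))).re := by
  obtain ⟨U, hU, hUU, hUa⟩ := exists_reflection hV he hVe
  have hVV : ∀ y, adjoint V (V y) = y := fun y => by
    rw [← mul_apply_eq_comp, hV]; rfl
  have hXa : adjoint X = X := hX.star_eq
  have hee : (inner ℂ e e : ℂ) = 1 := by
    rw [inner_self_eq_norm_sq_to_K, he]; simp
  have heV : ∀ y, (inner ℂ e (V y) : ℂ) = 0 := fun y => by
    rw [← adjoint_inner_left, hVe, inner_zero_left]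
  have hUV : ∀ y, U (V y) = V y := fun y => by
    rw [hUa, hVV, heV]; module
  have hUe : U e = e := by rw [hUa, hVe, hee, map_zero]; module
  obtain ⟨hUXU, hsU, -⟩ := cfc_conj_symmetry hX hU hUU hs hf
  have hTa : ∀ y, U y = y → ((1 / 2 : ℝ) • X + (1 / 2 : ℝ) • (U * X * U)) y =
      V (adjoint V (X y)) + (inner ℂ e (X y) : ℂ) • e := fun y hy => by
    rw [add_apply, smul_apply, smul_apply, mul_apply_eq_comp, mul_apply_eq_comp, hy, hUa]
    module
  have hεe : (inner ℂ e (X e) : ℂ) = ((inner ℂ e (X e) : ℂ).re : ℂ) := by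
    refine (Complex.conj_eq_iff_re.1 ?_).symm
    rw [inner_conj_symm, ← adjoint_inner_right, hXa]
  refine ⟨_, (inner ℂ e (X e) : ℂ).re, ((IsSelfAdjoint.all (_ : ℝ)).smul hX).add
      ((IsSelfAdjoint.all (_ : ℝ)).smul hUXU),
    spectrum_midpoint_subset hX hUXU hs hsU, ?_, fun y => ?_, ?_,
    cfc_re_inner_pinching_le hX hU hUU hs hf hconv (hUV x)⟩
  · have hs' := (spectrum_subset_Icc_iff hX).1 hs
    have h1 := ((ContinuousLinearMap.le_def _ _).1 hs'.1).re_inner_nonneg_right e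
    have h2 := ((ContinuousLinearMap.le_def _ _).1 hs'.2).re_inner_nonneg_right e
    rw [Algebra.algebraMap_eq_smul_one, sub_apply, smul_apply, inner_sub_right,
      inner_smul_right_eq_smul, one_apply_eq_self, hee] at h1 h2
    simp only [map_sub, RCLike.re_to_complex, Complex.smul_re, Complex.one_re, smul_eq_mul,
      mul_one, sub_nonneg] at h1 h2
    exact ⟨h1, h2⟩
  · have : (inner ℂ e (X (V y)) : ℂ) = τ * inner ℂ x y := by
      rw [← adjoint_inner_left, hXa, ← adjoint_inner_left, hXe, inner_smul_left,
        Complex.conj_ofReal]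
    rw [hTa _ (hUV y), this]
    rfl
  · rw [hTa _ hUe, hXe, ← hεe, map_smul, add_comm]

theorem cfc_sub_const_mul_sq_re_inner {H : Type*} [NormedAddCommGroup H] [InnerProductSpace ℂ H]
    [CompleteSpace H] {Y : H →L[ℂ] H} (hY : IsSelfAdjoint Y) {f : ℝ → ℝ}
    (hf : ContinuousOn f (spectrum ℝ Y)) (k : ℝ) (v : H) :
    (inner ℂ v (cfc (fun t : ℝ => f t - k * t ^ 2) Y v)).re =
      (inner ℂ v (cfc f Y v)).re - k * ‖Y v‖ ^ 2 := by
  have hYv : (inner ℂ v (Y (Y v)) : ℂ) = (‖Y v‖ : ℂ) ^ 2 := by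
    rw [← ContinuousLinearMap.adjoint_inner_left, ← ContinuousLinearMap.star_eq_adjoint,
      hY.star_eq, inner_self_eq_norm_sq_to_K]
    rfl
  rw [cfc_sub f (fun t : ℝ => k * t ^ 2) Y hf (by fun_prop),
    cfc_const_mul k (fun t : ℝ => t ^ 2) Y (by fun_prop), cfc_pow_id Y 2 hY, sub_apply,
    inner_sub_right, smul_apply, inner_smul_right_eq_smul, sq Y, mul_apply_eq_comp, hYv,
    Complex.sub_re, Complex.smul_re, smul_eq_mul, ← Complex.ofReal_pow, Complex.ofReal_re]

open ContinuousLinearMap in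
/-- The quantitative Jensen gap of a strongly midpoint convex, midpoint operator convex function
under compression by an isometry `V`. -/
theorem cfc_re_inner_compression_add_le {H : Type*} [NormedAddCommGroup H] [InnerProductSpace ℂ H]
    [CompleteSpace H] {X V : H →L[ℂ] H} (hX : IsSelfAdjoint X) (hV : adjoint V * V = 1)
    {x e : H} {τ l r m : ℝ} (hlr : l < r) (hs : spectrum ℝ X ⊆ Set.Icc l r) (he : ‖e‖ = 1)
    (hVe : adjoint V e = 0) (hXe : adjoint V (X e) = (τ : ℂ) • x) {f : ℝ → ℝ}
    (hf : ContinuousOn f (Set.Icc l r))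
    (hconv : ∀ A B : H →L[ℂ] H, IsSelfAdjoint A → IsSelfAdjoint B →
      spectrum ℝ A ⊆ Set.Icc l r → spectrum ℝ B ⊆ Set.Icc l r →
      cfc f ((1 / 2 : ℝ) • A + (1 / 2 : ℝ) • B) ≤ (1 / 2 : ℝ) • cfc f A + (1 / 2 : ℝ) • cfc f B)
    (hm : ∀ c δ : ℝ, c - δ ∈ Set.Icc l r → c + δ ∈ Set.Icc l r →
      2 * f c + m * δ ^ 2 ≤ f (c + δ) + f (c - δ)) :
    (inner ℂ x (cfc f (adjoint V * X * V) x)).re + m / 2 * (τ ^ 2 * ‖x‖ ^ 4) ≤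
      (inner ℂ (V x) (cfc f X (V x))).re := by
  obtain ⟨hC, hsC⟩ := spectrum_compression_subset hX hV hs
  obtain ⟨T, ε, hT, hsT, hεI, hTV, hTe, hle⟩ :=
    exists_bordered_pinching hX hV hs he hVe hXe hf hconv
  generalize adjoint V * X * V = C at *
  have hVV : ∀ y, adjoint V (V y) = y := fun y => by
    rw [← mul_apply_eq_comp, hV]; rfl
  have heV : ∀ y, (inner ℂ (V y) e : ℂ) = 0 := fun y => by
    rw [← adjoint_inner_right, hVe, inner_zero_right]
  have hx2 : ‖T (V x)‖ ^ 2 = ‖C x‖ ^ 2 + τ ^ 2 * ‖x‖ ^ 4 := by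
    have hVn : ‖V (C x)‖ = ‖C x‖ := by
      rw [@norm_eq_sqrt_re_inner ℂ, @norm_eq_sqrt_re_inner ℂ, ← adjoint_inner_right, hVV]
    have hVe0 : (inner ℂ (V (C x)) (((τ : ℂ) * inner ℂ x x) • e) : ℂ) = 0 := by
      rw [inner_smul_right, heV, mul_zero]
    have hpyth := norm_add_sq_eq_norm_sq_add_norm_sq_of_inner_eq_zero _ _ hVe0
    rw [hTV, sq, hpyth, norm_smul, he, norm_mul, Complex.norm_real, inner_self_eq_norm_sq_to_K,
      hVn, norm_pow, RCLike.norm_ofReal, abs_norm, Real.norm_eq_abs, ← sq_abs τ]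
    ring
  have key := cfc_re_inner_le_bordered hlr hT hC hsT hsC hV he hVe hεI hTV hTe
    (g := fun t => f t - m / 2 * t ^ 2) (hf.sub (by fun_prop))
    (fun c δ h1 h2 => by
      have := hm c δ h1 h2
      nlinarith)
  rw [cfc_sub_const_mul_sq_re_inner hC (hf.mono hsC),
    cfc_sub_const_mul_sq_re_inner hT (hf.mono hsT), hx2] at key
  linarith

theorem IsCompact.exists_subset_Icc_of_subset_Ioo {K : Set ℝ} (hK : IsCompact K) {a b : ℝ}
    (hab : a < b) (h : K ⊆ Set.Ioo a b) : ∃ l r, a < l ∧ l < r ∧ r < b ∧ K ⊆ Set.Icc l r := by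
  obtain ⟨c, hac, hcb⟩ := exists_between hab
  obtain ⟨d, hcd, hdb⟩ := exists_between hcb
  have hK' : IsCompact (insert c (insert d K)) := (hK.insert d).insert c
  have hne : (insert c (insert d K)).Nonempty := ⟨c, by simp⟩
  have h' : insert c (insert d K) ⊆ Set.Ioo a b :=
    Set.insert_subset ⟨hac, hcb⟩ (Set.insert_subset ⟨hac.trans hcd, hdb⟩ h)
  obtain ⟨l, hl⟩ := hK'.exists_isLeast hne
  obtain ⟨r, hr⟩ := hK'.exists_isGreatest hne
  refine ⟨l, r, (h' hl.1).1, ?_, (h' hr.1).2, fun t ht => ⟨hl.2 ?_, hr.2 ?_⟩⟩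
  · exact (hl.2 (Set.mem_insert c _)).trans_lt (hcd.trans_le (hr.2 (by simp)))
  · simp [ht]
  · simp [ht]

open ContinuousLinearMap in
/-- Rotating a Cuntz pair turns block-diagonal operators into dilations of convex combinations. -/
theorem exists_rotated_isometries {H : Type*} [NormedAddCommGroup H] [InnerProductSpace ℂ H]
    [CompleteSpace H] {S T : H →L[ℂ] H}
    (hS : adjoint S * S = 1) (hT : adjoint T * T = 1) (hST : adjoint S * T = 0)
    (hTS : adjoint T * S = 0) (h1 : S * adjoint S + T * adjoint T = 1) {α β : ℝ}
    (hαβ : α ^ 2 + β ^ 2 = 1) :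
    ∃ V W : H →L[ℂ] H, adjoint V * V = 1 ∧ adjoint W * W = 1 ∧ adjoint V * W = 0 ∧
      (∀ Y Z, adjoint V * cuntzSum hS hT hST hTS h1 (Y, Z) * V = α ^ 2 • Y + β ^ 2 • Z) ∧
      ∀ Y Z, adjoint V * cuntzSum hS hT hST hTS h1 (Y, Z) * W = (α * β) • (Y - Z) := by
  have hSS : ∀ Y, adjoint S * (S * Y) = Y := fun Y => by rw [← mul_assoc, hS, one_mul]
  have hTT : ∀ Y, adjoint T * (T * Y) = Y := fun Y => by rw [← mul_assoc, hT, one_mul]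
  have hST' : ∀ Y, adjoint S * (T * Y) = 0 := fun Y => by rw [← mul_assoc, hST, zero_mul]
  have hTS' : ∀ Y, adjoint T * (S * Y) = 0 := fun Y => by rw [← mul_assoc, hTS, zero_mul]
  have hV : adjoint (α • S + β • T) = α • adjoint S + β • adjoint T := by
    rw [← star_eq_adjoint, star_add, star_smul, star_smul, star_trivial α, star_trivial β,
      star_eq_adjoint, star_eq_adjoint]
  have hW : adjoint (β • S - α • T) = β • adjoint S - α • adjoint T := by
    rw [← star_eq_adjoint, star_sub, star_smul, star_smul, star_trivial α, star_trivial β,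
      star_eq_adjoint, star_eq_adjoint]
  refine ⟨α • S + β • T, β • S - α • T, ?_, ?_, ?_, fun Y Z => ?_, fun Y Z => ?_⟩
  · rw [hV]
    simp only [add_mul, mul_add, smul_mul_smul_comm, hS, hT, hST, hTS]
    linear_combination (norm := module) hαβ • (1 : H →L[ℂ] H)
  · rw [hW]
    simp only [sub_mul, mul_sub, smul_mul_smul_comm, hS, hT, hST, hTS]
    linear_combination (norm := module) hαβ • (1 : H →L[ℂ] H)
  · rw [hV]
    simp only [add_mul, mul_sub, smul_mul_smul_comm, hS, hT, hST, hTS]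
    module
  · rw [hV, cuntzSum_apply]
    simp only [add_mul, mul_add, smul_mul_assoc, mul_smul_comm, mul_assoc, hS, hT, hST, hTS, hSS,
      hTT, hST', hTS', mul_zero, zero_mul, mul_one]
    module
  · rw [hV, cuntzSum_apply]
    simp only [add_mul, mul_add, mul_sub, smul_mul_assoc, mul_smul_comm, mul_assoc, hS, hT, hST,
      hTS, hSS, hTT, hST', hTS', mul_zero, zero_mul, mul_one]
    module

open ContinuousLinearMap in
/-- The Jensen gap of a strongly midpoint convex, midpoint operator convex function at a pair of
operators with invertible difference is bounded below. -/
theorem jensen_gap_re_inner_ge {H : Type*} [NormedAddCommGroup H] [InnerProductSpace ℂ H]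
    [CompleteSpace H] (hinf : ¬ FiniteDimensional ℂ H) {l r m : ℝ} (hlr : l < r) (hm0 : 0 ≤ m)
    {f : ℝ → ℝ} (hf : ContinuousOn f (Set.Icc l r))
    (hconv : ∀ A B : H →L[ℂ] H, IsSelfAdjoint A → IsSelfAdjoint B →
      spectrum ℝ A ⊆ Set.Icc l r → spectrum ℝ B ⊆ Set.Icc l r →
      cfc f ((1 / 2 : ℝ) • A + (1 / 2 : ℝ) • B) ≤ (1 / 2 : ℝ) • cfc f A + (1 / 2 : ℝ) • cfc f B)
    (hm : ∀ c δ : ℝ, c - δ ∈ Set.Icc l r → c + δ ∈ Set.Icc l r →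
      2 * f c + m * δ ^ 2 ≤ f (c + δ) + f (c - δ)) {s : ℝ} (hs : s ∈ Set.Ioo (0 : ℝ) 1)
    {A B : H →L[ℂ] H} (hA : IsSelfAdjoint A) (hB : IsSelfAdjoint B)
    (hsA : spectrum ℝ A ⊆ Set.Icc l r) (hsB : spectrum ℝ B ⊆ Set.Icc l r) {R : H →L[ℂ] H}
    (hR : (A - B) * R = 1) (x : H) :
    m / 2 * (s * (1 - s)) / (‖R‖ + 1) ^ 2 * ‖x‖ ^ 2 ≤
      (inner ℂ x ((s • cfc f A + (1 - s) • cfc f B - cfc f (s • A + (1 - s) • B)) x)).re := by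
  obtain rfl | hx := eq_or_ne x 0
  · simp
  obtain ⟨S, T, hS, hT, hST, hTS, h1⟩ := exists_cuntz_pair hinf
  have h0s : 0 ≤ s := hs.1.le
  have h0s' : 0 ≤ 1 - s := by linarith [hs.2]
  obtain ⟨V, W, hV, hW, hVW, hVV, hVW'⟩ := exists_rotated_isometries hS hT hST hTS h1
    (α := √s) (β := √(1 - s)) (by rw [Real.sq_sqrt h0s, Real.sq_sqrt h0s']; ring)
  simp only [Real.sq_sqrt h0s, Real.sq_sqrt h0s'] at hVV
  have hX : IsSelfAdjoint (cuntzSum hS hT hST hTS h1 (A, B)) :=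
    IsSelfAdjoint.map (x := (A, B)) (by ext1 <;> simp [hA.star_eq, hB.star_eq]) _
  have hsX : spectrum ℝ (cuntzSum hS hT hST hTS h1 (A, B)) ⊆ Set.Icc l r := by
    refine (AlgHom.spectrum_apply_subset _ _).trans ?_
    rw [Prod.spectrum_eq]
    exact Set.union_subset hsA hsB
  have hRx : (A - B) (R x) = x := by rw [← mul_apply_eq_comp, hR]; rfl
  have hRx0 : R x ≠ 0 := fun h => hx (by rw [← hRx, h, map_zero])
  have hn : 0 < ‖R x‖ := norm_pos_iff.2 hRx0
  have hWn : ∀ y, ‖W y‖ = ‖y‖ := fun y => by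
    rw [@norm_eq_sqrt_re_inner ℂ, @norm_eq_sqrt_re_inner ℂ, ← adjoint_inner_right,
      ← mul_apply_eq_comp, hW]
    rfl
  have key := cfc_re_inner_compression_add_le hX hV (x := x)
    (e := ((‖R x‖⁻¹ : ℝ) : ℂ) • W (R x)) (τ := √s * √(1 - s) * ‖R x‖⁻¹) hlr hsX ?_ ?_ ?_ hf hconv hm
  · rw [cfc_cuntzSum hS hT hST hTS h1 hA hB (hf.mono (Set.union_subset hsA hsB)),
      ← adjoint_inner_right, ← mul_apply_eq_comp, ← mul_apply_eq_comp, ← mul_assoc, hVV, hVV] at key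
    rw [sub_apply, inner_sub_right, Complex.sub_re]
    have hle : ‖R x‖ ≤ (‖R‖ + 1) * ‖x‖ :=
      (R.le_opNorm x).trans (by gcongr; linarith)
    have hτ : (√s * √(1 - s) * ‖R x‖⁻¹) ^ 2 = s * (1 - s) / ‖R x‖ ^ 2 := by
      rw [mul_pow, mul_pow, Real.sq_sqrt h0s, Real.sq_sqrt h0s', inv_pow]; rfl
    rw [hτ] at key
    have hxn : 0 < ‖x‖ := norm_pos_iff.2 hx
    have hbound : m / 2 * (s * (1 - s)) / (‖R‖ + 1) ^ 2 * ‖x‖ ^ 2 ≤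
        m / 2 * (s * (1 - s) / ‖R x‖ ^ 2 * ‖x‖ ^ 4) :=
      calc m / 2 * (s * (1 - s)) / (‖R‖ + 1) ^ 2 * ‖x‖ ^ 2
          = m / 2 * (s * (1 - s)) * ‖x‖ ^ 4 / ((‖R‖ + 1) * ‖x‖) ^ 2 := by
            field_simp
        _ ≤ m / 2 * (s * (1 - s)) * ‖x‖ ^ 4 / ‖R x‖ ^ 2 := by gcongr
        _ = _ := by ring
    linarith
  · rw [norm_smul, hWn, Complex.norm_real, norm_inv, norm_norm, inv_mul_cancel₀ hn.ne']
  · rw [map_smul, ← mul_apply_eq_comp, hVW]; simp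
  · rw [map_smul, map_smul, ← mul_apply_eq_comp, ← mul_apply_eq_comp, hVW', smul_apply,
      hRx, ← Complex.coe_smul, smul_smul]
    push_cast
    ring_nf

/-- any nonlinear operator convex function on a bounded interval `(a, b)`
is strictly operator convex on `(a, b)` (operators on an infinite-dimensional complex
Hilbert space). -/
theorem stmt3 {H : Type*} [NormedAddCommGroup H] [InnerProductSpace ℂ H] [CompleteSpace H]
    (hinf : ¬ FiniteDimensional ℂ H) (a b : ℝ) (hab : a < b)
    (f : ℝ → ℝ) (hf : ContinuousOn f (Set.Ioo a b))
    (hconv : ∀ s : ℝ, s ∈ Set.Icc (0 : ℝ) 1 → ∀ A B : H →L[ℂ] H,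
      IsSelfAdjoint A → IsSelfAdjoint B →
      spectrum ℝ A ⊆ Set.Ioo a b → spectrum ℝ B ⊆ Set.Ioo a b →
      cfc f (s • A + (1 - s) • B) ≤ s • cfc f A + (1 - s) • cfc f B)
    (hnonlin : ¬ ∃ α β : ℝ, ∀ x ∈ Set.Ioo a b, f x = α * x + β) :
    ∀ s : ℝ, s ∈ Set.Ioo (0 : ℝ) 1 → ∀ A B : H →L[ℂ] H,
      IsSelfAdjoint A → IsSelfAdjoint B →
      spectrum ℝ A ⊆ Set.Ioo a b → spectrum ℝ B ⊆ Set.Ioo a b → IsUnit (A - B) →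
      0 ≤ s • cfc f A + (1 - s) • cfc f B - cfc f (s • A + (1 - s) • B) ∧
      IsUnit (s • cfc f A + (1 - s) • cfc f B - cfc f (s • A + (1 - s) • B)) := by
  intro s hs A B hA hB hsA hsB hAB
  have : Nontrivial H := by
    by_contra h
    rw [not_nontrivial_iff_subsingleton] at h
    exact hinf inferInstance
  have hmid : ∀ A B : H →L[ℂ] H, IsSelfAdjoint A → IsSelfAdjoint B →
      spectrum ℝ A ⊆ Set.Ioo a b → spectrum ℝ B ⊆ Set.Ioo a b →
      cfc f ((1 / 2 : ℝ) • A + (1 / 2 : ℝ) • B) ≤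
        (1 / 2 : ℝ) • cfc f A + (1 / 2 : ℝ) • cfc f B := fun A B hA hB hsA hsB => by
    have := hconv (1 / 2) (by norm_num) A B hA hB hsA hsB
    rwa [show (1 - 1 / 2 : ℝ) = 1 / 2 by norm_num] at this
  obtain ⟨l, r, hal, hlr, hrb, hK⟩ := IsCompact.exists_subset_Icc_of_subset_Ioo
    ((ContinuousFunctionalCalculus.isCompact_spectrum (R := ℝ) A).union
      (ContinuousFunctionalCalculus.isCompact_spectrum (R := ℝ) B)) hab (Set.union_subset hsA hsB)
  obtain ⟨hsA', hsB'⟩ := Set.union_subset_iff.1 hK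
  have hIcc : Set.Icc l r ⊆ Set.Ioo a b := Set.Icc_subset_Ioo hal hrb
  obtain ⟨m, hm0, hm⟩ := exists_strong_midpoint_convex hinf hf (convexOn_of_operator_convex hconv)
    hmid hnonlin hal hlr hrb
  obtain ⟨R, hR⟩ := hAB.exists_right_inv
  have hgap := jensen_gap_re_inner_ge hinf hlr hm0.le (hf.mono hIcc)
    (fun A B hA hB hsA hsB => hmid A B hA hB (hsA.trans hIcc) (hsB.trans hIcc)) hm hs hA hB
    hsA' hsB' hR
  set D := s • cfc f A + (1 - s) • cfc f B - cfc f (s • A + (1 - s) • B) with hD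
  refine ⟨sub_nonneg.2 (hconv s ⟨hs.1.le, hs.2.le⟩ A B hA hB hsA hsB), ?_⟩
  have hs' : 0 < 1 - s := sub_pos.2 hs.2
  have hs0 : 0 < s := hs.1
  have hc : 0 < m / 2 * (s * (1 - s)) / (‖R‖ + 1) ^ 2 := by positivity
  refine ContinuousLinearMap.isUnit_of_forall_le_norm_inner_map D (c := ⟨_, hc.le⟩) hc fun x => ?_
  rw [norm_inner_symm, mul_comm]
  exact (hgap x).trans ((Complex.re_le_norm _))
end

section
/- Let H be an infinite-dimensional complex Hilbert space and let f : [0,∞) → ℝ be a non-constant continuous function that is operator monotone on [0,∞), i.e., for all selfadjoint A, B ∈ B(H) with spectra in [0,∞), A ≤ B implies f(A) ≤ f(B). If A and B are positive bounded linear operators on H with A ≥ B and A − B invertible, and m = ‖(A−B)⁻¹‖⁻¹, then f(A) − f(B) ≥ (f(‖B‖ + m) − f(‖B‖))·I and f(‖B‖ + m) − f(‖B‖) > 0. In particular f(A) > f(B). -/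
section CStarAlgebra

variable {𝒜 : Type*} [CStarAlgebra 𝒜]

/-- A function of a real combination of two complementary projections is the corresponding
combination of its values. -/
theorem IsStarProjection.cfc_smul_add_smul {f : ℝ → ℝ} {p : 𝒜} (hp : IsStarProjection p)
    (a b : ℝ) : cfc f (a • p + b • (1 - p)) = f a • p + f b • (1 - p) := by
  have hsa : IsSelfAdjoint p := hp.isSelfAdjoint
  have affine (c d : ℝ) : cfc (fun t : ℝ ↦ c * t + d * (1 - t)) p = c • p + d • (1 - p) := by
    rw [cfc_add .., cfc_const_mul .., cfc_const_mul .., cfc_sub .., cfc_id' ℝ p, cfc_const_one ℝ p]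
  have hspec := hp.isIdempotentElem.spectrum_subset ℝ
  rw [← affine a b, ← affine (f a) (f b)]
  have hfin : (spectrum ℝ p).Finite := (Set.toFinite {0, 1}).subset hspec
  rw [← cfc_comp' f (fun t : ℝ ↦ a * t + b * (1 - t)) p
    ((hfin.image _).continuousOn _)]
  refine cfc_congr fun t ht ↦ ?_
  rcases hspec ht with rfl | rfl <;> simp

theorem IsStarProjection.mul_mul_smul_add_smul {p r : 𝒜} (hp : IsStarProjection p) {w : ℝ}
    (hprp : p * r * p = w • p) (a b : ℝ) :
    p * (a • r + b • (1 - r)) * p = (w * a + (1 - w) * b) • p := by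
  simp only [mul_add, mul_sub, add_mul, sub_mul, mul_smul_comm, smul_mul_assoc, mul_one, hprp,
    hp.isIdempotentElem.eq]
  module

variable [PartialOrder 𝒜] [StarOrderedRing 𝒜]

/-- A positive element is dominated by a block diagonal one with slightly enlarged corner. -/
theorem IsStarProjection.le_smul_add_smul_of_mul_mul_eq {p x : 𝒜} (hp : IsStarProjection p)
    (hx : 0 ≤ x) {s η : ℝ} (hη : 0 < η) (hpx : p * x * p = s • p) {M : ℝ}
    (hM : (1 + η⁻¹) * ‖x‖ ≤ M) : x ≤ ((1 + η) * s) • p + M • (1 - p) := by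
  have hsa : IsSelfAdjoint p := hp.isSelfAdjoint
  have hq : IsStarProjection (1 - p) := hp.one_sub
  have hcross : 0 ≤ (η • p - (1 - p)) * x * (η • p - (1 - p)) :=
    IsSelfAdjoint.conjugate_nonneg hx (((IsSelfAdjoint.all η).smul hsa).sub hq.isSelfAdjoint)
  have hcross' : 0 ≤ η⁻¹ • ((η • p - (1 - p)) * x * (η • p - (1 - p))) :=
    smul_nonneg (inv_nonneg.2 hη.le) hcross
  have hcorner : (1 - p) * x * (1 - p) ≤ ‖x‖ • (1 - p) := by
    have h := hq.isSelfAdjoint.conjugate_le_conjugate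
      (IsSelfAdjoint.le_algebraMap_norm_self (IsSelfAdjoint.of_nonneg hx))
    rwa [Algebra.algebraMap_eq_smul_one, mul_smul_comm, mul_one, smul_mul_assoc,
      hq.isIdempotentElem.eq] at h
  calc x ≤ x + η⁻¹ • ((η • p - (1 - p)) * x * (η • p - (1 - p))) := le_add_of_nonneg_right hcross'
    _ = (1 + η) • (p * x * p) + (1 + η⁻¹) • ((1 - p) * x * (1 - p)) := by
      have hxq : x = p * x * p + p * x * (1 - p) + (1 - p) * x * p + (1 - p) * x * (1 - p) := by
        noncomm_ring
      generalize 1 - p = q at *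
      nth_rewrite 1 [hxq]
      simp only [sub_mul, mul_sub, smul_mul_assoc, mul_smul_comm, smul_sub, smul_smul]
      simp only [inv_mul_cancel₀ hη.ne', one_smul, add_smul, ← mul_assoc, one_mul]
      abel
    _ ≤ (1 + η) • (s • p) + (1 + η⁻¹) • (‖x‖ • (1 - p)) := by
      rw [hpx]
      gcongr
    _ ≤ ((1 + η) * s) • p + M • (1 - p) := by
      rw [smul_smul, smul_smul]
      have := hq.nonneg
      gcongr

theorem nonneg_of_smul_nonneg_of_pos {p : 𝒜} (hp : 0 ≤ p) (hp0 : p ≠ 0) {c : ℝ}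
    (h : 0 ≤ c • p) : 0 ≤ c := by
  by_contra! hc
  have h' : c • p ≤ 0 := smul_nonpos_of_nonpos_of_nonneg hc.le hp
  exact (smul_ne_zero hc.ne hp0) (le_antisymm h' h)

/-- If `p r p = w p`, then monotonicity of `f` on positive elements compares `f` of a combination
of `r`, `1 - r` with a combination of `p`, `1 - p`. -/
theorem exists_smul_add_smul_le_of_monotoneOn_cfc {f : ℝ → ℝ}
    (hf : MonotoneOn (cfc f : 𝒜 → 𝒜) (Set.Ici 0))
    {p r : 𝒜} (hp : IsStarProjection p) (hr : IsStarProjection r) {w : ℝ}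
    (hprp : p * r * p = w • p) {a b η : ℝ} (ha : 0 ≤ a) (hb : 0 ≤ b) (hη : 0 < η) (c : ℝ) :
    ∃ M, c ≤ M ∧ f a • r + f b • (1 - r) ≤
      f ((1 + η) * (w * a + (1 - w) * b)) • p + f M • (1 - p) := by
  have hx : 0 ≤ a • r + b • (1 - r) :=
    add_nonneg (smul_nonneg ha hr.nonneg) (smul_nonneg hb hr.one_sub.nonneg)
  set M := max c ((1 + η⁻¹) * ‖a • r + b • (1 - r)‖)
  have hle := hp.le_smul_add_smul_of_mul_mul_eq hx hη (hp.mul_mul_smul_add_smul hprp a b)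
    (le_max_right c _)
  refine ⟨M, le_max_left _ _, ?_⟩
  rw [← hr.cfc_smul_add_smul, ← hp.cfc_smul_add_smul]
  exact hf hx (hx.trans hle) hle

open Filter Topology in
theorem concaveOn_of_monotoneOn_cfc {f : ℝ → ℝ} (hfc : ContinuousOn f (Set.Ici 0))
    (hf : MonotoneOn (cfc f : 𝒜 → 𝒜) (Set.Ici 0))
    (hproj : ∀ w ∈ Set.Icc (0 : ℝ) 1, ∃ p r : 𝒜, IsStarProjection p ∧ IsStarProjection r ∧
      p ≠ 0 ∧ p * r * p = w • p) :
    ConcaveOn ℝ (Set.Ici 0) f := by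
  refine ⟨convex_Ici 0, fun a ha b hb u v hu hv huv ↦ ?_⟩
  obtain rfl : v = 1 - u := by linarith
  have hu1 : u ∈ Set.Icc (0 : ℝ) 1 := ⟨hu, by linarith⟩
  obtain ⟨p, r, hp, hr, hp0, hprp⟩ := hproj u hu1
  simp only [smul_eq_mul, Set.mem_Ici] at *
  have hs : 0 ≤ u * a + (1 - u) * b := by positivity
  have hlim : Tendsto (fun η : ℝ ↦ (1 + η) * (u * a + (1 - u) * b)) (𝓝[>] 0)
      (𝓝[Set.Ici 0] (u * a + (1 - u) * b)) := by
    refine tendsto_nhdsWithin_iff.2 ⟨tendsto_nhdsWithin_of_tendsto_nhds ?_, ?_⟩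
    · exact Continuous.tendsto' (by fun_prop) _ _ (by ring)
    · filter_upwards [self_mem_nhdsWithin] with η hη
      have : (0 : ℝ) < η := hη
      simp only [Set.mem_Ici]
      positivity
  refine ge_of_tendsto ((hfc _ hs).tendsto.comp hlim) ?_
  filter_upwards [self_mem_nhdsWithin] with η hη
  obtain ⟨M, -, hM⟩ := exists_smul_add_smul_le_of_monotoneOn_cfc hf hp hr hprp ha hb hη 0
  have h := hp.isSelfAdjoint.conjugate_le_conjugate hM
  have hpp : p * p * p = (1 : ℝ) • p := by simp [hp.isIdempotentElem.eq]
  rw [hp.mul_mul_smul_add_smul hprp, hp.mul_mul_smul_add_smul hpp, ← sub_nonneg, ← sub_smul] at h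
  have := nonneg_of_smul_nonneg_of_pos hp.nonneg hp0 h
  simp only [Function.comp_apply]
  linarith

theorem monotoneOn_of_monotoneOn_cfc [Nontrivial 𝒜] {f : ℝ → ℝ}
    (hf : MonotoneOn (cfc f : 𝒜 → 𝒜) (Set.Ici 0)) : MonotoneOn f (Set.Ici 0) := by
  intro a ha b hb hab
  have h := hf (a := algebraMap ℝ 𝒜 a) (b := algebraMap ℝ 𝒜 b) (algebraMap_nonneg 𝒜 ha)
    (algebraMap_nonneg 𝒜 hb) (algebraMap_mono 𝒜 hab)
  rwa [cfc_algebraMap, cfc_algebraMap, algebraMap_le_algebraMap] at h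

open Filter Topology in
/-- An operator monotone function that is constant near infinity is constant. -/
theorem eq_of_monotoneOn_cfc_of_eventually_const [Nontrivial 𝒜] {f : ℝ → ℝ}
    (hfc : ContinuousOn f (Set.Ici 0))
    (hf : MonotoneOn (cfc f : 𝒜 → 𝒜) (Set.Ici 0))
    (hproj : ∀ w ∈ Set.Icc (0 : ℝ) 1, ∃ p r : 𝒜, IsStarProjection p ∧ IsStarProjection r ∧
      p ≠ 0 ∧ p * r * p = w • p)
    {b K : ℝ} (hb : 0 ≤ b) (hK : ∀ y, b ≤ y → f y = K) {a : ℝ} (ha : 0 ≤ a) : f a = K := by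
  by_contra hne
  have hab : a ≤ b := by
    by_contra! h
    exact hne (hK a h.le)
  have hlt : f a < K := lt_of_le_of_ne
    ((monotoneOn_of_monotoneOn_cfc hf ha hb hab).trans_eq (hK b le_rfl)) hne
  have hlim : Tendsto (fun η : ℝ ↦ (1 + η) * ((1 - η) * a + (1 - (1 - η)) * b)) (𝓝[>] 0)
      (𝓝[Set.Ici 0] a) := by
    refine tendsto_nhdsWithin_iff.2 ⟨tendsto_nhdsWithin_of_tendsto_nhds ?_, ?_⟩
    · exact Continuous.tendsto' (by fun_prop) _ _ (by ring)
    · filter_upwards [Ioo_mem_nhdsGT one_pos] with η hη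
      have h0 := hη.1
      have h1 : 0 ≤ 1 - η := by linarith [hη.2]
      have h2 : 0 ≤ 1 - (1 - η) := by linarith
      simp only [Set.mem_Ici]
      positivity
  have hev := ((hfc a ha).tendsto.comp hlim).eventually_lt_const hlt
  obtain ⟨η, hη, hη01⟩ := (hev.and (Ioo_mem_nhdsGT one_pos)).exists
  obtain ⟨p, r, hp, hr, hp0, hprp⟩ := hproj (1 - η) ⟨by linarith [hη01.2], by linarith [hη01.1]⟩
  obtain ⟨M, hbM, hM⟩ := exists_smul_add_smul_le_of_monotoneOn_cfc hf hp hr hprp ha hb hη01.1 b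
  simp only [Function.comp_apply] at hη
  rw [hK b le_rfl, hK M hbM] at hM
  set s := (1 + η) * ((1 - η) * a + (1 - (1 - η)) * b)
  have hrq : r * (1 - r) = 0 := by rw [mul_sub, mul_one, hr.isIdempotentElem.eq, sub_self]
  have h := hr.one_sub.isSelfAdjoint.conjugate_le_conjugate hM
  have hqrq : (1 - r) * r * (1 - r) = (0 : ℝ) • (1 - r) := by rw [mul_assoc, hrq]; simp
  have hle : 0 ≤ (f s - K) • ((1 - r) * p * (1 - r)) := by
    rw [hr.one_sub.mul_mul_smul_add_smul hqrq, ← sub_nonneg] at h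
    convert h using 1
    simp only [mul_add, mul_sub, add_mul, sub_mul, mul_smul_comm, smul_mul_assoc, mul_one,
      one_mul, hr.isIdempotentElem.eq]
    module
  have hnn : 0 ≤ (1 - r) * p * (1 - r) :=
    hr.one_sub.isSelfAdjoint.conjugate_nonneg hp.nonneg
  have hzero : (1 - r) * p * (1 - r) = 0 := by
    by_contra h0
    linarith [nonneg_of_smul_nonneg_of_pos hnn h0 hle]
  have hpr : p * (1 - r) = 0 := by
    rw [← CStarRing.star_mul_self_eq_zero_iff, star_mul, hr.one_sub.isSelfAdjoint.star_eq,
      hp.isSelfAdjoint.star_eq, mul_assoc, ← mul_assoc p, hp.isIdempotentElem.eq, ← mul_assoc, hzero]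
  have hp' : p = (1 - η) • p := by
    rw [← hprp, mul_assoc]
    have : p = p * r := by rwa [mul_sub, mul_one, sub_eq_zero] at hpr
    rw [← mul_assoc, ← this, hp.isIdempotentElem.eq]
  have : η • p = 0 := by
    rw [sub_smul, one_smul] at hp'
    exact sub_eq_self.1 hp'.symm
  exact (smul_ne_zero hη01.1.ne' hp0) this

/-- A positive invertible element is bounded below by the reciprocal of the norm of its inverse. -/
theorem inv_norm_inverse_smul_one_le {a : 𝒜} (ha : 0 ≤ a) (hu : IsUnit a) :
    ‖Ring.inverse a‖⁻¹ • (1 : 𝒜) ≤ a := by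
  nontriviality 𝒜
  lift a to 𝒜ˣ using hu
  rw [Ring.inverse_unit]
  have hpos : 0 < ‖(↑a⁻¹ : 𝒜)‖ := norm_pos_iff.2 a⁻¹.ne_zero
  have hinv : (0 : 𝒜) ≤ ↑a⁻¹ := CFC.inv_nonneg_of_nonneg a ha
  have h := IsSelfAdjoint.le_algebraMap_norm_self (IsSelfAdjoint.of_nonneg hinv)
  let b : 𝒜ˣ := Units.map (algebraMap ℝ 𝒜 : ℝ →* 𝒜) (Units.mk0 _ hpos.ne')
  have hb : (0 : 𝒜) ≤ b := algebraMap_nonneg 𝒜 hpos.le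
  have h' : (↑b⁻¹ : 𝒜) ≤ a := (CStarAlgebra.inv_le_iff ha hb).1 h
  have hbinv : (↑b⁻¹ : 𝒜) = algebraMap ℝ 𝒜 ‖(↑a⁻¹ : 𝒜)‖⁻¹ := rfl
  rwa [hbinv, Algebra.algebraMap_eq_smul_one] at h'

theorem cfc_add_smul_one {f : ℝ → ℝ} (hfc : ContinuousOn f (Set.Ici 0)) {a : 𝒜} (ha : 0 ≤ a)
    {m : ℝ} (hm : 0 ≤ m) : cfc f (a + m • 1) = cfc (fun t ↦ f (t + m)) a := by
  have hsa := IsSelfAdjoint.of_nonneg ha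
  have hadd : cfc (fun t : ℝ ↦ t + m) a = a + m • 1 := by
    rw [cfc_add_const .., cfc_id' ℝ a, Algebra.algebraMap_eq_smul_one]
  have hfc' : ContinuousOn f ((fun t : ℝ ↦ t + m) '' spectrum ℝ a) := by
    refine hfc.mono ?_
    rintro _ ⟨t, ht, rfl⟩
    exact add_nonneg (spectrum_nonneg_of_nonneg ha ht) hm
  rw [← hadd, ← cfc_comp' f (fun t : ℝ ↦ t + m) a]

end CStarAlgebra

theorem ConcaveOn.sub_le_sub_of_le {f : ℝ → ℝ} {s : Set ℝ} (hf : ConcaveOn ℝ s f) {t n m : ℝ}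
    (ht : t ∈ s) (hn : n + m ∈ s) (htn : t ≤ n) (hm : 0 < m) :
    f (n + m) - f n ≤ f (t + m) - f t := by
  have hd : 0 < n - t + m := by linarith
  have hθ : m / (n - t + m) + (n - t) / (n - t + m) = 1 := by field_simp; ring
  have h0 : 0 ≤ m / (n - t + m) := by positivity
  have h1 : 0 ≤ (n - t) / (n - t + m) := div_nonneg (by linarith) hd.le
  have e1 := hf.2 ht hn h0 h1 hθ
  have e2 := hf.2 ht hn h1 h0 (by linarith)
  have l1 : (m / (n - t + m)) • t + ((n - t) / (n - t + m)) • (n + m) = n := by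
    simp only [smul_eq_mul]; field_simp; ring
  have l2 : ((n - t) / (n - t + m)) • t + (m / (n - t + m)) • (n + m) = t + m := by
    simp only [smul_eq_mul]; field_simp; ring
  rw [l1] at e1
  rw [l2] at e2
  simp only [smul_eq_mul] at e1 e2
  linear_combination e1 + e2 - (f t + f (n + m)) * hθ

theorem ConcaveOn.eq_of_eq_of_monotoneOn {f : ℝ → ℝ} {s : Set ℝ} (hf : ConcaveOn ℝ s f)
    (hmono : MonotoneOn f s) {x y z : ℝ} (hx : x ∈ s) (hy : y ∈ s) (hz : z ∈ s) (hxy : x < y) (hxz : x ≤ z)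
    (h : f y ≤ f x) : f z = f x := by
  refine le_antisymm ?_ (hmono hx hz hxz)
  rcases le_or_gt z y with hzy | hyz
  · exact (hmono hz hy hzy).trans h
  · have := hf.slope_anti_adjacent hx hz hxy hyz
    rw [div_le_div_iff₀ (by linarith) (by linarith)] at this
    nlinarith

theorem exists_norm_eq_one_inner_eq_zero {𝕜 H : Type*} [RCLike 𝕜] [NormedAddCommGroup H]
    [InnerProductSpace 𝕜 H] (hinf : ¬ FiniteDimensional 𝕜 H) :
    ∃ x y : H, ‖x‖ = 1 ∧ ‖y‖ = 1 ∧ inner 𝕜 x y = 0 := by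
  have : Nontrivial H := by
    by_contra h
    rw [not_nontrivial_iff_subsingleton] at h
    exact hinf inferInstance
  obtain ⟨u, hu⟩ := exists_ne (0 : H)
  have hbot : (𝕜 ∙ u)ᗮ ≠ ⊥ := by
    intro h
    rw [Submodule.orthogonal_eq_bot_iff] at h
    exact hinf (.of_fg_top (h ▸ Submodule.fg_span_singleton u))
  obtain ⟨v, hv, hv0⟩ := Submodule.exists_mem_ne_zero_of_ne_bot hbot
  refine ⟨((‖u‖⁻¹ : ℝ) : 𝕜) • u, ((‖v‖⁻¹ : ℝ) : 𝕜) • v, ?_, ?_, ?_⟩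
  · simp [norm_smul, hu]
  · simp [norm_smul, hv0]
  · rw [inner_smul_left, inner_smul_right, Submodule.mem_orthogonal_singleton_iff_inner_right.1 hv]
    simp

open InnerProductSpace in
theorem exists_isStarProjection_mul_mul_eq_smul {H : Type*} [NormedAddCommGroup H]
    [InnerProductSpace ℂ H] [CompleteSpace H] (hinf : ¬ FiniteDimensional ℂ H) {w : ℝ}
    (hw : w ∈ Set.Icc (0 : ℝ) 1) :
    ∃ p r : H →L[ℂ] H, IsStarProjection p ∧ IsStarProjection r ∧ p ≠ 0 ∧ p * r * p = w • p := by
  obtain ⟨x, y, hx, hy, hxy⟩ := exists_norm_eq_one_inner_eq_zero hinf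
  set v : H := ((√w : ℝ) : ℂ) • x + ((√(1 - w) : ℝ) : ℂ) • y with hv_def
  have hxv : inner ℂ x v = ((√w : ℝ) : ℂ) := by
    rw [hv_def, inner_add_right, inner_smul_right, inner_smul_right, hxy,
      inner_self_eq_norm_sq_to_K, hx]
    simp
  have hvx : inner ℂ v x = ((√w : ℝ) : ℂ) := by
    rw [← inner_conj_symm, hxv, Complex.conj_ofReal]
  have hv : ‖v‖ = 1 := by
    have h := norm_add_sq_eq_norm_sq_add_norm_sq_of_inner_eq_zero (𝕜 := ℂ)
      (((√w : ℝ) : ℂ) • x) (((√(1 - w) : ℝ) : ℂ) • y)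
      (by rw [inner_smul_left, inner_smul_right, hxy]; simp)
    rw [← hv_def, norm_smul, norm_smul, hx, hy, mul_one, mul_one, Complex.norm_real,
      Complex.norm_real, ← pow_two, ← pow_two, ← pow_two, Real.norm_eq_abs, Real.norm_eq_abs,
      sq_abs, sq_abs, Real.sq_sqrt hw.1, Real.sq_sqrt (sub_nonneg.2 hw.2),
      add_sub_cancel] at h
    exact (pow_eq_one_iff_of_nonneg (norm_nonneg v) two_ne_zero).1 h
  refine ⟨rankOne ℂ x x, rankOne ℂ v v, isStarProjection_rankOne_self hx,
    isStarProjection_rankOne_self hv, ?_, ?_⟩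
  · have h : x ≠ 0 := norm_ne_zero_iff.1 (by simp [hx])
    exact rankOne_ne_zero h h
  · ext z
    have hw' : ((√w : ℝ) : ℂ) * ((√w : ℝ) : ℂ) = (w : ℂ) := by
      rw [← Complex.ofReal_mul, Real.mul_self_sqrt hw.1]
    simp only [mul_apply_eq_comp, rankOne_apply, map_smul, hvx, hxv, smul_smul,
      smul_apply, mul_assoc, hw']
    rw [mul_comm, mul_smul, Complex.coe_smul]

/-- Theorem B: if `f` is a non-constant operator monotone function on
`[0, ∞)` (for operators on an infinite-dimensional complex Hilbert space), `A ≥ B ≥ 0`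
with `A - B` invertible and `m = ‖(A-B)⁻¹‖⁻¹`, then
`f(A) - f(B) ≥ (f(‖B‖+m) - f(‖B‖)) • I` with `f(‖B‖+m) - f(‖B‖) > 0`;
in particular `f(A) > f(B)`. -/
theorem stmt6 {H : Type*} [NormedAddCommGroup H] [InnerProductSpace ℂ H] [CompleteSpace H]
    (hinf : ¬ FiniteDimensional ℂ H)
    (f : ℝ → ℝ) (hf : ContinuousOn f (Set.Ici (0 : ℝ)))
    (hmono : ∀ A B : H →L[ℂ] H, IsSelfAdjoint A → IsSelfAdjoint B →
      spectrum ℝ A ⊆ Set.Ici (0 : ℝ) → spectrum ℝ B ⊆ Set.Ici (0 : ℝ) →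
      A ≤ B → cfc f A ≤ cfc f B)
    (hnc : ∃ x ∈ Set.Ici (0 : ℝ), ∃ y ∈ Set.Ici (0 : ℝ), f x ≠ f y)
    (A B : H →L[ℂ] H) (hA : 0 ≤ A) (hB : 0 ≤ B) (hBA : B ≤ A) (hAB : IsUnit (A - B))
    (m : ℝ) (hm : m = ‖Ring.inverse (A - B)‖⁻¹) :
    (f (‖B‖ + m) - f ‖B‖) • (1 : H →L[ℂ] H) ≤ cfc f A - cfc f B ∧
    0 < f (‖B‖ + m) - f ‖B‖ ∧
    cfc f B ≤ cfc f A ∧ IsUnit (cfc f A - cfc f B) := by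
  have : Nontrivial H := by
    by_contra h
    rw [not_nontrivial_iff_subsingleton] at h
    exact hinf inferInstance
  have hf' : MonotoneOn (cfc f : (H →L[ℂ] H) → (H →L[ℂ] H)) (Set.Ici 0) :=
    fun S hS T hT hST ↦ hmono S T (IsSelfAdjoint.of_nonneg hS) (IsSelfAdjoint.of_nonneg hT)
      (fun _ h ↦ spectrum_nonneg_of_nonneg hS h) (fun _ h ↦ spectrum_nonneg_of_nonneg hT h) hST
  have hproj := fun w (hw : w ∈ Set.Icc (0 : ℝ) 1) ↦
    exists_isStarProjection_mul_mul_eq_smul (H := H) hinf hw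
  have hconc := concaveOn_of_monotoneOn_cfc hf hf' hproj
  have hmonoR := monotoneOn_of_monotoneOn_cfc hf'
  have hBsa := IsSelfAdjoint.of_nonneg hB
  have hm0 : 0 < m := by
    rw [hm, inv_pos, norm_pos_iff]
    exact (isUnit_ringInverse.2 hAB).ne_zero
  have hBm : B + m • 1 ≤ A := by
    rw [← le_sub_iff_add_le', hm]
    exact inv_norm_inverse_smul_one_le (sub_nonneg.2 hBA) hAB
  have hBm0 : 0 ≤ B + m • 1 := add_nonneg hB (smul_nonneg hm0.le zero_le_one)
  have hspec (t : ℝ) (ht : t ∈ spectrum ℝ B) : 0 ≤ t ∧ t ≤ ‖B‖ :=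
    ⟨spectrum_nonneg_of_nonneg hB ht, (le_abs_self t).trans (spectrum.norm_le_norm_of_mem ht)⟩
  have hle : (f (‖B‖ + m) - f ‖B‖) • (1 : H →L[ℂ] H) ≤ cfc f A - cfc f B := by
    calc (f (‖B‖ + m) - f ‖B‖) • (1 : H →L[ℂ] H)
        ≤ cfc (fun t ↦ f (t + m) - f t) B := by
          rw [← Algebra.algebraMap_eq_smul_one]
          refine algebraMap_le_cfc _ _ B (fun t ht ↦ ?_) ?_ hBsa
          · exact hconc.sub_le_sub_of_le (hspec t ht).1
              (add_nonneg (norm_nonneg B) hm0.le) (hspec t ht).2 hm0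
          · refine (hf.comp (by fun_prop) fun t ht ↦ ?_).sub (hf.mono fun t ht ↦ (hspec t ht).1)
            exact add_nonneg (hspec t ht).1 hm0.le
      _ = cfc f (B + m • 1) - cfc f B := by
          rw [cfc_add_smul_one hf hB hm0.le, cfc_sub (fun t ↦ f (t + m)) f B
            (hf.comp (by fun_prop) fun t ht ↦ add_nonneg (hspec t ht).1 hm0.le)
            (hf.mono fun t ht ↦ (hspec t ht).1)]
      _ ≤ cfc f A - cfc f B := sub_le_sub_right (hf' hBm0 hA hBm) _
  have hpos : 0 < f (‖B‖ + m) - f ‖B‖ := by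
    by_contra! hcon
    obtain ⟨x, hx, y, hy, hxy⟩ := hnc
    have hconst (z : ℝ) (hz : ‖B‖ ≤ z) : f z = f ‖B‖ :=
      hconc.eq_of_eq_of_monotoneOn hmonoR (norm_nonneg B)
        (add_nonneg (norm_nonneg B) hm0.le) ((norm_nonneg B).trans hz)
        (lt_add_of_pos_right _ hm0) hz (sub_nonpos.1 hcon)
    have hall (z : ℝ) (hz : 0 ≤ z) :=
      eq_of_monotoneOn_cfc_of_eventually_const hf hf' hproj (norm_nonneg B) hconst hz
    exact hxy ((hall x hx).trans (hall y hy).symm)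
  refine ⟨hle, hpos, hf' hB hA hBA, CStarAlgebra.isUnit_of_le _ hle ?_⟩
  exact isStrictlyPositive_one.smul hpos
end

section
/- Let H be an infinite-dimensional complex Hilbert space, let a < b be real numbers, and let f : (a,b) → ℝ be a non-constant continuous function that is operator monotone on (a,b), i.e., for all selfadjoint A, B ∈ B(H) with spectra in (a,b), A ≤ B implies f(A) ≤ f(B). Then f is strictly operator monotone on (a,b): for all selfadjoint A, B ∈ B(H) with spectra in (a,b), if B ≤ A and A − B is invertible, then f(B) ≤ f(A) and f(A) − f(B) is invertible, i.e., f(B) < f(A). -/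
open InnerProductSpace ContinuousLinearMap Topology

section CStarAlgebra

variable {A : Type*} [CStarAlgebra A]

theorem IsStarProjection.cfc_affine {p : A} (hp : IsStarProjection p) (f : ℝ → ℝ) (c y : ℝ) :
    cfc f (algebraMap ℝ A c + (y - c) • p) = algebraMap ℝ A (f c) + (f y - f c) • p := by
  have hsa := hp.isSelfAdjoint
  have hs : spectrum ℝ p ⊆ {0, 1} := hp.isIdempotentElem.spectrum_subset ℝ
  have hfin : (spectrum ℝ p).Finite := (Set.toFinite {0, 1}).subset hs
  have key : ∀ r s : ℝ, cfc (fun x : ℝ => r + s * x) p = algebraMap ℝ A r + s • p := by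
    intro r s
    rw [cfc_const_add r (fun x => s * x) p, cfc_const_mul_id s p]
  rw [← key, ← key, ← cfc_comp' f _ p ((hfin.image _).continuousOn _)]
  refine cfc_congr fun x hx => ?_
  rcases hs hx with rfl | rfl <;> simp

theorem IsStarProjection.spectrum_affine_subset {p : A} (hp : IsStarProjection p) (c y : ℝ) :
    spectrum ℝ (algebraMap ℝ A c + (y - c) • p) ⊆ {c, y} := by
  have hsa := hp.isSelfAdjoint
  have hs : spectrum ℝ p ⊆ {0, 1} := hp.isIdempotentElem.spectrum_subset ℝ
  rw [← cfc_const_mul_id (y - c) p, ← cfc_const_add c (fun x => (y - c) * x) p,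
    cfc_map_spectrum _ p]
  rintro _ ⟨x, hx, rfl⟩
  rcases hs hx with rfl | rfl <;> simp

theorem IsStarProjection.isSelfAdjoint_affine {p : A} (hp : IsStarProjection p) (c y : ℝ) :
    IsSelfAdjoint (algebraMap ℝ A c + (y - c) • p) :=
  (IsSelfAdjoint.algebraMap A (IsSelfAdjoint.all c)).add
    ((IsSelfAdjoint.all (y - c)).smul hp.isSelfAdjoint)

variable [PartialOrder A] [StarOrderedRing A]

/-- If both eigenvalues strictly increase, a small change of the spectral projection preserves
the order. -/
theorem IsStarProjection.affine_le_affine {p q : A} (hp : IsStarProjection p)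
    (hq : IsStarProjection q) {c d y z m : ℝ} (hcd : m ≤ d - c) (hyz : m ≤ z - y)
    (hpq : |z - d| * ‖q - p‖ ≤ m) :
    algebraMap ℝ A c + (y - c) • p ≤ algebraMap ℝ A d + (z - d) • q := by
  have h1 : -algebraMap ℝ A m ≤ (z - d) • (q - p) := by
    have hsa : IsSelfAdjoint ((z - d) • (q - p)) :=
      (IsSelfAdjoint.all (z - d)).smul (hq.isSelfAdjoint.sub hp.isSelfAdjoint)
    refine le_trans (neg_le_neg ?_) hsa.neg_algebraMap_norm_le_self
    refine algebraMap_mono A ?_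
    rwa [norm_smul, Real.norm_eq_abs]
  have h2 : 0 ≤ (d - c - m) • (1 - p) + (z - y - m) • p :=
    add_nonneg (smul_nonneg (by linarith) hp.one_sub.nonneg) (smul_nonneg (by linarith) hp.nonneg)
  rw [← sub_nonneg]
  convert add_nonneg (sub_nonneg.2 h1) h2 using 1
  simp only [Algebra.algebraMap_eq_smul_one]
  module

/-- An operator monotone function which is strictly increasing on scalars is strictly operator
monotone. -/
theorem isUnit_cfc_sub_cfc_of_strictMonoOn [Nontrivial A] {a b : ℝ} {f : ℝ → ℝ}
    (hf : ContinuousOn f (Set.Ioo a b)) (hstrict : StrictMonoOn f (Set.Ioo a b))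
    (hmono : ∀ S T : A, IsSelfAdjoint S → IsSelfAdjoint T →
      spectrum ℝ S ⊆ Set.Ioo a b → spectrum ℝ T ⊆ Set.Ioo a b → S ≤ T → cfc f S ≤ cfc f T)
    {S T : A} (hS : IsSelfAdjoint S) (hT : IsSelfAdjoint T)
    (hSs : spectrum ℝ S ⊆ Set.Ioo a b) (hTs : spectrum ℝ T ⊆ Set.Ioo a b)
    (hTS : T ≤ S) (hu : IsUnit (S - T)) : IsUnit (cfc f S - cfc f T) := by
  have hsp := hu.isStrictlyPositive (sub_nonneg.2 hTS)
  obtain ⟨δ, hδ, hδle⟩ := (CFC.exists_pos_algebraMap_le_iff (hS.sub hT)).2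
    fun x hx => hsp.spectrum_pos hx
  have hshift : cfc (fun x : ℝ => x + δ) T = T + algebraMap ℝ A δ := by
    rw [cfc_add_const δ (fun x => x) T, cfc_id' ℝ T]
  have hle : T + algebraMap ℝ A δ ≤ S := by rw [add_comm]; exact le_sub_iff_add_le.1 hδle
  obtain ⟨M, hM, hMmax⟩ :=
    (isCompact_iff_compactSpace.2 inferInstance : IsCompact (spectrum ℝ S)).exists_isGreatest
      (ContinuousFunctionalCalculus.spectrum_nonempty S hS)
  have hbd : ∀ x ∈ spectrum ℝ T, x + δ ∈ Set.Ioo a b := by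
    have h := hle.trans ((le_algebraMap_iff_spectrum_le hS).2 fun x hx => hMmax hx)
    rw [← hshift, cfc_le_algebraMap_iff _ M T] at h
    exact fun x hx => ⟨by linarith [(hTs hx).1], (h x hx).trans_lt (hSs hM).2⟩
  have hcT := hf.mono hTs
  have hcδ : ContinuousOn (fun x => f (x + δ)) (spectrum ℝ T) :=
    hf.comp (by fun_prop) hbd
  have hcomp : cfc f (T + algebraMap ℝ A δ) = cfc (fun x => f (x + δ)) T := by
    rw [← hshift, ← cfc_comp' f (fun x => x + δ) T (hf.mono (Set.image_subset_iff.2 hbd))]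
  have hpos : IsStrictlyPositive (cfc f (T + algebraMap ℝ A δ) - cfc f T) := by
    rw [hcomp, ← cfc_sub .., cfc_isStrictlyPositive_iff _ T]
    exact fun x hx => sub_pos.2 (hstrict (hTs hx) (hbd x hx) (by linarith))
  refine (hpos.of_le (sub_le_sub_right (hmono _ _ ?_ hS ?_ hSs hle) _)).isUnit
  · rw [← hshift]; exact cfc_predicate _ T
  · rw [← hshift, cfc_map_spectrum _ T]
    exact Set.image_subset_iff.2 hbd

end CStarAlgebra

section Hilbert

variable {H : Type*} [NormedAddCommGroup H] [InnerProductSpace ℂ H]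

theorem exists_unit_orthogonal_pair (hinf : ¬ FiniteDimensional ℂ H) :
    ∃ u v : H, ‖u‖ = 1 ∧ ‖v‖ = 1 ∧ inner ℂ u v = 0 := by
  have hnormalize (K : Submodule ℂ H) (hK : K ≠ ⊥) : ∃ v ∈ K, ‖v‖ = 1 := by
    obtain ⟨x, hxK, hx⟩ := K.ne_bot_iff.1 hK
    exact ⟨((‖x‖ : ℂ)⁻¹) • x, K.smul_mem _ hxK, norm_smul_inv_norm hx⟩
  obtain ⟨u, -, hu⟩ := hnormalize ⊤ fun h => hinf <| by
    have : Subsingleton H := (Submodule.subsingleton_iff ℂ).1 (subsingleton_of_bot_eq_top h.symm)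
    infer_instance
  obtain ⟨v, hvK, hv⟩ := hnormalize (ℂ ∙ u)ᗮ fun h => hinf <| by
    rw [Submodule.orthogonal_eq_bot_iff] at h
    exact Module.finite_def.2 (h ▸ Submodule.fg_span_singleton u)
  exact ⟨u, v, hu, hv, Submodule.mem_orthogonal_singleton_iff_inner_right.1 hvK⟩

theorem exists_near_unit_vector {u v : H} (hu : ‖u‖ = 1) (hv : ‖v‖ = 1)
    (huv : inner ℂ u v = 0) {ε : ℝ} (hε : 0 < ε) :
    ∃ w x : H, ‖w‖ = 1 ∧ inner ℂ w x = 0 ∧ inner ℂ u x ≠ 0 ∧ inner ℂ w v ≠ 0 ∧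
      ‖rankOne ℂ w w - rankOne ℂ u u‖ < ε := by
  have hvu : inner ℂ v u = 0 := inner_eq_zero_symm.1 huv
  have hcont : Continuous fun t : ℝ =>
      ‖rankOne ℂ ((Real.cos t : ℂ) • u + (Real.sin t : ℂ) • v)
        ((Real.cos t : ℂ) • u + (Real.sin t : ℂ) • v) - rankOne ℂ u u‖ := by
    simp only [map_add, add_apply, map_smul, map_smulₛₗ, smul_apply, Complex.conj_ofReal]
    fun_prop
  have hev : ∀ᶠ t : ℝ in 𝓝[>] 0, _ < ε :=
    (hcont.continuousAt.eventually_lt (x₀ := 0) (g := fun _ => ε) continuousAt_const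
      (by simpa using hε)).filter_mono nhdsWithin_le_nhds
  obtain ⟨t, ht, htpi⟩ := (hev.and (Ioo_mem_nhdsGT Real.pi_pos)).exists
  have hsin : (Real.sin t : ℂ) ≠ 0 :=
    Complex.ofReal_ne_zero.2 (Real.sin_pos_of_pos_of_lt_pi htpi.1 htpi.2).ne'
  have huu : inner ℂ u u = 1 := by simp [inner_self_eq_norm_sq_to_K, hu]
  have hvv : inner ℂ v v = 1 := by simp [inner_self_eq_norm_sq_to_K, hv]
  refine ⟨_, -(Real.sin t : ℂ) • u + (Real.cos t : ℂ) • v, ?_, ?_, ?_, ?_, ht⟩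
  · rw [← sq_eq_sq₀ (norm_nonneg _) zero_le_one, norm_add_sq (𝕜 := ℂ), inner_smul_left,
      inner_smul_right, huv]
    simp only [norm_smul, hu, hv, Complex.norm_real, Real.norm_eq_abs, mul_one, sq_abs, mul_zero,
      map_zero, add_zero, one_pow, Real.cos_sq_add_sin_sq]
  · simp only [inner_add_left, inner_add_right, inner_smul_left, inner_smul_right, huu, hvv, huv,
      hvu, Complex.conj_ofReal]
    ring
  · simpa only [inner_add_right, inner_smul_right, huu, huv, mul_one, mul_zero, add_zero, neg_ne_zero]
      using hsin
  · simpa only [inner_add_left, inner_smul_left, hvv, huv, mul_one, mul_zero, zero_add,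
      Complex.conj_ofReal] using hsin

theorem inner_affine_rankOne_apply (c k : ℝ) (u x : H) :
    inner ℂ x ((algebraMap ℝ (H →L[ℂ] H) c + k • rankOne ℂ u u) x) =
      (c * ‖x‖ ^ 2 + k * ‖inner ℂ u x‖ ^ 2 : ℝ) := by
  have hux : inner ℂ u x * inner ℂ x u = (‖inner ℂ u x‖ : ℂ) ^ 2 := by
    rw [← inner_conj_symm x u, RCLike.mul_conj]
    rfl
  have hxx : inner ℂ x x = (‖x‖ : ℂ) ^ 2 := inner_self_eq_norm_sq_to_K x
  simp only [Algebra.algebraMap_eq_smul_one, add_apply, smul_apply, one_apply_eq_self, rankOne_apply,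
    inner_add_right, inner_smul_right_eq_smul, hxx, Complex.real_smul]
  push_cast
  linear_combination (k : ℂ) * hux

variable [CompleteSpace H]

/-- If an operator monotone function takes the same value at `c < d`, then this value lies between
its values at any two points `y < z`. -/
theorem le_and_le_of_operatorMonotone_of_eq (hinf : ¬ FiniteDimensional ℂ H) {a b : ℝ} {f : ℝ → ℝ}
    (hmono : ∀ A B : H →L[ℂ] H, IsSelfAdjoint A → IsSelfAdjoint B →
      spectrum ℝ A ⊆ Set.Ioo a b → spectrum ℝ B ⊆ Set.Ioo a b → A ≤ B → cfc f A ≤ cfc f B)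
    {c d y z : ℝ} (hc : c ∈ Set.Ioo a b) (hd : d ∈ Set.Ioo a b) (hy : y ∈ Set.Ioo a b)
    (hz : z ∈ Set.Ioo a b) (hcd : c < d) (hyz : y < z) (hfcd : f c = f d) :
    f y ≤ f c ∧ f c ≤ f z := by
  obtain ⟨u, v, hu, hv, huv⟩ := exists_unit_orthogonal_pair hinf
  set m := min (d - c) (z - y)
  have hm : 0 < m := lt_min (by linarith) (by linarith)
  obtain ⟨w, x, hw, hwx, hux, hwv, hnear⟩ :=
    exists_near_unit_vector hu hv huv (ε := m / (|z - d| + 1)) (by positivity)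
  have hp := isStarProjection_rankOne_self (𝕜 := ℂ) hu
  have hq := isStarProjection_rankOne_self (𝕜 := ℂ) hw
  have hle := hp.affine_le_affine hq (c := c) (d := d) (y := y) (z := z) (m := m)
    (min_le_left _ _) (min_le_right _ _) (by
      rw [lt_div_iff₀ (by positivity)] at hnear
      nlinarith [norm_nonneg (rankOne ℂ w w - rankOne ℂ u u)])
  have hf := hmono _ _ (hp.isSelfAdjoint_affine c y) (hq.isSelfAdjoint_affine d z)
    ((hp.spectrum_affine_subset c y).trans (by simp [Set.insert_subset_iff, hc, hy]))
    ((hq.spectrum_affine_subset d z).trans (by simp [Set.insert_subset_iff, hd, hz])) hle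
  rw [hp.cfc_affine, hq.cfc_affine, ContinuousLinearMap.le_def] at hf
  have hquad (e : H) : (f y - f c) * ‖inner ℂ u e‖ ^ 2 ≤ (f z - f d) * ‖inner ℂ w e‖ ^ 2 := by
    have h := hf.inner_nonneg_right e
    rw [sub_apply, inner_sub_right, inner_affine_rankOne_apply, inner_affine_rankOne_apply,
      ← Complex.ofReal_sub, Complex.zero_le_real, ← hfcd] at h
    rw [← hfcd]
    linarith
  have h1 := hquad x
  have h2 := hquad v
  rw [hwx, norm_zero] at h1
  rw [huv, norm_zero] at h2
  have h3 : 0 < ‖inner ℂ u x‖ ^ 2 := by positivity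
  have h4 : 0 < ‖inner ℂ w v‖ ^ 2 := by positivity
  constructor <;> nlinarith

/-- A non-constant operator monotone function is strictly increasing. -/
theorem strictMonoOn_of_operatorMonotone (hinf : ¬ FiniteDimensional ℂ H) {a b : ℝ} {f : ℝ → ℝ}
    (hmono : ∀ A B : H →L[ℂ] H, IsSelfAdjoint A → IsSelfAdjoint B →
      spectrum ℝ A ⊆ Set.Ioo a b → spectrum ℝ B ⊆ Set.Ioo a b → A ≤ B → cfc f A ≤ cfc f B)
    (hnc : ∃ x ∈ Set.Ioo a b, ∃ y ∈ Set.Ioo a b, f x ≠ f y) : StrictMonoOn f (Set.Ioo a b) := by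
  have hnt : Nontrivial H := by
    by_contra h
    rw [not_nontrivial_iff_subsingleton] at h
    exact hinf inferInstance
  intro c hc d hd hcd
  have hle : f c ≤ f d := by
    have h := hmono (algebraMap ℝ _ c) (algebraMap ℝ _ d)
      (IsSelfAdjoint.algebraMap _ (IsSelfAdjoint.all c))
      (IsSelfAdjoint.algebraMap _ (IsSelfAdjoint.all d))
      (by simpa [spectrum.scalar_eq] using hc) (by simpa [spectrum.scalar_eq] using hd)
      (algebraMap_mono _ hcd.le)
    rw [cfc_algebraMap, cfc_algebraMap] at h
    simpa using h
  refine hle.lt_of_ne fun heq => ?_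
  have hconst : ∀ t ∈ Set.Ioo a b, f t = f c := by
    intro t ht
    obtain ⟨s, hs⟩ := exists_between ht.1
    obtain ⟨r, hr⟩ := exists_between ht.2
    exact le_antisymm
      (le_and_le_of_operatorMonotone_of_eq hinf hmono hc hd ht ⟨ht.1.trans hr.1, hr.2⟩ hcd hr.1
        heq).1
      (le_and_le_of_operatorMonotone_of_eq hinf hmono hc hd ⟨hs.1, hs.2.trans ht.2⟩ ht hcd hs.2
        heq).2
  obtain ⟨x, hx, y, hy, hxy⟩ := hnc
  exact hxy ((hconst x hx).trans (hconst y hy).symm)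

end Hilbert


/-- any non-constant operator monotone function on a bounded interval
`(a, b)` is strictly operator monotone on `(a, b)` (operators on an
infinite-dimensional complex Hilbert space). -/
theorem stmt13 {H : Type*} [NormedAddCommGroup H] [InnerProductSpace ℂ H] [CompleteSpace H]
    (hinf : ¬ FiniteDimensional ℂ H) (a b : ℝ) (hab : a < b)
    (f : ℝ → ℝ) (hf : ContinuousOn f (Set.Ioo a b))
    (hmono : ∀ A B : H →L[ℂ] H, IsSelfAdjoint A → IsSelfAdjoint B →
      spectrum ℝ A ⊆ Set.Ioo a b → spectrum ℝ B ⊆ Set.Ioo a b →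
      A ≤ B → cfc f A ≤ cfc f B)
    (hnc : ∃ x ∈ Set.Ioo a b, ∃ y ∈ Set.Ioo a b, f x ≠ f y) :
    ∀ A B : H →L[ℂ] H, IsSelfAdjoint A → IsSelfAdjoint B →
      spectrum ℝ A ⊆ Set.Ioo a b → spectrum ℝ B ⊆ Set.Ioo a b →
      B ≤ A → IsUnit (A - B) →
      cfc f B ≤ cfc f A ∧ IsUnit (cfc f A - cfc f B) := by
  have hnt : Nontrivial H := by
    by_contra h
    rw [not_nontrivial_iff_subsingleton] at h
    exact hinf inferInstance
  intro A B hA hB hAs hBs hBA hu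
  exact ⟨hmono B A hB hA hBs hAs hBA, isUnit_cfc_sub_cfc_of_strictMonoOn hf
    (strictMonoOn_of_operatorMonotone hinf hmono hnc) hmono hA hB hAs hBs hBA hu⟩
end

section
/- Let A and B be positive invertible bounded linear operators on a complex Hilbert space with A − B ≥ m·I for some m > 0, and let 0 < r ≤ 1, p ≥ 0, q ≥ 1 satisfy (1+r)q ≥ p + r ≥ qr. Then A^{(p+r)/q} − (A^{r/2} B^p A^{r/2})^{1/q} ≥ k(‖B‖, m, p, q, r) · m_A^r · I, where k(b, m, p, q, r) = (b + m)^{(p+r)/q − r} − b^{(p+r)/q − r} and m_A = ‖A⁻¹‖⁻¹ is the minimum of the spectrum of A. -/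
theorem Real.rpow_add_sub_rpow_le {s t b m : ℝ} (hs0 : 0 ≤ s) (hs1 : s ≤ 1) (ht : 0 ≤ t)
    (htb : t ≤ b) (hm : 0 < m) : (b + m) ^ s - b ^ s ≤ (t + m) ^ s - t ^ s := by
  have hc := Real.concaveOn_rpow hs0 hs1
  have hd : 0 < b + m - t := by linarith
  have hl0 : 0 ≤ m / (b + m - t) := by positivity
  have hl1 : 0 ≤ 1 - m / (b + m - t) := by
    rw [sub_nonneg, div_le_one hd]; linarith
  have htm : t ∈ Set.Ici (0 : ℝ) := ht
  have hbm : b + m ∈ Set.Ici (0 : ℝ) := by simp only [Set.mem_Ici]; linarith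
  have e1 : (1 - m / (b + m - t)) * t + m / (b + m - t) * (b + m) = t + m := by
    field_simp; ring
  have e2 : m / (b + m - t) * t + (1 - m / (b + m - t)) * (b + m) = b := by
    field_simp; ring
  have k1 := hc.2 htm hbm hl1 hl0 (by ring)
  have k2 := hc.2 htm hbm hl0 hl1 (by ring)
  simp only [smul_eq_mul, e1, e2] at k1 k2
  linarith

section CStarAlgebra

variable {𝒜 : Type*} [CStarAlgebra 𝒜] [PartialOrder 𝒜] [StarOrderedRing 𝒜]

/-- `a ↦ a ^ x` is operator antitone for `x ∈ [-1, 0]`. -/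
theorem CFC.rpow_le_rpow_of_exponent_nonpos {x : ℝ} (hx0 : x ≤ 0) (hx1 : -1 ≤ x) {a b : 𝒜}
    (ha : IsStrictlyPositive a) (hab : a ≤ b) : b ^ x ≤ a ^ x := by
  have hb : IsStrictlyPositive b := ha.of_le hab
  have h : a ^ (-x) ≤ b ^ (-x) := CFC.rpow_le_rpow ⟨by linarith, by linarith⟩ hab
  obtain rfl | hx := eq_or_ne x 0
  · simp [CFC.rpow_zero a ha.nonneg, CFC.rpow_zero b hb.nonneg]
  have := CStarAlgebra.ringInverse_le_ringInverse h (ha.rpow a (-x))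
  rwa [CFC.inverse_rpow a _ (neg_ne_zero.2 hx), CFC.inverse_rpow b _ (neg_ne_zero.2 hx),
    neg_neg] at this

theorem CFC.unitary_conj_rpow (u : unitary 𝒜) {a : 𝒜} (ha : IsStrictlyPositive a) (x : ℝ) :
    (u * a * star (u : 𝒜)) ^ x = u * a ^ x * star (u : 𝒜) := by
  have hpos : 0 ≤ (u : 𝒜) * a * star (u : 𝒜) := star_right_conjugate_nonneg ha.nonneg _
  rw [CFC.rpow_eq_cfc_real hpos, CFC.rpow_eq_cfc_real ha.nonneg]
  have hc : ContinuousOn (fun t : ℝ => t ^ x) (spectrum ℝ a) :=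
    ContinuousOn.rpow_const continuousOn_id fun t ht =>
      .inl fun h => spectrum.zero_notMem ℝ ha.isUnit (by simpa [← h] using ht)
  have := StarAlgHomClass.map_cfc (Unitary.conjStarAlgAut ℝ 𝒜 u) (fun t : ℝ => t ^ x) a hc
    (hφ := by
      change Continuous fun y : 𝒜 => (u : 𝒜) * y * star (u : 𝒜)
      fun_prop) (ha := by cfc_tac) (hφa := by
      rw [Unitary.conjStarAlgAut_apply]; cfc_tac)
  simpa only [Unitary.conjStarAlgAut_apply] using this.symm

/-- Furuta's lemma: `(X X⋆) ^ x = X (X⋆ X) ^ (x - 1) X⋆` for invertible `X`. -/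
theorem CFC.mul_star_self_rpow {X : 𝒜} (hX : IsUnit X) (x : ℝ) :
    (X * star X) ^ x = X * (star X * X) ^ (x - 1) * star X := by
  set P := star X * X with hP
  have hPpos : IsStrictlyPositive P :=
    IsStrictlyPositive.iff_of_unital.2 ⟨star_mul_self_nonneg X, hX.star.mul hX⟩
  have add (y z : ℝ) : P ^ y * P ^ z = P ^ (y + z) := (CFC.rpow_add hPpos.isUnit).symm
  have hsa (y : ℝ) : star (P ^ y) = P ^ y := (IsSelfAdjoint.of_nonneg CFC.rpow_nonneg).star_eq
  have hone : P ^ (1 : ℝ) = P := CFC.rpow_one P hPpos.nonneg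
  set U := X * P ^ (-(1 / 2) : ℝ) with hU
  have hUU : star U * U = 1 := by
    calc star U * U = P ^ (-(1 / 2) : ℝ) * P ^ (1 : ℝ) * P ^ (-(1 / 2) : ℝ) := by
          rw [hone, hU, star_mul, hsa, hP]; simp only [mul_assoc]
      _ = 1 := by rw [add, add]; norm_num [CFC.rpow_zero P hPpos.nonneg]
  have hUunit : IsUnit U := hX.mul (hPpos.isUnit.cfcRpow _ hPpos.nonneg)
  have hUU' : U * star U = 1 := by
    have : U * star U * U = 1 * U := by rw [mul_assoc, hUU, mul_one, one_mul]
    exact hUunit.mul_right_cancel this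
  have conj (y : ℝ) : U * P ^ y * star U = X * P ^ (y - 1) * star X := by
    calc U * P ^ y * star U
        = X * (P ^ (-(1 / 2) : ℝ) * P ^ y * P ^ (-(1 / 2) : ℝ)) * star X := by
          rw [hU, star_mul, hsa]; simp only [mul_assoc]
      _ = _ := by rw [add, add]; congr 3; ring
  have h1 : X * star X = U * P * star U := by
    have := conj 1
    rw [hone] at this
    simp [this, CFC.rpow_zero P hPpos.nonneg]
  rw [h1, ← conj x]
  exact CFC.unitary_conj_rpow ⟨U, Unitary.mem_iff.2 ⟨hUU, hUU'⟩⟩ hPpos x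

theorem CFC.rpow_le_rpow_add_algebraMap {s m : ℝ} (hs0 : 0 ≤ s) (hs1 : s ≤ 1) (hm : 0 < m)
    {B : 𝒜} (hB : 0 ≤ B) :
    algebraMap ℝ 𝒜 ((‖B‖ + m) ^ s - ‖B‖ ^ s) ≤ (B + algebraMap ℝ 𝒜 m) ^ s - B ^ s := by
  nontriviality 𝒜
  have hnn : ∀ t ∈ spectrum ℝ B, 0 ≤ t := fun t ht => spectrum_nonneg_of_nonneg hB ht
  have hadd : B + algebraMap ℝ 𝒜 m = cfc (fun t : ℝ => t + m) B := by
    rw [cfc_add_const m (fun t : ℝ => t) B, cfc_id' ℝ B]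
  have hf : ContinuousOn (fun t : ℝ => (t + m) ^ s) (spectrum ℝ B) :=
    ContinuousOn.rpow_const (by fun_prop) fun _ _ => .inr hs0
  have hg : ContinuousOn (fun t : ℝ => t ^ s) (spectrum ℝ B) :=
    ContinuousOn.rpow_const (by fun_prop) fun _ _ => .inr hs0
  rw [hadd, CFC.cfc_rpow (fun t ht => add_pos_of_nonneg_of_pos (hnn t ht) hm),
    CFC.rpow_eq_cfc_real hB, ← cfc_sub _ _ B hf hg]
  refine algebraMap_le_cfc _ _ _ (fun t ht => ?_) (hf.sub hg)
  refine Real.rpow_add_sub_rpow_le hs0 hs1 (hnn t ht) ?_ hm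
  exact (le_abs_self t).trans (spectrum.norm_le_norm_of_mem ht)

theorem CFC.algebraMap_inv_norm_inverse_rpow_le {r : ℝ} (hr : 0 ≤ r) {A : 𝒜}
    (hA : IsStrictlyPositive A) :
    algebraMap ℝ 𝒜 (‖Ring.inverse A‖⁻¹ ^ r) ≤ A ^ r := by
  nontriviality 𝒜
  rw [CFC.rpow_eq_cfc_real hA.nonneg]
  refine algebraMap_le_cfc _ _ _ (fun t ht => ?_)
    (ContinuousOn.rpow_const (by fun_prop) fun _ _ => .inr hr)
  obtain ⟨u, rfl⟩ := hA.isUnit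
  have ht0 : 0 < t := (spectrum_nonneg_of_nonneg hA.nonneg ht).lt_of_ne' fun h =>
    spectrum.zero_notMem ℝ u.isUnit (h ▸ ht)
  have hinv : t⁻¹ ≤ ‖Ring.inverse (u : 𝒜)‖ := by
    rw [Ring.inverse_unit]
    exact (le_abs_self _).trans (spectrum.norm_le_norm_of_mem (spectrum.inv₀_mem_inv_iff.2 ht))
  exact Real.rpow_le_rpow (by positivity) (inv_le_of_inv_le₀ ht0 hinv) hr

/-- The core estimate behind the Furuta inequality. -/
theorem CFC.furuta_rpow_le {A B : 𝒜} (hA : IsStrictlyPositive A) (hB : IsStrictlyPositive B)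
    (hBA : B ≤ A) {r p q : ℝ} (hr0 : 0 ≤ r) (hr1 : r ≤ 1) (hq : 1 ≤ q) (hpr : p + r ≠ 0) :
    (A ^ (r / 2) * B ^ p * A ^ (r / 2)) ^ (1 / q)
      ≤ A ^ (r / 2) * B ^ ((p + r) / q - r) * A ^ (r / 2) := by
  have addA (y z : ℝ) : A ^ y * A ^ z = A ^ (y + z) := (CFC.rpow_add hA.isUnit).symm
  have addB (y z : ℝ) : B ^ y * B ^ z = B ^ (y + z) := (CFC.rpow_add hB.isUnit).symm
  have starA (y : ℝ) : star (A ^ y) = A ^ y := (IsSelfAdjoint.of_nonneg CFC.rpow_nonneg).star_eq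
  have starB (y : ℝ) : star (B ^ y) = B ^ y := (IsSelfAdjoint.of_nonneg CFC.rpow_nonneg).star_eq
  set X := A ^ (r / 2) * B ^ (p / 2) with hXdef
  have hX : IsUnit X :=
    (hA.isUnit.cfcRpow _ hA.nonneg).mul (hB.isUnit.cfcRpow _ hB.nonneg)
  have hstarX : star X = B ^ (p / 2) * A ^ (r / 2) := by rw [hXdef, star_mul, starA, starB]
  have hXX : A ^ (r / 2) * B ^ p * A ^ (r / 2) = X * star X := by
    rw [hstarX, hXdef, ← add_halves p, ← addB, add_halves]; simp only [mul_assoc]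
  have hP : star X * X = B ^ (p / 2) * A ^ r * B ^ (p / 2) := by
    rw [hstarX, hXdef, ← add_halves r, ← addA, add_halves]; simp only [mul_assoc]
  have hle : B ^ (p + r) ≤ star X * X := by
    have h : B ^ r ≤ A ^ r := CFC.rpow_le_rpow ⟨hr0, hr1⟩ hBA
    have := conjugate_le_conjugate_of_nonneg h (CFC.rpow_nonneg (a := B) (y := p / 2))
    rw [hP]
    convert this using 1
    rw [addB, addB]; congr 1; ring
  have hq0 : 0 < q := by linarith
  have hq1 : 1 / q ≤ 1 := by rw [div_le_one hq0]; exact hq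
  have hanti := CFC.rpow_le_rpow_of_exponent_nonpos (x := 1 / q - 1) (by linarith)
    (by have : 0 < 1 / q := by positivity
        linarith) (hB.rpow B (p + r)) hle
  rw [CFC.rpow_rpow B _ _ hpr hB] at hanti
  rw [hXX, CFC.mul_star_self_rpow hX]
  refine (star_right_conjugate_le_conjugate hanti X).trans_eq ?_
  calc X * B ^ ((p + r) * (1 / q - 1)) * star X
      = A ^ (r / 2) * (B ^ (p / 2) * B ^ ((p + r) * (1 / q - 1)) * B ^ (p / 2))
        * A ^ (r / 2) := by rw [hstarX, hXdef]; simp only [mul_assoc]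
    _ = _ := by
      rw [addB, addB]; congr 3; ring

end CStarAlgebra

/-- estimate of the Furuta inequality: if `A, B` are positive invertible
operators with `A - B ≥ m·I`, `m > 0`, `0 < r ≤ 1`, `p ≥ 0`, `q ≥ 1` and
`(1+r)q ≥ p + r ≥ qr`, then
`A^{(p+r)/q} - (A^{r/2} B^p A^{r/2})^{1/q} ≥ k(‖B‖, m, p, q, r) · m_A^r · I`, where
`k(b, m, p, q, r) = (b+m)^{(p+r)/q - r} - b^{(p+r)/q - r}` and `m_A = ‖A⁻¹‖⁻¹`. -/
theorem stmt14 {H : Type*} [NormedAddCommGroup H] [InnerProductSpace ℂ H] [CompleteSpace H]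
    (A B : H →L[ℂ] H) (hA : 0 ≤ A) (hB : 0 ≤ B) (hAu : IsUnit A) (hBu : IsUnit B)
    (m : ℝ) (hm : 0 < m) (hAB : m • (1 : H →L[ℂ] H) ≤ A - B)
    (r p q : ℝ) (hr0 : 0 < r) (hr1 : r ≤ 1) (hp : 0 ≤ p) (hq : 1 ≤ q)
    (h1 : p + r ≤ (1 + r) * q) (h2 : q * r ≤ p + r) :
    (((‖B‖ + m) ^ ((p + r) / q - r) - ‖B‖ ^ ((p + r) / q - r))
        * ‖Ring.inverse A‖⁻¹ ^ r) • (1 : H →L[ℂ] H)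
      ≤ cfc (fun t : ℝ => t ^ ((p + r) / q)) A
        - cfc (fun t : ℝ => t ^ (1 / q))
            (cfc (fun t : ℝ => t ^ (r / 2)) A * cfc (fun t : ℝ => t ^ p) B
              * cfc (fun t : ℝ => t ^ (r / 2)) A) := by
  have hAp : IsStrictlyPositive A := IsStrictlyPositive.iff_of_unital.2 ⟨hA, hAu⟩
  have hBp : IsStrictlyPositive B := IsStrictlyPositive.iff_of_unital.2 ⟨hB, hBu⟩
  have hq0 : 0 < q := by linarith
  set s := (p + r) / q - r with hs
  have hs0 : 0 ≤ s := by rw [hs, sub_nonneg, le_div_iff₀ hq0]; linarith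
  have hs1 : s ≤ 1 := by rw [hs, sub_le_iff_le_add, div_le_iff₀ hq0]; linarith
  have hBmA : B + algebraMap ℝ (H →L[ℂ] H) m ≤ A := by
    rw [Algebra.algebraMap_eq_smul_one, add_comm]; exact le_sub_iff_add_le.1 hAB
  have hBA : B ≤ A :=
    (le_add_of_nonneg_right (algebraMap_nonneg (H →L[ℂ] H) hm.le)).trans hBmA
  set k := (‖B‖ + m) ^ s - ‖B‖ ^ s with hk
  have hk0 : 0 ≤ k :=
    sub_nonneg.2 (Real.rpow_le_rpow (norm_nonneg B) (by linarith) hs0)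
  have hsub : algebraMap ℝ (H →L[ℂ] H) k ≤ A ^ s - B ^ s :=
    (CFC.rpow_le_rpow_add_algebraMap hs0 hs1 hm hB).trans
      (sub_le_sub_right (CFC.rpow_le_rpow ⟨hs0, hs1⟩ hBmA) _)
  have hfur := CFC.furuta_rpow_le hAp hBp hBA hr0.le hr1 hq (p := p) (by linarith)
  have hnn : 0 ≤ A ^ (r / 2) * B ^ p * A ^ (r / 2) :=
    conjugate_nonneg_of_nonneg CFC.rpow_nonneg CFC.rpow_nonneg
  simp only [← CFC.rpow_eq_cfc_real hA, ← CFC.rpow_eq_cfc_real hB]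
  rw [← CFC.rpow_eq_cfc_real hnn]
  have add (y z : ℝ) : A ^ y * A ^ z = A ^ (y + z) := (CFC.rpow_add hAu).symm
  calc (k * ‖Ring.inverse A‖⁻¹ ^ r) • (1 : H →L[ℂ] H)
      = k • algebraMap ℝ (H →L[ℂ] H) (‖Ring.inverse A‖⁻¹ ^ r) := by
        rw [Algebra.algebraMap_eq_smul_one, smul_smul]
    _ ≤ k • A ^ r :=
        smul_le_smul_of_nonneg_left (CFC.algebraMap_inv_norm_inverse_rpow_le hr0.le hAp) hk0
    _ = A ^ (r / 2) * algebraMap ℝ (H →L[ℂ] H) k * A ^ (r / 2) := by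
        rw [Algebra.algebraMap_eq_smul_one, mul_smul_comm, mul_one, smul_mul_assoc, add,
          add_halves]
    _ ≤ A ^ (r / 2) * (A ^ s - B ^ s) * A ^ (r / 2) :=
        conjugate_le_conjugate_of_nonneg hsub CFC.rpow_nonneg
    _ = A ^ ((p + r) / q) - A ^ (r / 2) * B ^ s * A ^ (r / 2) := by
        rw [mul_sub, sub_mul, add, add]; congr 2; rw [hs]; ring
    _ ≤ A ^ ((p + r) / q) - (A ^ (r / 2) * B ^ p * A ^ (r / 2)) ^ (1 / q) :=
        sub_le_sub_left hfur _
end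

section
/- Let A and B be positive invertible bounded linear operators on a complex Hilbert space with A − B ≥ m·I for some m > 0, and let p ≥ 1 and r ≥ 0. Then A^{1+r} − (A^{r/2} B^p A^{r/2})^{(1+r)/(p+r)} ≥ m · m_A^r · I, where m_A = ‖A⁻¹‖⁻¹ is the minimum of the spectrum of A. -/
namespace CStarAlgebra

variable {A : Type*} [CStarAlgebra A] [PartialOrder A] [StarOrderedRing A]

lemma rpow_rpow_of_isStrictlyPositive {a : A} (ha : IsStrictlyPositive a) (x y : ℝ) :
    (a ^ x) ^ y = a ^ (x * y) := by
  have := ha.nonneg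
  rcases eq_or_ne x 0 with rfl | hx
  · simp [CFC.rpow_zero a]
  · exact CFC.rpow_rpow a x y hx ha

lemma star_rpow (a : A) (x : ℝ) : star (a ^ x) = a ^ x :=
  (IsSelfAdjoint.of_nonneg CFC.rpow_nonneg).star_eq

lemma rpow_neg_le_rpow_neg {a b : A} (ha : IsStrictlyPositive a) (hab : a ≤ b) {t : ℝ}
    (ht : t ∈ Set.Icc 0 1) : b ^ (-t) ≤ a ^ (-t) := by
  have hb : IsStrictlyPositive b := ha.of_le hab
  have h := CStarAlgebra.rpow_neg_one_le_rpow_neg_one (CFC.rpow_le_rpow ht hab) (ha.rpow a t)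
  simpa [rpow_rpow_of_isStrictlyPositive ha, rpow_rpow_of_isStrictlyPositive hb] using h

lemma rpow_conj_unitary (u : unitary A) {a : A} (ha : IsStrictlyPositive a) (x : ℝ) :
    ((u : A) * a * star (u : A)) ^ x = u * a ^ x * star (u : A) := by
  have hua : 0 ≤ (u : A) * a * star (u : A) := star_right_conjugate_nonneg ha.nonneg _
  have hcont : ContinuousOn (fun t : ℝ => t ^ x) (spectrum ℝ a) :=
    ContinuousOn.rpow_const continuousOn_id fun t ht =>
      Or.inl (by rintro rfl; exact spectrum.zero_notMem ℝ ha.isUnit ht)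
  have hφ : Continuous (Unitary.conjStarAlgAut ℝ A u) := by
    change Continuous fun y : A => (u : A) * y * star (u : A)
    fun_prop
  have h := StarAlgHomClass.map_cfc (S := ℝ) (Unitary.conjStarAlgAut ℝ A u)
    (fun t : ℝ => t ^ x) a hcont hφ ha.nonneg.isSelfAdjoint
    (by simpa using hua.isSelfAdjoint)
  rw [CFC.rpow_eq_cfc_real hua, CFC.rpow_eq_cfc_real ha.nonneg]
  simpa using h.symm

lemma mul_star_rpow {t : A} (ht : IsUnit t) (x : ℝ) :
    (t * star t) ^ x = t * (star t * t) ^ (x - 1) * star t := by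
  have hp : IsStrictlyPositive (star t * t) :=
    CStarAlgebra.isStrictlyPositive_iff_eq_star_mul_self.mpr ⟨t, ht, rfl⟩
  set p := star t * t with hpdef
  have hadd (y z : ℝ) : p ^ y * p ^ z = p ^ (y + z) := (CFC.rpow_add hp.isUnit).symm
  have hone : p ^ (1 : ℝ) = p := CFC.rpow_one p hp.nonneg
  have hu : IsUnit (t * p ^ (-(1 / 2) : ℝ)) := ht.mul (hp.rpow p _).isUnit
  have hstar : star (t * p ^ (-(1 / 2) : ℝ)) * (t * p ^ (-(1 / 2) : ℝ)) = 1 := by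
    rw [star_mul, star_rpow]
    calc _ = p ^ (-(1 / 2) : ℝ) * p * p ^ (-(1 / 2) : ℝ) := by rw [hpdef]; noncomm_ring
      _ = p ^ (-(1 / 2) : ℝ) * p ^ (1 : ℝ) * p ^ (-(1 / 2) : ℝ) := by rw [hone]
      _ = 1 := by rw [hadd, hadd]; norm_num [CFC.rpow_zero p hp.nonneg]
  let u : unitary A := ⟨t * p ^ (-(1 / 2) : ℝ), Unitary.mem_iff.mpr
    ⟨hstar, hu.mul_right_cancel (by rw [mul_assoc, hstar, mul_one, one_mul])⟩⟩
  have hconj (y : ℝ) : (u : A) * p ^ y * star (u : A) = t * p ^ (y - 1) * star t := by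
    change t * p ^ (-(1 / 2) : ℝ) * p ^ y * star (t * p ^ (-(1 / 2) : ℝ)) = _
    rw [star_mul, star_rpow]
    calc _ = t * (p ^ (-(1 / 2) : ℝ) * p ^ y * p ^ (-(1 / 2) : ℝ)) * star t := by
          simp only [mul_assoc]
      _ = _ := by rw [hadd, hadd]; ring_nf
  have h1 := hconj 1
  rw [hone, sub_self, CFC.rpow_zero p hp.nonneg, mul_one] at h1
  rw [← hconj, ← rpow_conj_unitary u hp, h1]

lemma conj_rpow_rpow {a b : A} (ha : IsStrictlyPositive a) (hb : IsStrictlyPositive b)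
    (s r x : ℝ) :
    (b ^ (s / 2) * a ^ r * b ^ (s / 2)) ^ x =
      b ^ (s / 2) * a ^ (r / 2) * (a ^ (r / 2) * b ^ s * a ^ (r / 2)) ^ (x - 1) *
        (a ^ (r / 2) * b ^ (s / 2)) := by
  have h := mul_star_rpow ((hb.rpow b (s / 2)).isUnit.mul (ha.rpow a (r / 2)).isUnit) x
  have har : a ^ r = a ^ (r / 2) * a ^ (r / 2) := by
    rw [← CFC.rpow_add ha.isUnit, add_halves]
  have hbs : b ^ s = b ^ (s / 2) * b ^ (s / 2) := by
    rw [← CFC.rpow_add hb.isUnit, add_halves]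
  simpa only [star_mul, star_rpow, har, hbs, mul_assoc] using h

lemma conj_rpow_le_conj_rpow {a b c : A} (hab : a ≤ b) (s : ℝ) :
    c ^ s * a * c ^ s ≤ c ^ s * b * c ^ s := by
  simpa only [star_rpow] using star_left_conjugate_le_conjugate hab (c ^ s)

lemma isStrictlyPositive_conj_rpow {a b : A} (ha : IsStrictlyPositive a)
    (hb : IsStrictlyPositive b) (s : ℝ) : IsStrictlyPositive (b ^ s * a * b ^ s) := by
  have h : 0 ≤ b ^ s * a * b ^ s := by
    simpa only [star_rpow] using star_left_conjugate_nonneg ha.nonneg (b ^ s)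
  exact IsStrictlyPositive.iff_of_unital.mpr
    ⟨h, ((hb.rpow b s).isUnit.mul ha.isUnit).mul (hb.rpow b s).isUnit⟩

lemma furuta_of_le_one {a b : A} (hb : IsStrictlyPositive b) (hab : b ≤ a) {r s : ℝ}
    (hr : 1 ≤ r) (hs : 0 ≤ s) (hs1 : s ≤ 1) :
    b ^ (1 + s) ≤ (b ^ (s / 2) * a ^ r * b ^ (s / 2)) ^ ((1 + s) / (r + s)) := by
  have ha : IsStrictlyPositive a := hb.of_le hab
  have hrs : 0 < r + s := by linarith
  have hexp : (1 + s) / (r + s) - 1 = -((r - 1) / (r + s)) := by field_simp; ring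
  have hle : a ^ (r / 2) * b ^ s * a ^ (r / 2) ≤ a ^ (r + s) := by
    refine (conj_rpow_le_conj_rpow (CFC.rpow_le_rpow ⟨hs, hs1⟩ hab) _).trans_eq ?_
    rw [← CFC.rpow_add ha.isUnit, ← CFC.rpow_add ha.isUnit]
    ring_nf
  have hinv := rpow_neg_le_rpow_neg (isStrictlyPositive_conj_rpow (hb.rpow b s) ha _) hle
    (t := (r - 1) / (r + s)) ⟨by apply div_nonneg <;> linarith, by
      rw [div_le_one hrs]; linarith⟩
  rw [rpow_rpow_of_isStrictlyPositive ha,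
    show (r + s) * -((r - 1) / (r + s)) = 1 - r by field_simp; ring] at hinv
  rw [conj_rpow_rpow ha hb, hexp]
  calc b ^ (1 + s) = b ^ (s / 2) * b * b ^ (s / 2) := by
        nth_rw 3 [← CFC.rpow_one b hb.nonneg]
        rw [← CFC.rpow_add hb.isUnit, ← CFC.rpow_add hb.isUnit]
        ring_nf
    _ ≤ b ^ (s / 2) * a * b ^ (s / 2) := conj_rpow_le_conj_rpow hab _
    _ = b ^ (s / 2) * (a ^ (r / 2) * a ^ (1 - r) * a ^ (r / 2)) * b ^ (s / 2) := by
        rw [← CFC.rpow_add ha.isUnit, ← CFC.rpow_add ha.isUnit,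
          show r / 2 + (1 - r) + r / 2 = 1 by ring, CFC.rpow_one a ha.nonneg]
    _ ≤ _ := conj_rpow_le_conj_rpow (conj_rpow_le_conj_rpow hinv _) _
    _ = _ := by simp only [mul_assoc]

/-- The **Furuta inequality** for strictly positive elements. -/
theorem furuta {a b : A} (hb : IsStrictlyPositive b) (hab : b ≤ a) {r s : ℝ}
    (hr : 1 ≤ r) (hs : 0 ≤ s) :
    b ^ (1 + s) ≤ (b ^ (s / 2) * a ^ r * b ^ (s / 2)) ^ ((1 + s) / (r + s)) := by
  obtain ⟨n, hn⟩ := pow_unbounded_of_one_lt (1 + s) one_lt_two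
  induction n generalizing s with
  | zero => linarith [pow_zero (2 : ℝ)]
  | succ n ih =>
    rcases le_or_gt s 1 with hs1 | hs1
    · exact furuta_of_le_one hb hab hr hs hs1
    obtain ⟨σ, rfl⟩ : ∃ σ, s = 2 * σ + 1 := ⟨(s - 1) / 2, by ring⟩
    have hσ : 0 < σ := by linarith
    have hrσ : 0 < r + σ := by linarith
    have ha : IsStrictlyPositive a := hb.of_le hab
    have hc : IsStrictlyPositive (b ^ (σ / 2) * a ^ r * b ^ (σ / 2)) :=
      isStrictlyPositive_conj_rpow (ha.rpow a r) hb _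
    have hstep := furuta_of_le_one (hb.rpow b (1 + σ)) (ih hσ.le (by rw [pow_succ] at hn; linarith))
      (r := (r + σ) / (1 + σ)) (s := 1) (by rw [le_div_iff₀] <;> linarith) zero_le_one le_rfl
    rw [rpow_rpow_of_isStrictlyPositive hc, rpow_rpow_of_isStrictlyPositive hb,
      rpow_rpow_of_isStrictlyPositive hb,
      show (1 + σ) / (r + σ) * ((r + σ) / (1 + σ)) = 1 by field_simp,
      CFC.rpow_one _ hc.nonneg] at hstep
    convert hstep using 2
    · ring
    · calc _ = b ^ ((1 + σ) * (1 / 2) + σ / 2) * a ^ r * b ^ (σ / 2 + (1 + σ) * (1 / 2)) := by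
            ring_nf
        _ = _ := by
            rw [CFC.rpow_add hb.isUnit, CFC.rpow_add hb.isUnit]
            simp only [mul_assoc]
    · field_simp
      ring

lemma rpow_sub_one_le_conj_rpow {a b : A} (hb : IsStrictlyPositive b) (hab : b ≤ a) {p r : ℝ}
    (hp : 1 ≤ p) (hr : 0 ≤ r) :
    b ^ (p - 1) ≤ (b ^ (p / 2) * a ^ r * b ^ (p / 2)) ^ ((p - 1) / (p + r)) := by
  have ha : IsStrictlyPositive a := hb.of_le hab
  have hpr : 0 < p + r := by linarith
  rcases le_total r 1 with hr1 | hr1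
  · have hle : b ^ (p + r) ≤ b ^ (p / 2) * a ^ r * b ^ (p / 2) := by
      refine Eq.trans_le ?_ (conj_rpow_le_conj_rpow (CFC.rpow_le_rpow ⟨hr, hr1⟩ hab) _)
      rw [← CFC.rpow_add hb.isUnit, ← CFC.rpow_add hb.isUnit]
      ring_nf
    have h := CFC.rpow_le_rpow (p := (p - 1) / (p + r))
      ⟨by apply div_nonneg <;> linarith, by rw [div_le_one hpr]; linarith⟩ hle
    rwa [rpow_rpow_of_isStrictlyPositive hb,
      show (p + r) * ((p - 1) / (p + r)) = p - 1 by field_simp] at h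
  · have h := CFC.rpow_le_rpow (p := (p - 1) / (1 + p))
      ⟨by apply div_nonneg <;> linarith, by rw [div_le_one] <;> linarith⟩
      (furuta hb hab hr1 (zero_le_one.trans hp))
    have hp1 : 1 + p ≠ 0 := by linarith
    rwa [rpow_rpow_of_isStrictlyPositive hb,
      rpow_rpow_of_isStrictlyPositive (isStrictlyPositive_conj_rpow (ha.rpow a r) hb _),
      show (1 + p) * ((p - 1) / (1 + p)) = p - 1 by field_simp,
      show (1 + p) / (r + p) * ((p - 1) / (1 + p)) = (p - 1) / (p + r) by
        rw [add_comm r p]; field_simp] at h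

theorem conj_rpow_rpow_le_conj {a b : A} (hb : IsStrictlyPositive b) (hab : b ≤ a) {p r : ℝ}
    (hp : 1 ≤ p) (hr : 0 ≤ r) :
    (a ^ (r / 2) * b ^ p * a ^ (r / 2)) ^ ((1 + r) / (p + r)) ≤
      a ^ (r / 2) * b * a ^ (r / 2) := by
  have ha : IsStrictlyPositive a := hb.of_le hab
  have hpr : 0 < p + r := by linarith
  have hd := isStrictlyPositive_conj_rpow (ha.rpow a r) hb (p / 2)
  have hinv : (b ^ (p / 2) * a ^ r * b ^ (p / 2)) ^ (-((p - 1) / (p + r))) ≤ b ^ (1 - p) := by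
    have h := rpow_neg_le_rpow_neg (hb.rpow b (p - 1)) (rpow_sub_one_le_conj_rpow hb hab hp hr)
      (t := 1) ⟨zero_le_one, le_rfl⟩
    rw [rpow_rpow_of_isStrictlyPositive hb, rpow_rpow_of_isStrictlyPositive hd] at h
    convert h using 2 <;> ring
  rw [conj_rpow_rpow hb ha, show (1 + r) / (p + r) - 1 = -((p - 1) / (p + r)) by
    field_simp; ring]
  calc _ = a ^ (r / 2) * (b ^ (p / 2) *
        (b ^ (p / 2) * a ^ r * b ^ (p / 2)) ^ (-((p - 1) / (p + r))) * b ^ (p / 2)) *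
          a ^ (r / 2) := by simp only [mul_assoc]
    _ ≤ a ^ (r / 2) * (b ^ (p / 2) * b ^ (1 - p) * b ^ (p / 2)) * a ^ (r / 2) :=
        conj_rpow_le_conj_rpow (conj_rpow_le_conj_rpow hinv _) _
    _ = _ := by
        rw [← CFC.rpow_add hb.isUnit, ← CFC.rpow_add hb.isUnit,
          show p / 2 + (1 - p) + p / 2 = 1 by ring, CFC.rpow_one b hb.nonneg]

lemma norm_inverse_inv_rpow_smul_one_le {a : A} (ha : IsStrictlyPositive a) {r : ℝ}
    (hr : 0 ≤ r) : (‖Ring.inverse a‖⁻¹ ^ r) • (1 : A) ≤ a ^ r := by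
  nontriviality A
  have hspec : ∀ t ∈ spectrum ℝ a, ‖Ring.inverse a‖⁻¹ ≤ t := by
    intro t ht
    have ht0 : 0 < t := ha.spectrum_pos ht
    obtain ⟨u, rfl⟩ := ha.isUnit
    have h : t⁻¹ ∈ spectrum ℝ ((u⁻¹ : Aˣ) : A) := by
      simpa using spectrum.inv_mem_iff (r := Units.mk0 t ht0.ne').mp ht
    have h2 := spectrum.norm_le_norm_of_mem h
    rw [Ring.inverse_unit]
    rw [Real.norm_of_nonneg (by positivity)] at h2
    exact inv_le_of_inv_le₀ ht0 h2
  rw [CFC.rpow_eq_cfc_real ha.nonneg, ← Algebra.algebraMap_eq_smul_one]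
  exact algebraMap_le_cfc _ _ _
    (fun t ht => Real.rpow_le_rpow (by positivity) (hspec t ht) hr)
    (ContinuousOn.rpow_const continuousOn_id fun _ _ => Or.inr hr) ha.nonneg.isSelfAdjoint

theorem smul_one_le_rpow_sub_conj_rpow_rpow {a b : A} (ha : IsStrictlyPositive a)
    (hb : IsStrictlyPositive b) {m : ℝ} (hm : 0 ≤ m) (hab : m • (1 : A) ≤ a - b) {p r : ℝ}
    (hp : 1 ≤ p) (hr : 0 ≤ r) :
    (m * ‖Ring.inverse a‖⁻¹ ^ r) • (1 : A) ≤
      a ^ (1 + r) - (a ^ (r / 2) * b ^ p * a ^ (r / 2)) ^ ((1 + r) / (p + r)) := by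
  have hba : b ≤ a := sub_nonneg.mp ((smul_nonneg hm zero_le_one).trans hab)
  calc _ = m • (‖Ring.inverse a‖⁻¹ ^ r) • (1 : A) := mul_smul _ _ _
    _ ≤ m • a ^ r := smul_le_smul_of_nonneg_left (norm_inverse_inv_rpow_smul_one_le ha hr) hm
    _ = a ^ (r / 2) * (m • 1) * a ^ (r / 2) := by
        rw [mul_smul_comm, smul_mul_assoc, mul_one, ← CFC.rpow_add ha.isUnit, add_halves]
    _ ≤ a ^ (r / 2) * (a - b) * a ^ (r / 2) := conj_rpow_le_conj_rpow hab _
    _ = a ^ (1 + r) - a ^ (r / 2) * b * a ^ (r / 2) := by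
        rw [mul_sub, sub_mul]
        nth_rw 2 [← CFC.rpow_one a ha.nonneg]
        rw [← CFC.rpow_add ha.isUnit, ← CFC.rpow_add ha.isUnit]
        ring_nf
    _ ≤ _ := sub_le_sub_left (conj_rpow_rpow_le_conj hb hba hp hr) _

end CStarAlgebra

/-- optimal case of the Furuta-type estimate: if `A, B` are positive
invertible operators with `A - B ≥ m·I`, `m > 0`, `p ≥ 1` and `r ≥ 0`, then
`A^{1+r} - (A^{r/2} B^p A^{r/2})^{(1+r)/(p+r)} ≥ m · m_A^r · I`, where
`m_A = ‖A⁻¹‖⁻¹`. -/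
theorem stmt15 {H : Type*} [NormedAddCommGroup H] [InnerProductSpace ℂ H] [CompleteSpace H]
    (A B : H →L[ℂ] H) (hA : 0 ≤ A) (hB : 0 ≤ B) (hAu : IsUnit A) (hBu : IsUnit B)
    (m : ℝ) (hm : 0 < m) (hAB : m • (1 : H →L[ℂ] H) ≤ A - B)
    (p r : ℝ) (hp : 1 ≤ p) (hr : 0 ≤ r) :
    (m * ‖Ring.inverse A‖⁻¹ ^ r) • (1 : H →L[ℂ] H)
      ≤ cfc (fun t : ℝ => t ^ (1 + r)) A
        - cfc (fun t : ℝ => t ^ ((1 + r) / (p + r)))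
            (cfc (fun t : ℝ => t ^ (r / 2)) A * cfc (fun t : ℝ => t ^ p) B
              * cfc (fun t : ℝ => t ^ (r / 2)) A) := by
  have hA' : IsStrictlyPositive A := IsStrictlyPositive.iff_of_unital.mpr ⟨hA, hAu⟩
  have hB' : IsStrictlyPositive B := IsStrictlyPositive.iff_of_unital.mpr ⟨hB, hBu⟩
  have hC : 0 ≤ A ^ (r / 2) * B ^ p * A ^ (r / 2) :=
    (CStarAlgebra.isStrictlyPositive_conj_rpow (hB'.rpow B p) hA' _).nonneg
  rw [← CFC.rpow_eq_cfc_real hA, ← CFC.rpow_eq_cfc_real hA, ← CFC.rpow_eq_cfc_real hB,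
    ← CFC.rpow_eq_cfc_real hC]
  exact CStarAlgebra.smul_one_le_rpow_sub_conj_rpow_rpow hA' hB' hm.le hAB hp hr
end

section
/- Let A and B be positive invertible bounded linear operators on a complex Hilbert space with A ≥ B and A − B invertible. Then log A − log B is positive and invertible, i.e., log A > log B. (The logarithm is strictly operator monotone on (0,∞).) -/
section CStarAlgebra

variable {A : Type*} [CStarAlgebra A] [PartialOrder A] [StarOrderedRing A]

/-- If `a - b` is strictly positive, then `a` dominates a multiple of `b` by a factor
greater than one. -/
lemma IsStrictlyPositive.exists_one_lt_smul_le_of_sub {a b : A} (hb : 0 ≤ b)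
    (hab : IsStrictlyPositive (a - b)) : ∃ t : ℝ, 1 < t ∧ t • b ≤ a := by
  nontriviality A using exists_gt (1 : ℝ)
  obtain ⟨r, hr, hr_le⟩ : ∃ r > 0, algebraMap ℝ A r ≤ a - b :=
    (CFC.exists_pos_algebraMap_le_iff hab.isSelfAdjoint).2 fun x hx ↦ hab.spectrum_pos hx
  have hn : 0 < ‖b‖ + 1 := by positivity
  refine ⟨1 + r / (‖b‖ + 1), lt_add_of_pos_right 1 (div_pos hr hn), ?_⟩
  have hsmul : (r / (‖b‖ + 1)) • b ≤ a - b :=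
    calc (r / (‖b‖ + 1)) • b
        ≤ (r / (‖b‖ + 1)) • algebraMap ℝ A ‖b‖ :=
          smul_le_smul_of_nonneg_left
            (IsSelfAdjoint.le_algebraMap_norm_self (.of_nonneg hb)) (by positivity)
      _ = algebraMap ℝ A (r / (‖b‖ + 1) * ‖b‖) := by rw [map_mul, Algebra.smul_def]
      _ ≤ algebraMap ℝ A r := by
          refine algebraMap_mono A ?_
          rw [div_mul_eq_mul_div, div_le_iff₀ hn]
          nlinarith
      _ ≤ a - b := hr_le
  rw [add_smul, one_smul]
  exact le_sub_iff_add_le'.mp hsmul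

/-- The logarithm is strictly operator monotone on strictly positive elements. -/
lemma IsStrictlyPositive.log_sub_log {a b : A} (hb : IsStrictlyPositive b)
    (hab : IsStrictlyPositive (a - b)) : IsStrictlyPositive (CFC.log a - CFC.log b) := by
  obtain ⟨t, ht, htb⟩ := hab.exists_one_lt_smul_le_of_sub hb.nonneg
  have hlog : 0 < Real.log t := Real.log_pos ht
  have hmono : CFC.log (t • b) ≤ CFC.log a :=
    CFC.log_le_log htb (hb.smul (zero_lt_one.trans ht))
  rw [CFC.log_smul' b (zero_lt_one.trans ht) hb] at hmono
  refine IsStrictlyPositive.of_le (a := algebraMap ℝ A (Real.log t)) ?_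
    (le_sub_iff_add_le.mpr hmono)
  exact ⟨algebraMap_nonneg A hlog.le, (IsUnit.mk0 _ hlog.ne').map (algebraMap ℝ A)⟩

end CStarAlgebra

/-- the logarithm is strictly operator monotone on `(0, ∞)`: if
`A ≥ B > 0` and `A - B` is invertible, then `log A > log B`, i.e., `log A - log B`
is positive and invertible. -/
theorem stmt18 {H : Type*} [NormedAddCommGroup H] [InnerProductSpace ℂ H] [CompleteSpace H]
    (A B : H →L[ℂ] H) (hA : 0 ≤ A) (hB : 0 ≤ B) (hAu : IsUnit A) (hBu : IsUnit B)
    (hBA : B ≤ A) (hAB : IsUnit (A - B)) :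
    cfc Real.log B ≤ cfc Real.log A ∧
    IsUnit (cfc Real.log A - cfc Real.log B) := by
  have h : IsStrictlyPositive (CFC.log A - CFC.log B) :=
    IsStrictlyPositive.log_sub_log ⟨hB, hBu⟩ ⟨sub_nonneg.mpr hBA, hAB⟩
  exact ⟨sub_nonneg.mp h.nonneg, h.isUnit⟩
end
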